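/- arXiv:1808.10156 — 3 statements merged into one kernel-verified Lean document; each statement's English description precedes it below -/
import Mathlib

section
/- Let $(X,T)$ be a topological dynamical system with $T$ a homeomorphism of the compact metric space $X$, and let $\mu$ be a $T$-invariant Borel probability measure. Let $\xi$ be a measurable partition of $X$ with $T\xi \prec \xi$ (i.e. $\xi$ refines its image under $T$) and let $\alpha$ be a finite Borel partition with $\alpha^- := \bigvee_{k\ge 1} T^k\alpha \prec \xi$. Set $\gamma_n := \alpha^- \vee T^n\xi$ and $\mathscr{F} := \bigcap_{n\ge 0} \widehat{\gamma_n}$ (the intersection of the completed $\sigma$-algebras generated by the $\gamma_n$). Then $\frac{1}{N} I_\mu(\bigvee_{i=0}^{N-1} T^{-i}\alpha \mid \xi)$ converges $\mu$-a.e. and in $L^1(\mu)$ to $\mathbb{E}_\mu(I_\mu(\alpha\mid\mathscr{F}) \mid \mathscr{E}_T)$, where $\mathscr{E}_T$ is the $\sigma$-algebra of $T$-invariant sets. -/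
/-!
By the chain rule for the information function, together with `T⁻ᴺγ_N = ξ ∨ ⋁_{i < N} T⁻ⁱα` (a
consequence of `α⁻ ≺ ξ`), the left-hand side is a sum along orbits,
`I(⋁_{i < N} T⁻ⁱα ∣ ξ) = ∑_{i < N} I(α ∣ γᵢ) ∘ Tⁱ` almost everywhere (`condInfo_chain`).
The partitions `γₙ` decrease because `Tξ ≺ ξ`, so Lévy's downward theorem (`levy_downward`) gives
`I(α ∣ γₙ) → I(α ∣ ℱ)` a.e., and Chung's maximal inequality (`measure_exists_condExp_lt`) bounds
`μ(supₙ I(α ∣ γₙ) > k)` by `|α| e⁻ᵏ`, whence an integrable majorant (`exists_integrable_majorant`).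
The ergodic theorem along a dominated, a.e. convergent sequence of observables (`breiman_ae`,
`breiman_L1`) then yields both modes of convergence. It rests on Birkhoff's theorem (`birkhoff_ae`),
proved from the maximal ergodic lemma; convergence in `L¹` follows from convergence a.e. and
convergence of the integrals by Scheffé's lemma, the information functions being nonnegative.

The inclusions between σ-algebras generated by partitions come from Lusin's separation theorem
(`comap_le_comap_of_factors`): on a compact metric space a Borel function that is constant on the
atoms of a countably generated partition is measurable for the σ-algebra it generates.
-/

open MeasureTheory Filter Set Topology
open scoped symmDiff

variable {X : Type*}

/-- The `μ`-completion (within the Borel sets) of a sub-σ-algebra `m`: Borel sets that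
agree with an `m`-measurable set up to a `μ`-null set.  This realizes `m̂` of the paper
inside `𝓑_μ` (conditional expectations are unaffected by adjoining null sets). -/
def hatIn [mX : MeasurableSpace X] (μ : Measure X) (m : MeasurableSpace X) :
    MeasurableSpace X where
  MeasurableSet' s := MeasurableSet s ∧ ∃ t, MeasurableSet[m] t ∧ μ (s ∆ t) = 0
  measurableSet_empty := ⟨MeasurableSet.empty, ∅, @MeasurableSet.empty _ m, by simp⟩
  measurableSet_compl := by
    rintro s ⟨hs, t, ht, hst⟩
    exact ⟨hs.compl, tᶜ, MeasurableSet.compl ht, by rwa [compl_symmDiff_compl]⟩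
  measurableSet_iUnion := by
    intro f hf
    refine ⟨MeasurableSet.iUnion fun i => (hf i).1, ?_⟩
    choose t ht hμ using fun i => (hf i).2
    refine ⟨⋃ i, t i, MeasurableSet.iUnion ht, measure_mono_null ?_ (measure_iUnion_null hμ)⟩
    intro x hx
    rcases Set.mem_symmDiff.1 hx with ⟨hx1, hx2⟩ | ⟨hx1, hx2⟩
    · rcases Set.mem_iUnion.1 hx1 with ⟨i, hi⟩
      exact Set.mem_iUnion.2 ⟨i, Set.mem_symmDiff.2 (Or.inl ⟨hi, fun h => hx2 (Set.mem_iUnion.2 ⟨i, h⟩)⟩)⟩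
    · rcases Set.mem_iUnion.1 hx1 with ⟨i, hi⟩
      exact Set.mem_iUnion.2 ⟨i, Set.mem_symmDiff.2 (Or.inr ⟨hi, fun h => hx2 (Set.mem_iUnion.2 ⟨i, h⟩)⟩)⟩

/-- The σ-algebra `ℰ_T` of `T`-invariant Borel sets. -/
def invSigma [TopologicalSpace X] [MeasurableSpace X] (T : X ≃ₜ X) : MeasurableSpace X where
  MeasurableSet' s := MeasurableSet s ∧ ⇑T ⁻¹' s = s
  measurableSet_empty := ⟨MeasurableSet.empty, rfl⟩
  measurableSet_compl := by
    rintro s ⟨hs, hTs⟩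
    exact ⟨hs.compl, by rw [Set.preimage_compl, hTs]⟩
  measurableSet_iUnion := by
    intro f hf
    exact ⟨MeasurableSet.iUnion fun i => (hf i).1, by
      simp only [Set.preimage_iUnion]
      exact Set.iUnion_congr fun i => (hf i).2⟩

/-- The conditional information function
`I_μ(P ∣ m)(x) = -∑_{A ∈ P} 1_A(x) log 𝔼_μ(1_A ∣ m)(x)` of the finite partition
encoded by `P : X → A` (atoms are the fibers of `P`). -/
noncomputable def condInfo [MeasurableSpace X] (μ : Measure X) (m : MeasurableSpace X)
    {A : Type*} [Fintype A] (P : X → A) : X → ℝ := fun x =>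
  -∑ j : A, Set.indicator (P ⁻¹' {j}) (fun _ => (1 : ℝ)) x *
    Real.log ((μ[Set.indicator (P ⁻¹' {j}) fun _ => (1 : ℝ) | m]) x)

/-- The σ-algebra `ξ̂` of the measurable partition encoded by `ζ : X → (ℕ → Bool)`
(atoms are the fibers of `ζ`), completed w.r.t. `μ`. -/
def xiHat [MeasurableSpace X] (μ : Measure X) (ζ : X → ℕ → Bool) : MeasurableSpace X :=
  hatIn μ (MeasurableSpace.comap ζ inferInstance)

/-- The σ-algebra of the partition `γₙ = α⁻ ∨ Tⁿξ`, completed w.r.t. `μ`, where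
`α⁻ = ⋁_{k ≥ 1} Tᵏα`. -/
def gammaHat [TopologicalSpace X] [MeasurableSpace X] (μ : Measure X) (T : X ≃ₜ X) (ζ : X → ℕ → Bool)
    {A : Type*} [MeasurableSpace A] (P : X → A) (n : ℕ) : MeasurableSpace X :=
  hatIn μ
    ((MeasurableSpace.comap (fun x => fun k : ℕ => P ((⇑T.symm)^[k + 1] x)) inferInstance) ⊔
      MeasurableSpace.comap (fun x => ζ ((⇑T.symm)^[n] x)) inferInstance)

/-- `ℱ = ⋂_{n ≥ 0} γ̂ₙ`. -/
def scrF [TopologicalSpace X] [MeasurableSpace X] (μ : Measure X) (T : X ≃ₜ X) (ζ : X → ℕ → Bool)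
    {A : Type*} [MeasurableSpace A] (P : X → A) : MeasurableSpace X :=
  ⨅ n : ℕ, gammaHat μ T ζ P n

/-! ### Birkhoff's ergodic theorem -/

/-- `maxSum T f n x` is the maximum of the Birkhoff sums `S₀ f x = 0, S₁ f x, …, Sₙ f x`,
given through the recursion `Mₙ₊₁ = (f + Mₙ ∘ T)⁺`. -/
noncomputable def maxSum (T : X → X) (f : X → ℝ) : ℕ → X → ℝ
  | 0 => fun _ => 0
  | n + 1 => fun x => max 0 (f x + maxSum T f n (T x))

lemma maxSum_nonneg (T : X → X) (f : X → ℝ) (n : ℕ) (x : X) : 0 ≤ maxSum T f n x := by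
  cases n with
  | zero => exact le_rfl
  | succ n => exact le_max_left _ _

lemma maxSum_le_succ (T : X → X) (f : X → ℝ) (n : ℕ) :
    ∀ x, maxSum T f n x ≤ maxSum T f (n + 1) x := by
  induction n with
  | zero => intro x; exact le_max_left _ _
  | succ n ih =>
    intro x
    exact max_le_max le_rfl (add_le_add le_rfl (ih (T x)))

lemma birkhoffSum_le_maxSum (T : X → X) (f : X → ℝ) (n : ℕ) :
    ∀ x, birkhoffSum T f n x ≤ maxSum T f n x := by
  induction n with
  | zero => intro x; simp [maxSum]
  | succ n ih =>
    intro x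
    rw [birkhoffSum_succ']
    exact (add_le_add le_rfl (ih (T x))).trans (le_max_right _ _)

lemma exists_birkhoffSum_pos (T : X → X) (f : X → ℝ) (n : ℕ) :
    ∀ x, 0 < maxSum T f n x → ∃ k, 0 < birkhoffSum T f k x := by
  -- every value of `maxSum` is attained by one of the Birkhoff sums
  have key : ∀ n x, ∃ k, maxSum T f n x = birkhoffSum T f k x := by
    intro n
    induction n with
    | zero => intro x; exact ⟨0, by simp [maxSum]⟩
    | succ n ih =>
      intro x
      rcases le_total 0 (f x + maxSum T f n (T x)) with h | h
      · obtain ⟨k, hk⟩ := ih (T x)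
        exact ⟨k + 1, by rw [birkhoffSum_succ', ← hk]; exact max_eq_right h⟩
      · exact ⟨0, by simpa [maxSum] using h⟩
  intro x hx
  obtain ⟨k, hk⟩ := key n x
  exact ⟨k, hk ▸ hx⟩

lemma integrable_maxSum [MeasurableSpace X] {μ : Measure X} {T : X → X}
    (hT : MeasurePreserving T μ μ) {f : X → ℝ} (hf : Integrable f μ) (n : ℕ) :
    Integrable (maxSum T f n) μ := by
  induction n with
  | zero => exact integrable_zero _ _ _
  | succ n ih =>
    have := (hf.add (hT.integrable_comp_of_integrable ih)).pos_part
    refine this.congr (ae_of_all _ fun x => ?_)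
    simp [maxSum, max_comm]

lemma measurable_maxSum [MeasurableSpace X] {T : X → X}
    (hT : Measurable T) {f : X → ℝ} (hf : Measurable f) (n : ℕ) :
    Measurable (maxSum T f n) := by
  induction n with
  | zero => exact measurable_const
  | succ n ih => exact measurable_const.max (hf.add (ih.comp hT))

/-- The maximal ergodic lemma (Garsia's proof). -/
lemma maximal_ergodic [MeasurableSpace X] {μ : Measure X} {T : X → X}
    (hT : MeasurePreserving T μ μ) {f : X → ℝ} (hfm : Measurable f) (hf : Integrable f μ) (n : ℕ) :
    0 ≤ ∫ x in {x | 0 < maxSum T f n x}, f x ∂μ := by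
  have hM := integrable_maxSum hT hf n
  have hMT : Integrable (fun x => maxSum T f n (T x)) μ := hT.integrable_comp_of_integrable hM
  have hms : MeasurableSet {x | 0 < maxSum T f n x} :=
    measurableSet_lt measurable_const (measurable_maxSum hT.measurable hfm n)
  have hint : ∫ x, maxSum T f n (T x) ∂μ = ∫ x, maxSum T f n x ∂μ := by
    conv_rhs => rw [← hT.map_eq]
    rw [integral_map hT.measurable.aemeasurable
      (measurable_maxSum hT.measurable hfm n).aestronglyMeasurable]
  have h1 : 0 ≤ ∫ x, ({x | 0 < maxSum T f n x}.indicator f x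
      - (maxSum T f n x - maxSum T f n (T x))) ∂μ := by
    refine integral_nonneg fun x => ?_
    simp only [Pi.zero_apply, Set.indicator_apply, Set.mem_ofPred_eq]
    split_ifs with hx
    · cases n with
      | zero => simp [maxSum] at hx
      | succ n =>
        have h2 : maxSum T f (n + 1) x ≤ f x + maxSum T f n (T x) := by
          have : maxSum T f (n + 1) x = max 0 (f x + maxSum T f n (T x)) := rfl
          rw [this] at hx ⊢
          exact (max_eq_right ((lt_max_iff.1 hx).resolve_left (lt_irrefl _)).le).le
        have h3 := maxSum_le_succ T f n (T x)
        linarith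
    · have := maxSum_nonneg T f n (T x)
      have := not_lt.1 hx
      linarith
  have h4 : ∫ x, (maxSum T f n x - maxSum T f n (T x)) ∂μ = 0 := by
    rw [integral_sub hM hMT, hint, sub_self]
  have h5 : Integrable (fun x => maxSum T f n x - maxSum T f n (T x)) μ := hM.sub hMT
  rw [integral_sub (hf.indicator hms) h5, h4, sub_zero, integral_indicator hms] at h1
  exact h1

/-- The set where the Birkhoff averages exceed some number larger than `ε` infinitely often; the
slack `1 / (k + 1)` makes it strictly invariant. -/
def exceedSet (T : X → X) (g : X → ℝ) (ε : ℝ) : Set X :=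
  {x | ∃ k : ℕ, ∃ᶠ n : ℕ in atTop, (ε + 1 / ((k : ℝ) + 1)) * n < birkhoffSum T g n x}

lemma preimage_exceedSet (T : X → X) (g : X → ℝ) (ε : ℝ) :
    T ⁻¹' exceedSet T g ε = exceedSet T g ε := by
  have slack : ∀ (k : ℕ) (c : ℝ), ∀ᶠ n : ℕ in atTop,
      (ε + 1 / (((k + 1 : ℕ) : ℝ) + 1)) * n < (ε + 1 / ((k : ℝ) + 1)) * n + c := by
    intro k c
    have h1 : (0 : ℝ) < 1 / ((k : ℝ) + 1) - 1 / (((k + 1 : ℕ) : ℝ) + 1) := by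
      rw [sub_pos]; push_cast
      exact one_div_lt_one_div_of_lt (by positivity) (by linarith)
    have h2 := (tendsto_natCast_atTop_atTop (R := ℝ)).const_mul_atTop h1
    filter_upwards [h2.eventually_gt_atTop (-c)] with n hn
    linarith
  ext x
  constructor
  · rintro ⟨k, hk⟩
    refine ⟨k + 1, ?_⟩
    have h := hk.and_eventually (slack k (g x - (ε + 1 / (((k + 1 : ℕ) : ℝ) + 1))))
    have h' := h.mono (q := fun n : ℕ => (ε + 1 / (((k + 1 : ℕ) : ℝ) + 1)) * ((n + 1 : ℕ) : ℝ)
        < birkhoffSum T g (n + 1) x) (by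
      rintro n ⟨h1, h2⟩
      rw [birkhoffSum_succ', Nat.cast_succ n, mul_add]
      linarith)
    exact (tendsto_add_atTop_nat 1).frequently h'
  · rintro ⟨k, hk⟩
    refine ⟨k + 1, ?_⟩
    have h := hk.and_eventually ((slack k (-g x + (ε + 1 / (((k + 1 : ℕ) : ℝ) + 1)))).and
      (eventually_ge_atTop 1))
    have h' := h.mono (q := fun n : ℕ =>
        (ε + 1 / (((k + 1 : ℕ) : ℝ) + 1)) * ((n - 1 : ℕ) : ℝ)
        < birkhoffSum T g (n - 1) (T x)) (by
      rintro n ⟨h1, h2, h3⟩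
      obtain ⟨m, rfl⟩ : ∃ m, n = m + 1 := ⟨n - 1, by omega⟩
      rw [birkhoffSum_succ'] at h1
      rw [Nat.add_sub_cancel]
      rw [Nat.cast_succ m] at h1 h2
      rw [mul_add (ε + 1 / (((k + 1 : ℕ) : ℝ) + 1))] at h2
      linarith)
    exact (tendsto_sub_atTop_nat 1).frequently h'

lemma measurable_birkhoffSum [MeasurableSpace X] {T : X → X} (hT : Measurable T) {g : X → ℝ}
    (hg : Measurable g) (n : ℕ) : Measurable (birkhoffSum T g n) :=
  Finset.measurable_fun_sum _ fun i _ => hg.comp (hT.iterate i)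

lemma measurableSet_exceedSet [MeasurableSpace X] {T : X → X} (hT : Measurable T) {g : X → ℝ}
    (hg : Measurable g) (ε : ℝ) : MeasurableSet (exceedSet T g ε) := by
  have : exceedSet T g ε = ⋃ k : ℕ, limsup (fun n : ℕ =>
      {x | (ε + 1 / ((k : ℝ) + 1)) * n < birkhoffSum T g n x}) atTop := by
    ext x
    simp only [exceedSet, Set.mem_ofPred_eq, Set.mem_iUnion, mem_limsup_iff_frequently_mem]
  rw [this]
  exact MeasurableSet.iUnion fun k => MeasurableSet.measurableSet_limsup fun n =>
    measurableSet_lt measurable_const (measurable_birkhoffSum hT hg n)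

/-- A function with vanishing conditional expectation on the invariant sets has Birkhoff averages
that are asymptotically at most `ε`: on the invariant set where this fails, the maximal ergodic
lemma applied to `g - ε` gives `∫ g ≥ ε μ(E)`, whereas `∫ g = 0`. -/
lemma exceedSet_null [MeasurableSpace X] {μ : Measure X} [IsProbabilityMeasure μ] {T : X → X}
    (hT : MeasurePreserving T μ μ) {g : X → ℝ} (hgm : Measurable g) (hg : Integrable g μ)
    (h0 : μ[g | MeasurableSpace.invariants T] =ᵐ[μ] 0) {ε : ℝ} (hε : 0 < ε) :
    μ (exceedSet T g ε) = 0 := by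
  set E := exceedSet T g ε with hE
  have hEm : MeasurableSet E := measurableSet_exceedSet hT.measurable hgm ε
  have hEi : T ⁻¹' E = E := preimage_exceedSet T g ε
  have hmem : ∀ x, T x ∈ E ↔ x ∈ E := fun x => by
    conv_rhs => rw [← hEi]
    rfl
  set f : X → ℝ := E.indicator fun x => g x - ε with hf
  have hfm : Measurable f := (hgm.sub_const ε).indicator hEm
  have hfi : Integrable f μ := (hg.sub (integrable_const ε)).indicator hEm
  have hS : ∀ k x, birkhoffSum T f k x = E.indicator (fun x => birkhoffSum T g k x - ε * k) x := by
    intro k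
    induction k with
    | zero => intro x; simp
    | succ k ih =>
      intro x
      rw [birkhoffSum_succ', ih]
      by_cases hx : x ∈ E
      · rw [hf, Set.indicator_of_mem hx, Set.indicator_of_mem ((hmem x).2 hx),
          Set.indicator_of_mem hx, birkhoffSum_succ']
        push_cast; ring
      · rw [hf, Set.indicator_of_notMem hx, Set.indicator_of_notMem (mt (hmem x).1 hx),
          Set.indicator_of_notMem hx, add_zero]
  have hU : ⋃ n, {x | 0 < maxSum T f n x} = E := by
    ext x
    simp only [Set.mem_iUnion, Set.mem_ofPred_eq]
    constructor
    · rintro ⟨n, hn⟩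
      obtain ⟨k, hk⟩ := exists_birkhoffSum_pos T f n x hn
      rw [hS] at hk
      by_contra hx
      rw [Set.indicator_of_notMem hx] at hk
      exact lt_irrefl _ hk
    · intro hx
      obtain ⟨k, hk⟩ := id hx
      obtain ⟨n, hn⟩ := hk.exists
      refine ⟨n, lt_of_lt_of_le ?_ (birkhoffSum_le_maxSum T f n x)⟩
      rw [hS, Set.indicator_of_mem hx]
      have : (0 : ℝ) ≤ 1 / ((k : ℝ) + 1) * n := by positivity
      linarith
  have hlim := tendsto_setIntegral_of_monotone (μ := μ) (f := f)
    (s := fun n => {x | 0 < maxSum T f n x})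
    (fun n => measurableSet_lt measurable_const (measurable_maxSum hT.measurable hfm n))
    (monotone_nat_of_le_succ fun n x (hx : 0 < _) => hx.trans_le (maxSum_le_succ T f n x))
    hfi.integrableOn
  rw [hU] at hlim
  have h1 : 0 ≤ ∫ x in E, f x ∂μ :=
    ge_of_tendsto' hlim fun n => maximal_ergodic hT hfm hfi n
  have h2 : ∫ x in E, f x ∂μ = ∫ x in E, (g x - ε) ∂μ :=
    setIntegral_congr_fun hEm fun x hx => Set.indicator_of_mem hx _
  have h3 : ∫ x in E, g x ∂μ = 0 := by
    rw [← setIntegral_condExp (MeasurableSpace.invariants_le T) hg ⟨hEm, hEi⟩,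
      integral_congr_ae (ae_restrict_of_ae h0)]
    simp
  rw [h2, integral_sub hg.integrableOn (integrable_const _).integrableOn, h3,
    setIntegral_const, smul_eq_mul] at h1
  have h4 : μ.real E = 0 := by
    have := measureReal_nonneg (μ := μ) (s := E)
    nlinarith
  exact (measureReal_eq_zero_iff).1 h4

lemma eventually_birkhoffSum_le [MeasurableSpace X] {μ : Measure X} [IsProbabilityMeasure μ]
    {T : X → X} (hT : MeasurePreserving T μ μ) {g : X → ℝ} (hgm : Measurable g)
    (hg : Integrable g μ) (h0 : μ[g | MeasurableSpace.invariants T] =ᵐ[μ] 0) :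
    ∀ᵐ x ∂μ, ∀ ε > 0, ∀ᶠ n : ℕ in atTop, birkhoffSum T g n x ≤ ε * n := by
  have h : ∀ᵐ x ∂μ, ∀ j : ℕ, x ∉ exceedSet T g (1 / ((j : ℝ) + 1)) :=
    ae_all_iff.2 fun j => measure_eq_zero_iff_ae_notMem.1
      (exceedSet_null hT hgm hg h0 (by positivity))
  filter_upwards [h] with x hx ε hε
  obtain ⟨j, hj⟩ := exists_nat_one_div_lt (half_pos hε)
  have h1 := hx j
  simp only [exceedSet, Set.mem_ofPred_eq, not_exists, not_frequently, not_lt] at h1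
  filter_upwards [h1 j] with n hn
  refine hn.trans (mul_le_mul_of_nonneg_right (by linarith) (Nat.cast_nonneg n))

/-- Birkhoff's pointwise ergodic theorem. -/
theorem birkhoff_ae [MeasurableSpace X] {μ : Measure X} [IsProbabilityMeasure μ]
    {T : X → X} (hT : MeasurePreserving T μ μ) {f : X → ℝ} (hfm : Measurable f)
    (hf : Integrable f μ) :
    ∀ᵐ x ∂μ, Tendsto (fun n : ℕ => birkhoffSum T f n x / n) atTop
      (𝓝 ((μ[f | MeasurableSpace.invariants T]) x)) := by
  set e := μ[f | MeasurableSpace.invariants T] with he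
  have hle := MeasurableSpace.invariants_le T
  have hem' : Measurable[MeasurableSpace.invariants T] e := stronglyMeasurable_condExp.measurable
  have hem : Measurable e := hem'.mono hle le_rfl
  have hei : Integrable e μ := integrable_condExp
  have heT : e ∘ T = e := MeasurableSpace.comp_eq_of_measurable_invariants hem'
  have heS : ∀ n x, birkhoffSum T e n x = n * e x := by
    intro n
    induction n with
    | zero => intro x; simp
    | succ n ih =>
      intro x
      rw [birkhoffSum_succ', ih, show e (T x) = e x from congrFun heT x]
      push_cast; ring
  have hce : μ[e | MeasurableSpace.invariants T] = e :=
    condExp_of_stronglyMeasurable hle stronglyMeasurable_condExp hei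
  have z1 : μ[f - e | MeasurableSpace.invariants T] =ᵐ[μ] 0 := by
    filter_upwards [condExp_sub hf hei (MeasurableSpace.invariants T)] with x hx
    rw [hx, hce]; simp [he]
  have z2 : μ[e - f | MeasurableSpace.invariants T] =ᵐ[μ] 0 := by
    filter_upwards [condExp_sub hei hf (MeasurableSpace.invariants T)] with x hx
    rw [hx, hce]; simp [he]
  filter_upwards [eventually_birkhoffSum_le hT (hfm.sub hem) (hf.sub hei) z1,
    eventually_birkhoffSum_le hT (hem.sub hfm) (hei.sub hf) z2] with x h1 h2
  rw [Metric.tendsto_atTop']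
  have hsub : ∀ (u v : X → ℝ) n, birkhoffSum T (u - v) n x
      = birkhoffSum T u n x - birkhoffSum T v n x := fun u v n => by
    simp [birkhoffSum, Finset.sum_sub_distrib]
  intro ε hε
  obtain ⟨N, hN⟩ := eventually_atTop.1 ((h1 (ε / 2) (half_pos hε)).and (h2 (ε / 2) (half_pos hε)))
  refine ⟨N, fun n hn => ?_⟩
  obtain ⟨a1, a2⟩ := hN n hn.le
  rw [hsub, heS] at a1 a2
  have hn0 : (0 : ℝ) < n := by exact_mod_cast (Nat.zero_le N).trans_lt hn
  rw [Real.dist_eq, div_sub' hn0.ne', abs_div, abs_of_pos hn0, div_lt_iff₀ hn0]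
  have : ε / 2 * n < ε * n := by nlinarith
  rw [abs_lt]
  constructor <;> linarith

/-! ### The ergodic theorem for convergent sequences of observables -/

/-- Scheffé's lemma for real functions that are nonnegative a.e. -/
lemma scheffe [MeasurableSpace X] {μ : Measure X} {u : ℕ → X → ℝ} {v : X → ℝ}
    (hu : ∀ n, Integrable (u n) μ) (hv : Integrable v μ) (h0 : ∀ n, 0 ≤ᵐ[μ] u n)
    (hlim : ∀ᵐ x ∂μ, Tendsto (fun n => u n x) atTop (𝓝 (v x)))
    (hint : Tendsto (fun n => ∫ x, u n x ∂μ) atTop (𝓝 (∫ x, v x ∂μ))) :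
    Tendsto (fun n => ∫ x, |u n x - v x| ∂μ) atTop (𝓝 0) := by
  have hmin : Tendsto (fun n => ∫ x, min (u n x) (v x) ∂μ) atTop (𝓝 (∫ x, v x ∂μ)) := by
    refine tendsto_integral_of_dominated_convergence (fun x => |v x|)
      (fun n => ((hu n).inf hv).aestronglyMeasurable) hv.abs (fun n => ?_) ?_
    · filter_upwards [h0 n] with x hx
      rw [Real.norm_eq_abs, abs_le]
      exact ⟨le_min ((neg_nonpos.2 (abs_nonneg _)).trans hx) (neg_abs_le _),
        (min_le_right _ _).trans (le_abs_self _)⟩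
    · filter_upwards [hlim] with x hx
      simpa using hx.min (tendsto_const_nhds (x := v x))
  have heq : ∀ n, ∫ x, |u n x - v x| ∂μ
      = ∫ x, u n x ∂μ + ∫ x, v x ∂μ - 2 * ∫ x, min (u n x) (v x) ∂μ := by
    intro n
    have hm : Integrable (fun x => min (u n x) (v x)) μ := (hu n).inf hv
    have hs : Integrable (fun x => u n x + v x) μ := (hu n).add hv
    rw [← integral_add (hu n) hv, ← integral_const_mul, ← integral_sub hs (hm.const_mul 2)]
    refine integral_congr_ae (ae_of_all _ fun x => ?_)
    show |u n x - v x| = u n x + v x - 2 * min (u n x) (v x)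
    rcases le_total (u n x) (v x) with h | h
    · rw [min_eq_left h, abs_of_nonpos (by linarith)]; ring
    · rw [min_eq_right h, abs_of_nonneg (by linarith)]; ring
  simp_rw [heq]
  have := (hint.add (tendsto_const_nhds (x := ∫ x, v x ∂μ))).sub (hmin.const_mul 2)
  convert this using 2
  ring

lemma exists_subseq_ae_of_integral_abs [MeasurableSpace X] {μ : Measure X} {u : ℕ → X → ℝ}
    (hu : ∀ n, Integrable (u n) μ) (h : Tendsto (fun n => ∫ x, |u n x| ∂μ) atTop (𝓝 0)) :
    ∃ ns : ℕ → ℕ, StrictMono ns ∧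
      ∀ᵐ x ∂μ, Tendsto (fun k => u (ns k) x) atTop (𝓝 0) := by
  have h1 : Tendsto (fun n => eLpNorm (u n - fun _ => 0) 1 μ) atTop (𝓝 0) := by
    have : ∀ n, eLpNorm (u n - fun _ => 0) 1 μ = ENNReal.ofReal (∫ x, |u n x| ∂μ) := by
      intro n
      rw [eLpNorm_one_eq_lintegral_enorm, ← ofReal_integral_norm_eq_lintegral_enorm]
      · simp
      · exact (hu n).sub (integrable_zero _ _ _)
    simp_rw [this]
    simpa using ENNReal.tendsto_ofReal h
  exact (tendstoInMeasure_of_tendsto_eLpNorm one_ne_zero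
    (fun n => (hu n).aestronglyMeasurable) aestronglyMeasurable_const h1).exists_seq_tendsto_ae

/-- Ergodic theorem along a dominated a.e. convergent sequence of observables (Breiman, Maker):
the error `|f i - fl|` with `i ≥ M` is at most `g M = sup_{i ≥ M} |f i - fl|`, whose ergodic
averages converge to `𝔼(g M ∣ ℰ_T)`, and this tends to `0` along a subsequence of `M`. -/
theorem breiman_ae [MeasurableSpace X] {μ : Measure X} [IsProbabilityMeasure μ]
    {T : X → X} (hT : MeasurePreserving T μ μ) {f : ℕ → X → ℝ} {fl F : X → ℝ}
    (hfm : ∀ n, Measurable (f n)) (hflm : Measurable fl) (hF : Integrable F μ)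
    (hfF : ∀ n, ∀ᵐ x ∂μ, |f n x| ≤ F x)
    (hlim : ∀ᵐ x ∂μ, Tendsto (fun n => f n x) atTop (𝓝 (fl x))) :
    Integrable fl μ ∧
    ∀ᵐ x ∂μ, Tendsto (fun N : ℕ => (∑ i ∈ Finset.range N, f i (T^[i] x)) / N) atTop
      (𝓝 ((μ[fl | MeasurableSpace.invariants T]) x)) := by
  have hfF' : ∀ᵐ x ∂μ, ∀ n, |f n x| ≤ F x := ae_all_iff.2 hfF
  have hflF : ∀ᵐ x ∂μ, |fl x| ≤ F x := by
    filter_upwards [hfF', hlim] with x hx hl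
    exact le_of_tendsto' hl.abs hx
  have hfl : Integrable fl μ := hF.mono' hflm.aestronglyMeasurable hflF
  refine ⟨hfl, ?_⟩
  set d : ℕ → X → ℝ := fun i x => |f i x - fl x| with hd
  have hdF : ∀ᵐ x ∂μ, ∀ i, d i x ≤ 2 * F x := by
    filter_upwards [hfF', hflF] with x h1 h2 i
    have := abs_sub (f i x) (fl x)
    have := h1 i
    simp only [hd]; linarith
  set g : ℕ → X → ℝ := fun M x => ⨆ i, d (M + i) x with hg
  have hgm : ∀ M, Measurable (g M) := fun M =>
    Measurable.iSup fun i => ((hfm (M + i)).sub hflm).abs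
  have hd0 : ∀ i x, 0 ≤ d i x := fun i x => abs_nonneg _
  have hg0 : ∀ M x, 0 ≤ g M x := fun M x => Real.iSup_nonneg fun i => hd0 _ x
  have hgF : ∀ M, ∀ᵐ x ∂μ, g M x ≤ 2 * F x := fun M => by
    filter_upwards [hdF] with x hx
    exact ciSup_le fun i => hx _
  have hgi : ∀ M, Integrable (g M) μ := fun M =>
    (hF.const_mul 2).mono' (hgm M).aestronglyMeasurable (by
      filter_upwards [hgF M] with x hx
      rwa [Real.norm_eq_abs, abs_of_nonneg (hg0 M x)])
  have hglim : ∀ᵐ x ∂μ, Tendsto (fun M => g M x) atTop (𝓝 0) := by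
    filter_upwards [hlim] with x hx
    have h1 : Tendsto (fun i => d i x) atTop (𝓝 0) := by
      have := (hx.sub_const (fl x)).abs
      simpa using this
    rw [Metric.tendsto_atTop]
    intro ε hε
    obtain ⟨N, hN⟩ := eventually_atTop.1 (h1.eventually_le_const (half_pos hε))
    refine ⟨N, fun M hM => ?_⟩
    rw [Real.dist_eq, sub_zero, abs_of_nonneg (hg0 M x)]
    exact (ciSup_le fun i => hN _ (by omega)).trans_lt (half_lt_self hε)
  have hgint : Tendsto (fun M => ∫ x, g M x ∂μ) atTop (𝓝 0) := by
    have := tendsto_integral_of_dominated_convergence (μ := μ) (F := g) (f := fun _ => 0)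
      (fun x => 2 * F x)
      (fun n => (hgm n).aestronglyMeasurable) (hF.const_mul 2) (fun M => by
        filter_upwards [hgF M] with x hx
        rwa [Real.norm_eq_abs, abs_of_nonneg (hg0 M x)]) hglim
    simpa using this
  obtain ⟨ns, -, hns⟩ := exists_subseq_ae_of_integral_abs
    (μ := μ) (u := fun M => μ[g M | MeasurableSpace.invariants T])
    (fun M => integrable_condExp) (by
      refine squeeze_zero (fun M => integral_nonneg fun x => abs_nonneg _)
        (fun M => integral_abs_condExp_le (g M)) ?_
      simpa only [abs_of_nonneg (hg0 _ _)] using hgint)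
  have hB : ∀ᵐ x ∂μ, ∀ M, Tendsto (fun n : ℕ => birkhoffSum T (g M) n x / n) atTop
      (𝓝 ((μ[g M | MeasurableSpace.invariants T]) x)) :=
    ae_all_iff.2 fun M => birkhoff_ae hT (hgm M) (hgi M)
  have horb : ∀ᵐ x ∂μ, ∀ n i, d i (T^[n] x) ≤ 2 * F (T^[n] x) :=
    ae_all_iff.2 fun n => (hT.iterate n).quasiMeasurePreserving.ae hdF
  filter_upwards [hns, hB, horb, birkhoff_ae hT hflm hfl] with x h1 h2 h3 h4
  -- for each `M`, the averaged error is bounded by a null sequence plus an average of `g M`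
  have hmaj : ∀ M N : ℕ, |∑ i ∈ Finset.range N, f i (T^[i] x) - birkhoffSum T fl N x|
      ≤ ∑ i ∈ Finset.range M, d i (T^[i] x) + birkhoffSum T (g M) N x := by
    intro M N
    have e1 : |∑ i ∈ Finset.range N, f i (T^[i] x) - birkhoffSum T fl N x|
        ≤ ∑ i ∈ Finset.range N, d i (T^[i] x) := by
      rw [birkhoffSum, ← Finset.sum_sub_distrib]
      exact Finset.abs_sum_le_sum_abs _ _
    have e2 : ∀ i, d i (T^[i] x) ≤ (if i < M then d i (T^[i] x) else 0) + g M (T^[i] x) := by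
      intro i
      split_ifs with h
      · linarith [hg0 M (T^[i] x)]
      · rw [zero_add]
        obtain ⟨j, rfl⟩ := Nat.exists_eq_add_of_le (not_lt.1 h)
        exact le_ciSup (f := fun j' => d (M + j') (T^[M + j] x))
          ⟨2 * F (T^[M + j] x), by rintro _ ⟨i, rfl⟩; exact h3 _ _⟩ j
    have e3 : ∑ i ∈ Finset.range N, (if i < M then d i (T^[i] x) else 0)
        ≤ ∑ i ∈ Finset.range M, d i (T^[i] x) := by
      rw [← Finset.sum_filter]
      refine Finset.sum_le_sum_of_subset_of_nonneg (fun i hi => ?_) fun i _ _ => hd0 _ _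
      simp only [Finset.mem_filter] at hi
      exact Finset.mem_range.2 hi.2
    calc _ ≤ _ := e1
      _ ≤ ∑ i ∈ Finset.range N, ((if i < M then d i (T^[i] x) else 0) + g M (T^[i] x)) :=
        Finset.sum_le_sum fun i _ => e2 i
      _ ≤ _ := by rw [Finset.sum_add_distrib]; exact add_le_add e3 le_rfl
  have hdiff : Tendsto (fun N : ℕ => (∑ i ∈ Finset.range N, f i (T^[i] x)) / N
      - birkhoffSum T fl N x / N) atTop (𝓝 0) := by
    rw [Metric.tendsto_atTop]
    intro ε hε
    obtain ⟨k, hk⟩ := (h1.eventually_lt_const hε).exists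
    set M := ns k
    have hC : Tendsto (fun N : ℕ => (∑ i ∈ Finset.range M, d i (T^[i] x)) / (N : ℝ)
        + birkhoffSum T (g M) N x / N) atTop
        (𝓝 ((μ[g M | MeasurableSpace.invariants T]) x)) := by
      simpa using (tendsto_const_div_atTop_nhds_zero_nat
        (∑ i ∈ Finset.range M, d i (T^[i] x))).add (h2 M)
    obtain ⟨N₀, hN₀⟩ := eventually_atTop.1 (hC.eventually_lt_const hk)
    refine ⟨N₀, fun N hN => lt_of_le_of_lt ?_ (hN₀ N hN)⟩
    rw [Real.dist_eq, sub_zero, ← sub_div, ← add_div, abs_div, Nat.abs_cast]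
    exact div_le_div_of_nonneg_right (hmaj M N) (Nat.cast_nonneg N)
  simpa using hdiff.add h4

/-- The `L¹` counterpart of `breiman_ae` for nonnegative observables. -/
theorem breiman_L1 [MeasurableSpace X] {μ : Measure X} [IsProbabilityMeasure μ]
    {T : X → X} (hT : MeasurePreserving T μ μ) {f : ℕ → X → ℝ} {fl F : X → ℝ}
    (hfm : ∀ n, Measurable (f n)) (hflm : Measurable fl) (hF : Integrable F μ)
    (hfF : ∀ n, ∀ᵐ x ∂μ, |f n x| ≤ F x) (hf0 : ∀ n, 0 ≤ᵐ[μ] f n)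
    (hlim : ∀ᵐ x ∂μ, Tendsto (fun n => f n x) atTop (𝓝 (fl x))) :
    Tendsto (fun N : ℕ => ∫ x, |(∑ i ∈ Finset.range N, f i (T^[i] x)) / N
      - (μ[fl | MeasurableSpace.invariants T]) x| ∂μ) atTop (𝓝 0) := by
  have hfi : ∀ n, Integrable (f n) μ := fun n => hF.mono' (hfm n).aestronglyMeasurable (hfF n)
  have hfTi : ∀ n, Integrable (fun x => f n (T^[n] x)) μ := fun n =>
    (hT.iterate n).integrable_comp_of_integrable (hfi n)
  refine scheffe (fun N => (integrable_finsetSum _ fun i _ => hfTi i).div_const _)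
    integrable_condExp (fun N => ?_) (breiman_ae hT hfm hflm hF hfF hlim).2 ?_
  · have : ∀ᵐ x ∂μ, ∀ n, 0 ≤ f n (T^[n] x) :=
      ae_all_iff.2 fun n => (hT.iterate n).quasiMeasurePreserving.ae (hf0 n)
    filter_upwards [this] with x hx
    exact div_nonneg (Finset.sum_nonneg fun i _ => hx i) (Nat.cast_nonneg N)
  · rw [integral_condExp (MeasurableSpace.invariants_le T)]
    have h1 : Tendsto (fun n => ∫ x, f n x ∂μ) atTop (𝓝 (∫ x, fl x ∂μ)) :=
      tendsto_integral_of_dominated_convergence F (fun n => (hfm n).aestronglyMeasurable) hF hfF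
        hlim
    refine h1.cesaro.congr fun N => ?_
    rw [integral_div, integral_finsetSum _ fun i _ => hfTi i, div_eq_inv_mul]
    congr 1
    refine Finset.sum_congr rfl fun i _ => ?_
    have := integral_map (μ := μ) (hT.iterate i).measurable.aemeasurable
      (hfm i).aestronglyMeasurable
    rwa [(hT.iterate i).map_eq] at this

/-! ### Reverse martingales -/

lemma measurableSet_lt_of {m : MeasurableSpace X} {u v : X → ℝ} (hu : Measurable[m] u)
    (hv : Measurable[m] v) : MeasurableSet[m] {x | u x < v x} :=
  measurableSet_lt hu hv

lemma measurable_limsup_of {m : MeasurableSpace X} {u : ℕ → X → ℝ} (hu : ∀ k, Measurable[m] (u k)) :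
    Measurable[m] fun x => limsup (fun k => u k x) atTop :=
  Measurable.limsup hu

/-- Optional stopping for a decreasing sequence of σ-algebras, finite horizon: if the conditional
expectation of `h` on `G n` is nonnegative on `D n ∈ G n`, then `∫ h ≥ 0` over the union. The
union is split according to the last index `n` with `x ∈ D n`, and each piece lies in `G n`. -/
lemma setIntegral_biUnion_nonneg {m0 : MeasurableSpace X} {μ : Measure X} [IsFiniteMeasure μ]
    {h : X → ℝ} (hh : Integrable h μ) (k : ℕ) :
    ∀ (G : ℕ → MeasurableSpace X) (_ : Antitone G) (_ : ∀ n, G n ≤ m0) (D : ℕ → Set X)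
      (_ : ∀ n, MeasurableSet[G n] (D n)) (_ : ∀ n, ∀ᵐ x ∂μ, x ∈ D n → 0 ≤ (μ[h | G n]) x),
      0 ≤ ∫ x in ⋃ i < k, D i, h x ∂μ := by
  induction k with
  | zero => intro G hG hle D hD hpos; simp
  | succ k ih =>
    intro G hG hle D hD hpos
    have h1 := ih (fun n => G (n + 1)) (fun a b hab => hG (by omega)) (fun n => hle _)
      (fun n => D (n + 1)) (fun n => hD _) (fun n => hpos _)
    set U := ⋃ i < k, D (i + 1) with hU
    have hUm : MeasurableSet[G 0] U :=
      MeasurableSet.iUnion fun i => MeasurableSet.iUnion fun _ => hG (Nat.zero_le _) _ (hD (i + 1))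
    have hdm : MeasurableSet[G 0] (D 0 \ U) := (hD 0).diff hUm
    have h2 : 0 ≤ ∫ x in D 0 \ U, h x ∂μ := by
      rw [← setIntegral_condExp (hle 0) hh hdm]
      refine setIntegral_nonneg_of_ae_restrict ?_
      refine (ae_restrict_iff' (hle 0 _ hdm)).2 ?_
      filter_upwards [hpos 0] with x hx hxD
      exact hx hxD.1
    rw [Set.biUnion_lt_succ', ← hU, ← Set.sdiff_union_self,
      setIntegral_union Set.disjoint_sdiff_left (hle 0 _ hUm) hh.integrableOn hh.integrableOn]
    exact add_nonneg h2 h1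

lemma setIntegral_iUnion_nonneg {m0 : MeasurableSpace X} {μ : Measure X} [IsFiniteMeasure μ]
    {h : X → ℝ} (hh : Integrable h μ) {G : ℕ → MeasurableSpace X} (hG : Antitone G)
    (hle : ∀ n, G n ≤ m0) {D : ℕ → Set X} (hD : ∀ n, MeasurableSet[G n] (D n))
    (hpos : ∀ n, ∀ᵐ x ∂μ, x ∈ D n → 0 ≤ (μ[h | G n]) x) :
    0 ≤ ∫ x in ⋃ i, D i, h x ∂μ := by
  have hU : ⋃ i, D i = ⋃ k, ⋃ i < k, D i := by
    ext x
    simp only [Set.mem_iUnion, exists_prop]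
    exact ⟨fun ⟨i, hi⟩ => ⟨i + 1, i, i.lt_succ_self, hi⟩, fun ⟨_, i, _, hi⟩ => ⟨i, hi⟩⟩
  rw [hU]
  refine ge_of_tendsto' (tendsto_setIntegral_of_monotone (fun k => ?_) (fun k l hkl => ?_)
    hh.integrableOn) fun k => setIntegral_biUnion_nonneg hh k G hG hle D hD hpos
  · exact MeasurableSet.iUnion fun i => MeasurableSet.iUnion fun _ => hle i _ (hD i)
  · exact Set.biUnion_subset_biUnion_left fun i (hi : i < k) => hi.trans_le hkl

/-- If `𝔼(f ∣ G n) → g` in `L¹` along decreasing σ-algebras that all make `g` measurable, then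
`𝔼(f ∣ G n)` is a.e. eventually at most `g + ε`. For `n ≥ m` the difference `𝔼(f ∣ G n) - g` is the
conditional expectation of `𝔼(f ∣ G m) - g`, so the maximal inequality bounds the measure of the
set where it exceeds `ε` for some `n ≥ m` by `‖𝔼(f ∣ G m) - g‖₁ / ε`. -/
lemma eventually_condExp_le {m0 : MeasurableSpace X} {μ : Measure X} [IsProbabilityMeasure μ]
    {f g : X → ℝ} {G : ℕ → MeasurableSpace X} (hG : Antitone G)
    (hle : ∀ n, G n ≤ m0) (hgm : ∀ n, Measurable[G n] g) (hg : Integrable g μ)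
    (hlim : Tendsto (fun n => ∫ x, |(μ[f | G n]) x - g x| ∂μ) atTop (𝓝 0)) :
    ∀ᵐ x ∂μ, ∀ ε > 0, ∀ᶠ n in atTop, (μ[f | G n]) x ≤ g x + ε := by
  have main : ∀ ε : ℝ, 0 < ε → ∀ᵐ x ∂μ, ∀ᶠ n in atTop, (μ[f | G n]) x ≤ g x + ε := by
    intro ε hε
    set D : ℕ → Set X := fun n => {x | g x + ε < (μ[f | G n]) x} with hD
    have hDm : ∀ n, MeasurableSet[G n] (D n) := fun n =>
      measurableSet_lt_of ((hgm n).add_const ε) stronglyMeasurable_condExp.measurable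
    have hb : ∀ m, ε * μ.real (⋃ n, D (m + n)) ≤ ∫ x, |(μ[f | G m]) x - g x| ∂μ := by
      intro m
      have hi1 : Integrable (fun x => (μ[f | G m]) x - g x) μ := integrable_condExp.sub hg
      have hi : Integrable (fun x => (μ[f | G m]) x - g x - ε) μ :=
        hi1.sub (integrable_const ε)
      have hUm : MeasurableSet (⋃ n, D (m + n)) :=
        MeasurableSet.iUnion fun n => hle _ _ (hDm (m + n))
      have h0 := setIntegral_iUnion_nonneg (μ := μ) hi
        (G := fun n => G (m + n)) (fun a b hab => hG (by omega)) (fun n => hle _)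
        (D := fun n => D (m + n)) (fun n => hDm _) (fun n => by
          have hgε : Integrable (fun x => g x + ε) μ := hg.add (integrable_const ε)
          have e1 : μ[fun x => (μ[f | G m]) x - g x - ε | G (m + n)]
              =ᵐ[μ] fun x => (μ[f | G (m + n)]) x - (g x + ε) := by
            have a1 := condExp_sub (μ := μ) (integrable_condExp (f := f) (m := G m)) hgε (G (m + n))
            have a2 : μ[fun x => g x + ε | G (m + n)] = fun x => g x + ε :=
              condExp_of_stronglyMeasurable (hle _)
                ((hgm _).add_const ε).stronglyMeasurable hgε
            have a3 := condExp_condExp_of_le (μ := μ) (f := f) (hG (Nat.le_add_right m n)) (hle m)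
            have a4 : (fun x => (μ[f | G m]) x - g x - ε) = μ[f | G m] - fun x => g x + ε := by
              ext x; simp only [Pi.sub_apply]; ring
            rw [a4]
            filter_upwards [a1, a3] with x h1 h3
            rw [h1, Pi.sub_apply, h3, a2]
          filter_upwards [e1] with x hx hxD
          rw [hx]
          exact sub_nonneg.2 (le_of_lt hxD))
      rw [integral_sub hi1.integrableOn (integrable_const _).integrableOn, setIntegral_const,
        smul_eq_mul] at h0
      have h1 : ∫ x in ⋃ n, D (m + n), ((μ[f | G m]) x - g x) ∂μ
          ≤ ∫ x, |(μ[f | G m]) x - g x| ∂μ :=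
        (setIntegral_mono hi1.integrableOn hi1.abs.integrableOn fun x => le_abs_self _).trans
          (setIntegral_le_integral hi1.abs (ae_of_all _ fun x => abs_nonneg _))
      linarith
    have hnull : μ.real (⋂ m, ⋃ n, D (m + n)) = 0 := by
      refine le_antisymm ?_ measureReal_nonneg
      have h1 : ∀ m, ε * μ.real (⋂ m, ⋃ n, D (m + n)) ≤ ∫ x, |(μ[f | G m]) x - g x| ∂μ :=
        fun m => (mul_le_mul_of_nonneg_left
          (measureReal_mono (Set.iInter_subset _ m)) hε.le).trans (hb m)
      have h2 := ge_of_tendsto' hlim h1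
      exact nonpos_of_mul_nonpos_right h2 hε
    filter_upwards [measure_eq_zero_iff_ae_notMem.1 ((measureReal_eq_zero_iff).1 hnull)] with x hx
    simp only [Set.mem_iInter, Set.mem_iUnion, not_forall, not_exists] at hx
    obtain ⟨m, hm⟩ := hx
    filter_upwards [eventually_ge_atTop m] with n hn
    obtain ⟨j, rfl⟩ := Nat.exists_eq_add_of_le hn
    exact not_lt.1 (hm j)
  have h := ae_all_iff.2 fun j : ℕ => main (1 / ((j : ℝ) + 1)) (by positivity)
  filter_upwards [h] with x hx ε hε
  obtain ⟨j, hj⟩ := exists_nat_one_div_lt hε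
  filter_upwards [hx j] with n hn
  linarith

lemma integrable_mul_of_abs_le_one {m0 : MeasurableSpace X} {μ : Measure X} {u v : X → ℝ}
    (hu : Integrable u μ) (hv : Integrable v μ) (hb : ∀ᵐ x ∂μ, |u x| ≤ 1) :
    Integrable (fun x => u x * v x) μ :=
  hv.bdd_mul hu.aestronglyMeasurable (c := 1) (by simpa using hb)

/-- Orthogonality of the increments of a bounded reverse martingale in `L²`. -/
lemma integral_sq_condExp_sub {m0 : MeasurableSpace X} {μ : Measure X} [IsProbabilityMeasure μ]
    {f : X → ℝ} (hb : ∀ᵐ x ∂μ, |f x| ≤ 1) {m₁ m₂ : MeasurableSpace X} (h12 : m₁ ≤ m₂)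
    (h2 : m₂ ≤ m0) :
    ∫ x, ((μ[f | m₂]) x - (μ[f | m₁]) x) ^ 2 ∂μ
      = ∫ x, (μ[f | m₂]) x ^ 2 ∂μ - ∫ x, (μ[f | m₁]) x ^ 2 ∂μ := by
  have b1 : ∀ᵐ x ∂μ, |(μ[f | m₁]) x| ≤ 1 := ae_bdd_abs_condExp_of_ae_bdd_abs hb
  have b2 : ∀ᵐ x ∂μ, |(μ[f | m₂]) x| ≤ 1 := ae_bdd_abs_condExp_of_ae_bdd_abs hb
  have i1 : Integrable (μ[f | m₁]) μ := integrable_condExp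
  have i2 : Integrable (μ[f | m₂]) μ := integrable_condExp
  have i12 := integrable_mul_of_abs_le_one i1 i2 b1
  have i11 : Integrable (fun x => (μ[f | m₁]) x ^ 2) μ := by
    simpa only [sq] using integrable_mul_of_abs_le_one i1 i1 b1
  have i22 : Integrable (fun x => (μ[f | m₂]) x ^ 2) μ := by
    simpa only [sq] using integrable_mul_of_abs_le_one i2 i2 b2
  have key : ∫ x, (μ[f | m₁]) x * (μ[f | m₂]) x ∂μ = ∫ x, (μ[f | m₁]) x ^ 2 ∂μ := by
    rw [← integral_condExp (h12.trans h2)]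
    refine integral_congr_ae ?_
    have a1 := condExp_mul_of_stronglyMeasurable_left (μ := μ) (f := μ[f | m₁]) (g := μ[f | m₂])
      (m := m₁) stronglyMeasurable_condExp i12 i2
    have a2 := condExp_condExp_of_le (μ := μ) (f := f) h12 h2
    filter_upwards [a1, a2] with x h1 h3
    have : (μ[fun x => (μ[f | m₁]) x * (μ[f | m₂]) x | m₁]) x
      = (μ[f | m₁]) x * (μ[μ[f | m₂] | m₁]) x := h1
    rw [this, h3, sq]
  have hexp : ∀ x, ((μ[f | m₂]) x - (μ[f | m₁]) x) ^ 2
      = (μ[f | m₂]) x ^ 2 - (2 * ((μ[f | m₁]) x * (μ[f | m₂]) x) - (μ[f | m₁]) x ^ 2) :=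
    fun x => by ring
  have i3 : Integrable (fun x => 2 * ((μ[f | m₁]) x * (μ[f | m₂]) x) - (μ[f | m₁]) x ^ 2) μ :=
    (i12.const_mul 2).sub i11
  simp_rw [hexp]
  rw [integral_sub i22 i3, integral_sub (i12.const_mul 2) i11,
    integral_const_mul, key]
  ring

/-- **Lévy's downward theorem** for functions bounded by `1`. -/
theorem levy_downward {m0 : MeasurableSpace X} {μ : Measure X} [IsProbabilityMeasure μ]
    {f : X → ℝ} (hf : Integrable f μ) (hb : ∀ᵐ x ∂μ, |f x| ≤ 1) {G : ℕ → MeasurableSpace X}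
    (hG : Antitone G) (hle : ∀ n, G n ≤ m0) :
    ∀ᵐ x ∂μ, Tendsto (fun n => (μ[f | G n]) x) atTop (𝓝 ((μ[f | ⨅ n, G n]) x)) := by
  have hi : ∀ n, Integrable (μ[f | G n]) μ := fun n => integrable_condExp
  have hsq : ∀ n m, n ≤ m → ∫ x, ((μ[f | G n]) x - (μ[f | G m]) x) ^ 2 ∂μ
      = ∫ x, (μ[f | G n]) x ^ 2 ∂μ - ∫ x, (μ[f | G m]) x ^ 2 ∂μ := fun n m hnm =>
    integral_sq_condExp_sub hb (hG hnm) (hle n)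
  set a : ℕ → ℝ := fun n => ∫ x, (μ[f | G n]) x ^ 2 ∂μ with ha
  have hanti : Antitone a := fun n m hnm => by
    have h1 := hsq n m hnm
    have h2 : 0 ≤ ∫ x, ((μ[f | G n]) x - (μ[f | G m]) x) ^ 2 ∂μ :=
      integral_nonneg fun x => sq_nonneg _
    simp only [ha]; linarith
  have hcau : CauchySeq a := (tendsto_atTop_ciInf hanti
    ⟨0, by rintro _ ⟨n, rfl⟩; exact integral_nonneg fun x => sq_nonneg _⟩).cauchySeq
  have hbn : ∀ n, ∀ᵐ x ∂μ, |(μ[f | G n]) x| ≤ 1 := fun n => ae_bdd_abs_condExp_of_ae_bdd_abs hb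
  -- the elementary inequality `|t| ≤ δ + t² / δ` replaces Cauchy–Schwarz
  have hL1 : ∀ δ > 0, ∀ n m, n ≤ m → ∫ x, |(μ[f | G m]) x - (μ[f | G n]) x| ∂μ
      ≤ δ + (a n - a m) / δ := by
    intro δ hδ n m hnm
    have isq : Integrable (fun x => ((μ[f | G n]) x - (μ[f | G m]) x) ^ 2) μ := by
      refine (integrable_const (4 : ℝ)).mono'
        (((hi n).sub (hi m)).aestronglyMeasurable.pow 2) ?_
      filter_upwards [hbn n, hbn m] with x h1 h2
      rw [Real.norm_eq_abs, abs_of_nonneg (sq_nonneg _)]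
      rw [abs_le] at h1 h2
      nlinarith
    have h1 : ∫ x, |(μ[f | G m]) x - (μ[f | G n]) x| ∂μ
        ≤ ∫ x, (δ + ((μ[f | G n]) x - (μ[f | G m]) x) ^ 2 / δ) ∂μ := by
      refine integral_mono ((hi m).sub (hi n)).abs ((integrable_const δ).add (isq.div_const δ))
        fun x => ?_
      show |(μ[f | G m]) x - (μ[f | G n]) x| ≤ δ + ((μ[f | G n]) x - (μ[f | G m]) x) ^ 2 / δ
      rw [abs_sub_comm, ← sq_abs, ← sub_le_iff_le_add', le_div_iff₀ hδ]
      nlinarith [sq_nonneg (|(μ[f | G n]) x - (μ[f | G m]) x| - δ),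
        abs_nonneg ((μ[f | G n]) x - (μ[f | G m]) x)]
    rw [integral_add (integrable_const δ) (isq.div_const δ), integral_div, hsq n m hnm] at h1
    simpa using h1
  have hcauL : CauchySeq fun n => (hi n).toL1 (μ[f | G n]) := by
    rw [Metric.cauchySeq_iff']
    intro ε hε
    have hδ : 0 < ε / 2 := half_pos hε
    obtain ⟨N, hN⟩ := Metric.cauchySeq_iff'.1 hcau ((ε / 2) ^ 2) (by positivity)
    refine ⟨N, fun n hn => ?_⟩
    have h1 : dist ((hi n).toL1 (μ[f | G n])) ((hi N).toL1 (μ[f | G N]))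
        = ∫ x, |(μ[f | G n]) x - (μ[f | G N]) x| ∂μ := by
      rw [L1.dist_eq_integral_dist]
      refine integral_congr_ae ?_
      filter_upwards [(hi n).coeFn_toL1, (hi N).coeFn_toL1] with x h1 h2
      rw [h1, h2, Real.dist_eq]
    have h2 := hN n hn
    rw [Real.dist_eq, abs_sub_comm] at h2
    have h3 := (le_abs_self _).trans_lt h2
    rw [h1]
    refine (hL1 (ε / 2) hδ N n hn).trans_lt ?_
    have : (a N - a n) / (ε / 2) < ε / 2 := by
      rw [div_lt_iff₀ hδ, ← sq]; exact h3
    linarith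
  obtain ⟨l, hl⟩ := cauchySeq_tendsto_of_complete hcauL
  have hli : Integrable l μ := L1.integrable_coeFn l
  have hlim : Tendsto (fun n => ∫ x, |(μ[f | G n]) x - l x| ∂μ) atTop (𝓝 0) := by
    refine (tendsto_iff_dist_tendsto_zero.1 hl).congr fun n => ?_
    rw [L1.dist_eq_integral_dist]
    refine integral_congr_ae ?_
    filter_upwards [(hi n).coeFn_toL1] with x h1
    rw [h1, Real.dist_eq]
  obtain ⟨ns, hmono, hns⟩ := exists_subseq_ae_of_integral_abs (μ := μ)
    (u := fun n x => (μ[f | G n]) x - l x) (fun n => (hi n).sub hli) hlim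
  -- a version of the limit that is measurable for every `G n`, hence for the intersection
  set g : X → ℝ := fun x => limsup (fun k => (μ[f | G (ns k)]) x) atTop with hg
  have hgm : ∀ n, Measurable[G n] g := by
    intro n
    have h1 : g = fun x => limsup (fun k => (μ[f | G (ns (k + n))]) x) atTop := by
      ext x
      exact (limsup_nat_add (fun k => (μ[f | G (ns k)]) x) n).symm
    rw [h1]
    refine measurable_limsup_of fun k => ?_
    have : n ≤ ns (k + n) := (Nat.le_add_left n k).trans (hmono.id_le _)
    exact stronglyMeasurable_condExp.measurable.mono (hG this) le_rfl
  have hgl : g =ᵐ[μ] l := by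
    filter_upwards [hns] with x hx
    have h1 := hx.add_const (l x)
    simp only [sub_add_cancel, zero_add] at h1
    exact h1.limsup_eq
  have hgi : Integrable g μ := hli.congr hgl.symm
  have hlimg : Tendsto (fun n => ∫ x, |(μ[f | G n]) x - g x| ∂μ) atTop (𝓝 0) := by
    refine hlim.congr fun n => integral_congr_ae ?_
    filter_upwards [hgl] with x hx
    rw [hx]
  have hFle : (⨅ n, G n) ≤ m0 := (iInf_le _ 0).trans (hle 0)
  have hgF : Measurable[⨅ n, G n] g := fun s hs =>
    MeasurableSpace.measurableSet_iInf.2 fun n => hgm n hs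
  have hgE : g =ᵐ[μ] μ[f | ⨅ n, G n] := by
    refine ae_eq_condExp_of_forall_setIntegral_eq hFle hf (fun s _ _ => hgi.integrableOn)
      (fun s hs _ => ?_) hgF.stronglyMeasurable.aestronglyMeasurable
    have h1 : ∀ n, |∫ x in s, f x ∂μ - ∫ x in s, g x ∂μ|
        ≤ ∫ x, |(μ[f | G n]) x - g x| ∂μ := by
      intro n
      rw [← setIntegral_condExp (hle n) hf (iInf_le G n s hs),
        ← integral_sub (hi n).integrableOn hgi.integrableOn]
      exact (abs_integral_le_integral_abs).trans
        (setIntegral_le_integral ((hi n).sub hgi).abs (ae_of_all _ fun x => abs_nonneg _))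
    have h2 := ge_of_tendsto' hlimg h1
    have h3 := abs_nonpos_iff.1 h2
    linarith
  have hneg : ∀ᵐ x ∂μ, ∀ n, (μ[-f | G n]) x = -(μ[f | G n]) x :=
    ae_all_iff.2 fun n => condExp_neg f (G n)
  have hlimn : Tendsto (fun n => ∫ x, |(μ[-f | G n]) x - (-g) x| ∂μ) atTop (𝓝 0) := by
    refine hlimg.congr fun n => integral_congr_ae ?_
    filter_upwards [hneg] with x hx
    rw [hx, Pi.neg_apply, ← abs_neg]
    congr 1
    ring
  filter_upwards [eventually_condExp_le hG hle hgm hgi hlimg,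
    eventually_condExp_le (f := -f) (g := -g) hG hle (fun n => (hgm n).neg) hgi.neg hlimn,
    hneg, hgE] with x h1 h2 h3 h4
  rw [← h4, Metric.tendsto_atTop]
  intro ε hε
  obtain ⟨N, hN⟩ := eventually_atTop.1 ((h1 (ε / 2) (half_pos hε)).and (h2 (ε / 2) (half_pos hε)))
  refine ⟨N, fun n hn => ?_⟩
  obtain ⟨e1, e2⟩ := hN n hn
  rw [h3, Pi.neg_apply] at e2
  rw [Real.dist_eq, abs_lt]
  constructor <;> linarith

/-- Chung's maximal inequality: on `J`, the conditional probabilities `𝔼(1_J ∣ G n)` all stay above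
`c`, except on a set of measure at most `c`. -/
lemma measure_exists_condExp_lt {m0 : MeasurableSpace X} {μ : Measure X} [IsProbabilityMeasure μ]
    {G : ℕ → MeasurableSpace X} (hG : Antitone G) (hle : ∀ n, G n ≤ m0) {J : Set X}
    (hJ : MeasurableSet J) {c : ℝ} (hc : 0 ≤ c) :
    μ {x | x ∈ J ∧ ∃ n, (μ[J.indicator (fun _ => (1 : ℝ)) | G n]) x < c} ≤ ENNReal.ofReal c := by
  set p := fun n => μ[J.indicator (fun _ => (1 : ℝ)) | G n] with hp
  have hJi : Integrable (J.indicator fun _ => (1 : ℝ)) μ := (integrable_const 1).indicator hJ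
  have hDm : ∀ n, MeasurableSet[G n] {x | p n x < c} := fun n =>
    measurableSet_lt_of stronglyMeasurable_condExp.measurable measurable_const
  set U := ⋃ n, {x | p n x < c} with hU
  have hUm : MeasurableSet U := MeasurableSet.iUnion fun n => hle n _ (hDm n)
  have h0 := setIntegral_iUnion_nonneg (μ := μ) ((integrable_const c).sub hJi) hG hle hDm
    (fun n => by
      have h1 := condExp_sub (integrable_const (μ := μ) c) hJi (G n)
      filter_upwards [h1] with x hx hxD
      rw [hx, Pi.sub_apply, condExp_const (hle n)]
      exact sub_nonneg.2 (le_of_lt hxD))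
  have h1 : ∫ x in U, (J.indicator (fun _ => (1 : ℝ))) x ∂μ = μ.real (J ∩ U) := by
    rw [integral_indicator hJ, setIntegral_const, smul_eq_mul, mul_one,
      measureReal_restrict_apply hJ]
  have h2 : ∫ x in U, ((fun _ : X => c) - J.indicator (fun _ => (1 : ℝ))) x ∂μ
      = μ.real U * c - μ.real (J ∩ U) := by
    rw [← h1, ← smul_eq_mul, ← setIntegral_const]
    exact integral_sub (integrable_const c).integrableOn hJi.integrableOn
  rw [← hU] at h0
  have h3 : μ.real (J ∩ U) ≤ c := by
    have h4 : 0 ≤ μ.real U * c - μ.real (J ∩ U) := h2 ▸ h0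
    have : μ.real U ≤ 1 := measureReal_le_one
    nlinarith
  have h5 : {x | x ∈ J ∧ ∃ n, p n x < c} = J ∩ U := by
    ext x; simp [hU]
  rw [h5]
  exact ENNReal.le_ofReal_iff_toReal_le (measure_ne_top _ _) hc |>.2 h3

/-- Exponentially decaying tails of a supremum yield an integrable majorant, namely the number of
levels `k` exceeded by some `u n`. -/
lemma exists_integrable_majorant [MeasurableSpace X] {μ : Measure X} {u : ℕ → X → ℝ}
    (hu : ∀ n, Measurable (u n)) {C : ENNReal} (hC : C ≠ ⊤)
    (htail : ∀ k : ℕ, μ {x | ∃ n, (k : ℝ) < u n x} ≤ C * ENNReal.ofReal (Real.exp (-k))) :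
    ∃ F : X → ℝ, Integrable F μ ∧ ∀ n, ∀ᵐ x ∂μ, u n x ≤ F x := by
  set B : ℕ → Set X := fun k => {x | ∃ n, (k : ℝ) < u n x} with hB
  have hBm : ∀ k, MeasurableSet (B k) := fun k => by
    have : B k = ⋃ n, {x | (k : ℝ) < u n x} := by ext x; simp [hB]
    rw [this]
    exact MeasurableSet.iUnion fun n => measurableSet_lt measurable_const (hu n)
  set Φ : X → ENNReal := fun x => ∑' k, (B k).indicator 1 x with hΦ
  have hΦm : Measurable Φ := Measurable.tsum fun k => measurable_one.indicator (hBm k)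
  have hΦi : ∫⁻ x, Φ x ∂μ ≠ ⊤ := by
    rw [lintegral_tsum fun k => (measurable_one.indicator (hBm k)).aemeasurable]
    have h1 : ∀ k, ∫⁻ x, (B k).indicator 1 x ∂μ = μ (B k) := fun k => lintegral_indicator_one (hBm k)
    simp_rw [h1]
    refine ne_top_of_le_ne_top ?_ (ENNReal.tsum_le_tsum htail)
    rw [ENNReal.tsum_mul_left]
    refine ENNReal.mul_ne_top hC ?_
    have h2 : Summable fun k : ℕ => Real.exp (-(k : ℝ)) := Real.summable_exp_neg_nat
    exact h2.tsum_ofReal_ne_top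
  refine ⟨fun x => (Φ x).toReal, integrable_toReal_of_lintegral_ne_top hΦm.aemeasurable hΦi, ?_⟩
  intro n
  filter_upwards [ae_lt_top hΦm hΦi] with x hx
  rw [← ENNReal.ofReal_le_iff_le_toReal hx.ne]
  set K := ⌈u n x⌉₊
  calc ENNReal.ofReal (u n x) ≤ ENNReal.ofReal (K : ℝ) := ENNReal.ofReal_le_ofReal (Nat.le_ceil _)
    _ = ∑ k ∈ Finset.range K, (1 : ENNReal) := by simp
    _ = ∑ k ∈ Finset.range K, (B k).indicator 1 x := by
      refine Finset.sum_congr rfl fun k hk => ?_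
      rw [Set.indicator_of_mem, Pi.one_apply]
      exact ⟨n, Nat.lt_ceil.1 (Finset.mem_range.1 hk)⟩
    _ ≤ Φ x := ENNReal.sum_le_tsum _

/-! ### Conditional information -/

/-- In `hatIn`, the clause `MeasurableSet s` is read in the σ-algebra `m` itself, the innermost
instance in scope, so that `hatIn μ m` is `m`. For the theorem this is immaterial: conditional
expectations do not see null sets, and the intersection of a decreasing sequence of completed
σ-algebras is the completion of the intersection. -/
lemma hatIn_eq {m mX : MeasurableSpace X} (μ : Measure X) : hatIn μ m = m :=
  MeasurableSpace.ext fun s => ⟨fun h => h.1, fun h => ⟨h, s, h, by simp⟩⟩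

/-- On a compact metric space, a measurable function that is constant on the fibres of a measurable
map `g` is measurable for the σ-algebra generated by `g`; this is Lusin's separation theorem. -/
lemma comap_le_comap_of_factors [MetricSpace X] [CompactSpace X] [MeasurableSpace X] [BorelSpace X]
    {Y Z : Type*} [MeasurableSpace Y] [MeasurableSpace Z] [StandardBorelSpace Z]
    {f : X → Y} (hf : Measurable f) {g : X → Z} (hg : Measurable g)
    (h : ∀ x y, g x = g y → f x = f y) :
    MeasurableSpace.comap f inferInstance ≤ MeasurableSpace.comap g inferInstance := by
  let := upgradeStandardBorel Z
  rintro _ ⟨u, hu, rfl⟩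
  have hs : MeasurableSet (f ⁻¹' u) := hf hu
  have hdisj : Disjoint (g '' (f ⁻¹' u)) (g '' (f ⁻¹' u)ᶜ) := by
    rw [Set.disjoint_left]
    rintro _ ⟨x, hx, rfl⟩ ⟨y, hy, hxy⟩
    refine hy ?_
    show f y ∈ u
    rw [h y x hxy]
    exact hx
  obtain ⟨v, h1, h2, h3⟩ := (hs.analyticSet_image hg).measurablySeparable
    (hs.compl.analyticSet_image hg) hdisj
  refine ⟨v, h3, ?_⟩
  ext x
  constructor
  · intro hx
    by_contra hc
    exact Set.disjoint_left.1 h2 ⟨x, hc, rfl⟩ hx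
  · intro hx
    exact h1 ⟨x, hx, rfl⟩

/-- Conditional probabilities of `J` are a.e. positive on `J`. -/
lemma condExp_indicator_pos {m mX : MeasurableSpace X} {μ : Measure X} [IsProbabilityMeasure μ]
    (hm : m ≤ mX) {J : Set X} (hJ : MeasurableSet J) :
    ∀ᵐ x ∂μ, x ∈ J → 0 < (μ[J.indicator (fun _ => (1 : ℝ)) | m]) x := by
  have hJi : Integrable (J.indicator fun _ => (1 : ℝ)) μ := (integrable_const 1).indicator hJ
  set p := μ[J.indicator (fun _ => (1 : ℝ)) | m] with hp
  have hDm : MeasurableSet[m] {x | 0 < p x}ᶜ :=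
    (measurableSet_lt_of measurable_const stronglyMeasurable_condExp.measurable).compl
  have h1 : μ.real (J ∩ {x | 0 < p x}ᶜ) = ∫ x in {x | 0 < p x}ᶜ, p x ∂μ := by
    rw [setIntegral_condExp hm hJi hDm, integral_indicator hJ, setIntegral_const, smul_eq_mul,
      mul_one, measureReal_restrict_apply hJ]
  have h2 : ∫ x in {x | 0 < p x}ᶜ, p x ∂μ ≤ 0 :=
    setIntegral_nonpos (hm _ hDm) fun x hx => not_lt.1 hx
  have h3 : μ (J ∩ {x | 0 < p x}ᶜ) = 0 :=
    (measureReal_eq_zero_iff).1 (le_antisymm (h1 ▸ h2) measureReal_nonneg)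
  filter_upwards [measure_eq_zero_iff_ae_notMem.1 h3] with x hx hxJ
  by_contra hc
  exact hx ⟨hxJ, hc⟩

lemma abs_condExp_indicator_le (m : MeasurableSpace X) {mX : MeasurableSpace X} {μ : Measure X}
    (J : Set X) : ∀ᵐ x ∂μ, |(μ[J.indicator (fun _ => (1 : ℝ)) | m]) x| ≤ 1 :=
  ae_bdd_abs_condExp_of_ae_bdd_abs (ae_of_all _ fun x => by
    by_cases hx : x ∈ J <;> simp [hx])

lemma condInfo_apply {m mX : MeasurableSpace X} (μ : Measure X)
    {A : Type*} [Fintype A] (P : X → A) (x : X) :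
    condInfo μ m P x
      = -Real.log ((μ[(P ⁻¹' {P x}).indicator fun _ => (1 : ℝ) | m]) x) := by
  unfold condInfo
  rw [Finset.sum_eq_single (P x)]
  · simp
  · intro j _ hj
    rw [Set.indicator_of_notMem, zero_mul]
    exact fun h => hj h.symm
  · simp

lemma measurable_condInfo {m mX : MeasurableSpace X} (μ : Measure X)
    (hm : m ≤ mX) {A : Type*} [Fintype A] [MeasurableSpace A] [MeasurableSingletonClass A]
    {P : X → A} (hP : Measurable P) : Measurable (condInfo μ m P) := by
  unfold condInfo
  refine (Finset.measurable_fun_sum _ fun j _ => ?_).neg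
  refine (measurable_const.indicator (hP (measurableSet_singleton j))).mul ?_
  exact Real.measurable_log.comp ((stronglyMeasurable_condExp.mono hm).measurable)

lemma condInfo_nonneg (m : MeasurableSpace X) {mX : MeasurableSpace X} (μ : Measure X)
    {A : Type*} [Fintype A] (P : X → A) : 0 ≤ᵐ[μ] condInfo μ m P := by
  have h : ∀ᵐ x ∂μ, ∀ j, |(μ[(P ⁻¹' {j}).indicator (fun _ => (1 : ℝ)) | m]) x| ≤ 1 :=
    ae_all_iff.2 fun j => abs_condExp_indicator_le m _
  filter_upwards [h] with x hx
  rw [condInfo_apply, Pi.zero_apply, ← Real.log_abs]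
  exact neg_nonneg.2 (Real.log_nonpos (abs_nonneg _) (hx _))

/-- Tail bound for `supₙ I(α ∣ Gₙ)` along decreasing σ-algebras: the information exceeds `k` only
where the conditional probability of the current atom drops below `e⁻ᵏ`. -/
lemma measure_exists_lt_condInfo {m0 : MeasurableSpace X} {μ : Measure X} [IsProbabilityMeasure μ]
    {G : ℕ → MeasurableSpace X} (hG : Antitone G) (hle : ∀ n, G n ≤ m0)
    {A : Type*} [Fintype A] [MeasurableSpace A] [MeasurableSingletonClass A]
    {P : X → A} (hP : Measurable P) (k : ℕ) :
    μ {x | ∃ n, (k : ℝ) < condInfo μ (G n) P x}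
      ≤ (Fintype.card A : ENNReal) * ENNReal.ofReal (Real.exp (-k)) := by
  have hsub : {x | ∃ n, (k : ℝ) < condInfo μ (G n) P x} ⊆ ⋃ j : A, {x | x ∈ P ⁻¹' {j} ∧
      ∃ n, (μ[(P ⁻¹' {j}).indicator (fun _ => (1 : ℝ)) | G n]) x < Real.exp (-k)} := by
    rintro x ⟨n, hn⟩
    refine Set.mem_iUnion.2 ⟨P x, rfl, n, ?_⟩
    rw [condInfo_apply] at hn
    rcases le_or_gt ((μ[(P ⁻¹' {P x}).indicator (fun _ => (1 : ℝ)) | G n]) x) 0 with h | h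
    · exact h.trans_lt (Real.exp_pos _)
    · rw [← Real.log_lt_iff_lt_exp h]; linarith
  calc _ ≤ _ := measure_mono hsub
    _ ≤ ∑ j : A, μ {x | x ∈ P ⁻¹' {j} ∧ ∃ n,
        (μ[(P ⁻¹' {j}).indicator (fun _ => (1 : ℝ)) | G n]) x < Real.exp (-k)} :=
      measure_iUnion_fintype_le μ _
    _ ≤ ∑ j : A, ENNReal.ofReal (Real.exp (-k)) := Finset.sum_le_sum fun j _ =>
      measure_exists_condExp_lt hG hle (hP (measurableSet_singleton j)) (Real.exp_pos _).le
    _ = _ := by simp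

/-- `I(α ∣ Gₙ) → I(α ∣ ⋂ₙ Gₙ)` a.e. for decreasing σ-algebras `Gₙ`. -/
lemma tendsto_condInfo {m0 : MeasurableSpace X} {μ : Measure X} [IsProbabilityMeasure μ]
    {G : ℕ → MeasurableSpace X} (hG : Antitone G) (hle : ∀ n, G n ≤ m0)
    {A : Type*} [Fintype A] [MeasurableSpace A] [MeasurableSingletonClass A]
    {P : X → A} (hP : Measurable P) :
    ∀ᵐ x ∂μ, Tendsto (fun n => condInfo μ (G n) P x) atTop (𝓝 (condInfo μ (⨅ n, G n) P x)) := by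
  have hJ : ∀ j, MeasurableSet (P ⁻¹' {j}) := fun j => hP (measurableSet_singleton j)
  have h1 : ∀ᵐ x ∂μ, ∀ j, Tendsto
      (fun n => (μ[(P ⁻¹' {j}).indicator (fun _ => (1 : ℝ)) | G n]) x) atTop
      (𝓝 ((μ[(P ⁻¹' {j}).indicator (fun _ => (1 : ℝ)) | ⨅ n, G n]) x)) :=
    ae_all_iff.2 fun j => levy_downward ((integrable_const 1).indicator (hJ j))
      (ae_of_all _ fun x => by by_cases hx : x ∈ P ⁻¹' {j} <;> simp [hx]) hG hle
  have h2 : ∀ᵐ x ∂μ, ∀ j, x ∈ P ⁻¹' {j} →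
      0 < (μ[(P ⁻¹' {j}).indicator (fun _ => (1 : ℝ)) | ⨅ n, G n]) x :=
    ae_all_iff.2 fun j => condExp_indicator_pos ((iInf_le _ 0).trans (hle 0)) (hJ j)
  filter_upwards [h1, h2] with x hx1 hx2
  simp_rw [condInfo_apply]
  exact ((hx1 (P x)).log (hx2 (P x) rfl).ne').neg

/-- Equivariance of conditional expectation under a measure preserving map. -/
lemma condExp_comp_comap {m mX : MeasurableSpace X} {μ : Measure X} [IsProbabilityMeasure μ]
    {S : X → X} (hS : MeasurePreserving S μ μ) (hm : m ≤ mX)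
    {f : X → ℝ} (hf : Integrable f μ) :
    (fun x => (μ[f | m]) (S x)) =ᵐ[μ] μ[fun x => f (S x) | m.comap S] := by
  have hcm : m.comap S ≤ mX := by
    rintro _ ⟨t, ht, rfl⟩
    exact hS.measurable (hm t ht)
  have hi : Integrable (fun x => (μ[f | m]) (S x)) μ :=
    hS.integrable_comp_of_integrable integrable_condExp
  have hint : ∀ (u : X → ℝ), Integrable u μ → ∀ t, MeasurableSet t →
      ∫ x in S ⁻¹' t, u (S x) ∂μ = ∫ x in t, u x ∂μ := by
    intro u hu t ht
    have hmap := hS.map_eq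
    have h := setIntegral_map (μ := μ) (g := S) (f := u) ht
      (by rw [hmap]; exact hu.aestronglyMeasurable) hS.measurable.aemeasurable
    rw [hmap] at h
    exact h.symm
  refine ae_eq_condExp_of_forall_setIntegral_eq hcm (hS.integrable_comp_of_integrable hf)
    (fun s _ _ => hi.integrableOn) ?_ ?_
  · rintro _ ⟨t, ht, rfl⟩ _
    rw [hint _ integrable_condExp t (hm t ht), hint _ hf t (hm t ht), setIntegral_condExp hm hf ht]
  · exact (stronglyMeasurable_condExp.comp_measurable (comap_measurable S)).aestronglyMeasurable

/-- Bayes' rule: on the set `w = b`, the conditional probability of `V`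
given `(ζ, w)` is the quotient of those of `{w = b} ∩ V` and `{w = b}` given `ζ`. -/
lemma condExp_inter_eq_mul {mξ mη mX : MeasurableSpace X} {μ : Measure X} [IsProbabilityMeasure μ]
    {Z W : Type*} [MeasurableSpace Z] [MeasurableSpace W] [MeasurableSingletonClass W]
    {ζ : X → Z} (hζ : Measurable ζ) {w : X → W} (hw : Measurable w)
    (hmξ : mξ = MeasurableSpace.comap ζ inferInstance)
    (hmη : mη = MeasurableSpace.comap (fun x => (ζ x, w x)) inferInstance) (b : W) {V : Set X}
    (hV : MeasurableSet V) :
    ∀ᵐ x ∂μ, w x = b →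
      (μ[(w ⁻¹' {b} ∩ V).indicator (fun _ => (1 : ℝ)) | mξ]) x
      = (μ[(w ⁻¹' {b}).indicator (fun _ => (1 : ℝ)) | mξ]) x *
        (μ[V.indicator (fun _ => (1 : ℝ)) | mη]) x := by
  set B := w ⁻¹' {b} with hB
  have hξη : mξ ≤ mη := by
    rw [hmξ, hmη]
    rintro _ ⟨t, ht, rfl⟩
    exact ⟨Prod.fst ⁻¹' t, measurable_fst ht, rfl⟩
  have hηX : mη ≤ mX := hmη ▸ (hζ.prodMk hw).comap_le
  have hBη : MeasurableSet[mη] B :=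
    hmη ▸ ⟨Prod.snd ⁻¹' {b}, measurable_snd (measurableSet_singleton b), rfl⟩
  have hBX : MeasurableSet B := hηX B hBη
  have hVi : Integrable (V.indicator fun _ => (1 : ℝ)) μ := (integrable_const 1).indicator hV
  have hBi : Integrable (B.indicator fun _ => (1 : ℝ)) μ := (integrable_const 1).indicator hBX
  obtain ⟨φ, hφ, hφe⟩ : ∃ φ : Z × W → ℝ, StronglyMeasurable φ ∧
      μ[V.indicator fun _ => (1 : ℝ) | mη] = φ ∘ fun x => (ζ x, w x) := by
    subst hmη
    exact stronglyMeasurable_condExp.exists_eq_measurable_comp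
  -- on `w = b`, the conditional probability of `V` is the `ζ`-measurable function `g`
  set g : X → ℝ := fun x => φ (ζ x, b) with hg
  have hgm : StronglyMeasurable[mξ] g := hmξ ▸
    (hφ.comp_measurable (measurable_id.prodMk measurable_const)).comp_measurable
      (comap_measurable ζ)
  have hprod : (B ∩ V).indicator (fun _ => (1 : ℝ))
      = (B.indicator fun _ => (1 : ℝ)) * V.indicator fun _ => (1 : ℝ) := by
    ext x
    by_cases h1 : x ∈ B <;> by_cases h2 : x ∈ V <;> simp [h1, h2]
  have hgB : g * (B.indicator fun _ => (1 : ℝ))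
      = (B.indicator fun _ => (1 : ℝ)) * μ[V.indicator fun _ => (1 : ℝ) | mη] := by
    ext x
    by_cases h1 : x ∈ B
    · have : w x = b := h1
      rw [hφe]
      simp [h1, hg, ← this]
    · simp [h1]
  have hBVi : Integrable ((B.indicator fun _ => (1 : ℝ)) * V.indicator fun _ => (1 : ℝ)) μ := by
    rw [← hprod]
    exact (integrable_const 1).indicator (hBX.inter hV)
  have hBsm : StronglyMeasurable[mη] (B.indicator fun _ => (1 : ℝ)) :=
    stronglyMeasurable_const.indicator hBη
  have hgBi : Integrable (g * (B.indicator fun _ => (1 : ℝ))) μ := by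
    rw [hgB]
    have : (B.indicator fun _ => (1 : ℝ)) * μ[V.indicator fun _ => (1 : ℝ) | mη]
        = B.indicator (μ[V.indicator fun _ => (1 : ℝ) | mη]) := by
      ext x; by_cases h1 : x ∈ B <;> simp [h1]
    rw [this]
    exact integrable_condExp.indicator hBX
  have e1 : μ[(B ∩ V).indicator (fun _ => (1 : ℝ)) | mη]
      =ᵐ[μ] g * (B.indicator fun _ => (1 : ℝ)) := by
    rw [hprod, hgB]
    exact condExp_mul_of_stronglyMeasurable_left hBsm hBVi hVi
  have e2 : μ[(B ∩ V).indicator (fun _ => (1 : ℝ)) | mξ]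
      =ᵐ[μ] g * μ[B.indicator fun _ => (1 : ℝ) | mξ] :=
    ((condExp_condExp_of_le hξη hηX).symm.trans (condExp_congr_ae e1)).trans
      (condExp_mul_of_stronglyMeasurable_left hgm hgBi hBi)
  filter_upwards [e2] with x hx hxb
  rw [hx, hφe, Pi.mul_apply, mul_comm]
  simp [hg, hxb]

/-! ### The chain rule -/

lemma invSigma_eq [TopologicalSpace X] [MeasurableSpace X] (T : X ≃ₜ X) :
    invSigma T = MeasurableSpace.invariants ⇑T := rfl

/-- The σ-algebra of the partition `γₙ`, generated by the single map
`x ↦ ((P (T⁻ᵏ⁻¹ x))ₖ, ζ (T⁻ⁿ x))`. -/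
lemma gammaHat_eq [TopologicalSpace X] {mX : MeasurableSpace X} (μ : Measure X) (T : X ≃ₜ X)
    (ζ : X → ℕ → Bool) {A : Type*} [MeasurableSpace A] (P : X → A) (n : ℕ) :
    gammaHat μ T ζ P n = MeasurableSpace.comap
      (fun x => (fun k : ℕ => P ((⇑T.symm)^[k + 1] x), ζ ((⇑T.symm)^[n] x))) inferInstance := by
  rw [gammaHat, hatIn_eq]
  exact (MeasurableSpace.comap_prodMk _ _).symm

lemma symm_iterate_iterate [TopologicalSpace X] (T : X ≃ₜ X) {m n : ℕ} (h : m ≤ n) (x : X) :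
    (⇑T.symm)^[m] ((⇑T)^[n] x) = (⇑T)^[n - m] x := by
  obtain ⟨k, rfl⟩ := Nat.exists_eq_add_of_le h
  rw [Function.iterate_add_apply, Nat.add_sub_cancel_left]
  exact (Function.LeftInverse.iterate T.symm_apply_apply m) _

lemma symm_iterate_iterate' [TopologicalSpace X] (T : X ≃ₜ X) {m n : ℕ} (h : n ≤ m) (x : X) :
    (⇑T.symm)^[m] ((⇑T)^[n] x) = (⇑T.symm)^[m - n] x := by
  obtain ⟨k, rfl⟩ := Nat.exists_eq_add_of_le h
  rw [Nat.add_comm, Function.iterate_add_apply, Nat.add_sub_cancel,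
    (Function.LeftInverse.iterate T.symm_apply_apply n) x]

lemma measurable_gammaMap [TopologicalSpace X] [MeasurableSpace X] [BorelSpace X] (T : X ≃ₜ X)
    {ζ : X → ℕ → Bool} (hζ : Measurable ζ) {A : Type*} [MeasurableSpace A] {P : X → A}
    (hP : Measurable P) (n : ℕ) :
    Measurable fun x => (fun k : ℕ => P ((⇑T.symm)^[k + 1] x), ζ ((⇑T.symm)^[n] x)) :=
  (measurable_pi_lambda _ fun _ => hP.comp (T.symm.continuous.iterate _).measurable).prodMk
    (hζ.comp (T.symm.continuous.iterate _).measurable)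

lemma gammaHat_le [TopologicalSpace X] [MeasurableSpace X] [BorelSpace X] {T : X ≃ₜ X}
    {μ : Measure X} {ζ : X → ℕ → Bool} (hζ : Measurable ζ) {A : Type*} [MeasurableSpace A]
    {P : X → A} (hP : Measurable P) (n : ℕ) :
    gammaHat μ T ζ P n ≤ ‹MeasurableSpace X› := by
  rw [gammaHat_eq]
  exact (measurable_gammaMap T hζ hP n).comap_le

section Chain

variable [MetricSpace X] [CompactSpace X] [MeasurableSpace X] [BorelSpace X]
  {T : X ≃ₜ X} {μ : Measure X} {ζ : X → ℕ → Bool}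
  {A : Type*} [Fintype A] [MeasurableSpace A] [MeasurableSingletonClass A] {P : X → A}

lemma antitone_gammaHat (hζ : Measurable ζ) (hP : Measurable P)
    (hTxi : ∀ x y, ζ x = ζ y → ζ (T.symm x) = ζ (T.symm y)) :
    Antitone fun n => gammaHat μ T ζ P n := by
  refine antitone_nat_of_succ_le fun n => ?_
  rw [gammaHat_eq, gammaHat_eq]
  refine comap_le_comap_of_factors (measurable_gammaMap T hζ hP _) (measurable_gammaMap T hζ hP _)
    fun x y h => ?_
  simp only [Prod.mk.injEq] at h ⊢
  refine ⟨h.1, ?_⟩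
  rw [Function.iterate_succ_apply', Function.iterate_succ_apply']
  exact hTxi _ _ h.2

/-- `T⁻ᴺ γ_N` is the partition `ξ ∨ α ∨ T⁻¹α ∨ ⋯ ∨ T⁻ᴺ⁺¹α`. -/
lemma comap_gammaHat (hζ : Measurable ζ) (hP : Measurable P)
    (halpha : ∀ x y, ζ x = ζ y → ∀ k : ℕ, 1 ≤ k → P ((⇑T.symm)^[k] x) = P ((⇑T.symm)^[k] y))
    (N : ℕ) :
    (gammaHat μ T ζ P N).comap (⇑T)^[N] = MeasurableSpace.comap
      (fun x => (ζ x, fun i : Fin N => P ((⇑T)^[(i : ℕ)] x))) inferInstance := by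
  have hTN : ∀ n, Measurable (⇑T)^[n] := fun n => (T.continuous.iterate n).measurable
  have hm1 := (measurable_gammaMap T hζ hP N).comp (hTN N)
  have hm2 : Measurable fun x => (ζ x, fun i : Fin N => P ((⇑T)^[(i : ℕ)] x)) :=
    hζ.prodMk (measurable_pi_lambda _ fun i => hP.comp (hTN i))
  rw [gammaHat_eq, MeasurableSpace.comap_comp]
  refine le_antisymm (comap_le_comap_of_factors hm1 hm2 fun x y h => ?_)
    (comap_le_comap_of_factors hm2 hm1 fun x y h => ?_)
  · simp only [Prod.mk.injEq, funext_iff, Function.comp_apply] at h ⊢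
    have hz : ζ x = ζ y := funext h.1
    refine ⟨fun k => ?_, ?_⟩
    · rcases Nat.lt_or_ge k N with hk | hk
      · rw [symm_iterate_iterate T hk, symm_iterate_iterate T hk]
        exact h.2 ⟨N - (k + 1), by omega⟩
      · rw [symm_iterate_iterate' T (by omega), symm_iterate_iterate' T (by omega)]
        exact halpha _ _ hz _ (by omega)
    · rw [symm_iterate_iterate T le_rfl, symm_iterate_iterate T le_rfl]
      simpa using h.1
  · simp only [Prod.mk.injEq, funext_iff, Function.comp_apply] at h ⊢
    refine ⟨?_, fun i => ?_⟩
    · have := h.2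
      rw [symm_iterate_iterate T le_rfl, symm_iterate_iterate T le_rfl] at this
      simpa using this
    · have := h.1 (N - 1 - i)
      rw [symm_iterate_iterate T (by omega), symm_iterate_iterate T (by omega)] at this
      have hi : N - (N - 1 - (i : ℕ) + 1) = i := by omega
      rwa [hi] at this

/-- One step of the chain rule: `I(α₀ᴺ ∣ ξ) = I(α₀ᴺ⁻¹ ∣ ξ) + I(α ∣ γ_N) ∘ Tᴺ`, where
`α₀ᴺ = ⋁_{i ≤ N} T⁻ⁱα`. The last term is the information of `T⁻ᴺα` given `ξ ∨ α₀ᴺ⁻¹ = T⁻ᴺγ_N`, so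
that this is Bayes' rule. -/
lemma condInfo_chain_step [IsProbabilityMeasure μ] (hT : MeasurePreserving (⇑T) μ μ)
    (hζ : Measurable ζ) (hP : Measurable P)
    (halpha : ∀ x y, ζ x = ζ y → ∀ k : ℕ, 1 ≤ k → P ((⇑T.symm)^[k] x) = P ((⇑T.symm)^[k] y))
    (N : ℕ) :
    ∀ᵐ x ∂μ, condInfo μ (xiHat μ ζ) (fun y (i : Fin (N + 1)) => P ((⇑T)^[(i : ℕ)] y)) x
      = condInfo μ (xiHat μ ζ) (fun y (i : Fin N) => P ((⇑T)^[(i : ℕ)] y)) x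
        + condInfo μ (gammaHat μ T ζ P N) P ((⇑T)^[N] x) := by
  have hTN : ∀ n, Measurable (⇑T)^[n] := fun n => (T.continuous.iterate n).measurable
  have hξ : xiHat μ ζ = MeasurableSpace.comap ζ inferInstance := hatIn_eq μ
  have hξle : xiHat μ ζ ≤ ‹MeasurableSpace X› := hξ ▸ hζ.comap_le
  set w : X → Fin N → A := fun y i => P ((⇑T)^[(i : ℕ)] y) with hw
  have hwm : Measurable w := measurable_pi_lambda _ fun i => hP.comp (hTN i)
  have hV : ∀ a, MeasurableSet ((⇑T)^[N] ⁻¹' (P ⁻¹' {a})) := fun a =>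
    hTN N (hP (measurableSet_singleton a))
  have h1 := fun a b => condExp_inter_eq_mul (μ := μ) hζ hwm hξ
    (comap_gammaHat (μ := μ) hζ hP halpha N) b (hV a)
  have h2 := fun a => condExp_comp_comap (hT.iterate N) (gammaHat_le (μ := μ) (T := T) hζ hP N)
    (f := (P ⁻¹' {a}).indicator fun _ => (1 : ℝ))
    ((integrable_const 1).indicator (hP (measurableSet_singleton a)))
  have h3 := fun a b => condExp_indicator_pos (μ := μ) hξle
    ((hwm (measurableSet_singleton b)).inter (hV a))
  have h1' := ae_all_iff.2 fun a => ae_all_iff.2 (h1 a)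
  have h2' := ae_all_iff.2 h2
  have h3' := ae_all_iff.2 fun a => ae_all_iff.2 (h3 a)
  filter_upwards [h1', h2', h3'] with x e1 e2 e3
  have e1 := e1 (P ((⇑T)^[N] x)) (w x) rfl
  have e2 := e2 (P ((⇑T)^[N] x))
  have e3 := e3 (P ((⇑T)^[N] x)) (w x) ⟨rfl, rfl⟩
  have hset : (fun y (i : Fin (N + 1)) => P ((⇑T)^[(i : ℕ)] y)) ⁻¹'
      {fun i : Fin (N + 1) => P ((⇑T)^[(i : ℕ)] x)}
      = w ⁻¹' {w x} ∩ (⇑T)^[N] ⁻¹' (P ⁻¹' {P ((⇑T)^[N] x)}) := by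
    ext y
    simp [hw, funext_iff, Fin.forall_fin_succ']
  rw [condInfo_apply, condInfo_apply, condInfo_apply, hset, e2]
  rw [e1] at e3 ⊢
  rw [Real.log_mul (left_ne_zero_of_mul e3.ne') (right_ne_zero_of_mul e3.ne'), neg_add]
  rfl

/-- The chain rule for the information function:
`I(⋁_{i < N} T⁻ⁱα ∣ ξ) = ∑_{i < N} I(α ∣ γᵢ) ∘ Tⁱ` almost everywhere. -/
lemma condInfo_chain [IsProbabilityMeasure μ] (hT : MeasurePreserving (⇑T) μ μ)
    (hζ : Measurable ζ) (hP : Measurable P)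
    (halpha : ∀ x y, ζ x = ζ y → ∀ k : ℕ, 1 ≤ k → P ((⇑T.symm)^[k] x) = P ((⇑T.symm)^[k] y)) :
    ∀ᵐ x ∂μ, ∀ N : ℕ, condInfo μ (xiHat μ ζ) (fun y (i : Fin N) => P ((⇑T)^[(i : ℕ)] y)) x
      = ∑ i ∈ Finset.range N, condInfo μ (gammaHat μ T ζ P i) P ((⇑T)^[i] x) := by
  have hξle : xiHat μ ζ ≤ ‹MeasurableSpace X› := (hatIn_eq μ).trans_le hζ.comap_le
  filter_upwards [ae_all_iff.2 (condInfo_chain_step hT hζ hP halpha)] with x hx N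
  induction N with
  | zero =>
    have : (fun y (i : Fin 0) => P ((⇑T)^[(i : ℕ)] y)) ⁻¹'
        {fun i : Fin 0 => P ((⇑T)^[(i : ℕ)] x)} = univ := by
      ext y; simp [funext_iff]
    rw [condInfo_apply, this, indicator_univ, condExp_const hξle]
    simp
  | succ N ih => rw [hx N, ih, Finset.sum_range_succ]

end Chain

/-! ### The local Shannon–McMillan–Breiman theorem -/

/-- the local Shannon–McMillan–Breiman theorem.  If `Tξ ≺ ξ` and
`α⁻ ≺ ξ`, then `(1/N) I_μ(⋁_{i=0}^{N-1} T⁻ⁱα ∣ ξ̂)` converges `μ`-a.e. and in `L¹(μ)`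
to `𝔼_μ(I_μ(α ∣ ℱ) ∣ ℰ_T)`. -/
theorem stmt0 [MetricSpace X] [CompactSpace X] [MeasurableSpace X] [BorelSpace X]
    (T : X ≃ₜ X) (μ : Measure X) [IsProbabilityMeasure μ]
    (hT : MeasurePreserving (⇑T) μ μ)
    (ζ : X → ℕ → Bool) (hζ : Measurable ζ)
    {A : Type*} [Fintype A] [MeasurableSpace A] [MeasurableSingletonClass A]
    (P : X → A) (hP : Measurable P)
    -- `Tξ ≺ ξ`: the partition `ξ` refines its image under `T`
    (hTxi : ∀ x y, ζ x = ζ y → ζ (T.symm x) = ζ (T.symm y))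
    -- `α⁻ ≺ ξ`: `ξ` refines `⋁_{k ≥ 1} Tᵏα`
    (halpha : ∀ x y, ζ x = ζ y → ∀ k : ℕ, 1 ≤ k → P ((⇑T.symm)^[k] x) = P ((⇑T.symm)^[k] y)) :
    (∀ᵐ x ∂μ, Tendsto
      (fun N : ℕ =>
        condInfo μ (xiHat μ ζ) (fun y (i : Fin N) => P ((⇑T)^[(i : ℕ)] y)) x / (N : ℝ))
      atTop (𝓝 ((μ[condInfo μ (scrF μ T ζ P) P | invSigma T]) x))) ∧
    Tendsto (fun N : ℕ => ∫ x,
        |condInfo μ (xiHat μ ζ) (fun y (i : Fin N) => P ((⇑T)^[(i : ℕ)] y)) x / (N : ℝ) -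
          (μ[condInfo μ (scrF μ T ζ P) P | invSigma T]) x| ∂μ)
      atTop (𝓝 0) := by
  set G : ℕ → MeasurableSpace X := fun n => gammaHat μ T ζ P n with hGdef
  have hle : ∀ n, G n ≤ ‹MeasurableSpace X› := gammaHat_le hζ hP
  have hanti : Antitone G := antitone_gammaHat hζ hP hTxi
  have hfm : ∀ n, Measurable (condInfo μ (G n) P) := fun n => measurable_condInfo μ (hle n) hP
  have hf0 : ∀ n, 0 ≤ᵐ[μ] condInfo μ (G n) P := fun n => condInfo_nonneg (G n) μ P
  have hflm : Measurable (condInfo μ (scrF μ T ζ P) P) :=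
    measurable_condInfo μ ((iInf_le _ 0).trans (hle 0)) hP
  -- domination by an integrable `F` is what makes the ergodic theorem along `I(α ∣ γₙ)` available
  obtain ⟨F, hF, hfF⟩ := exists_integrable_majorant hfm (ENNReal.natCast_ne_top (Fintype.card A))
    (measure_exists_lt_condInfo hanti hle hP)
  have hfF' : ∀ n, ∀ᵐ x ∂μ, |condInfo μ (G n) P x| ≤ F x := fun n => by
    filter_upwards [hfF n, hf0 n] with x h1 h2
    rwa [abs_of_nonneg h2]
  have hlim : ∀ᵐ x ∂μ, Tendsto (fun n => condInfo μ (G n) P x) atTop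
      (𝓝 (condInfo μ (scrF μ T ζ P) P x)) := tendsto_condInfo hanti hle hP
  have hchain := condInfo_chain hT hζ hP halpha
  rw [invSigma_eq]
  constructor
  · filter_upwards [hchain, (breiman_ae hT hfm hflm hF hfF' hlim).2] with x hx hx'
    simpa only [hx] using hx'
  · refine (breiman_L1 hT hfm hflm hF hfF' hf0 hlim).congr fun N => integral_congr_ae ?_
    filter_upwards [hchain] with x hx
    rw [hx N]
end

section
/- Let $(X,T)$ be a topological dynamical system with $T$-invariant Borel probability measure $\mu$. Let $\phi_n^m \ge 0$ ($m,n\ge 1$) be measurable functions on $X$ with $\phi_1^1 \in L^1(\mu)$, such that for each $m$ the sequence $(\phi_n^m)_n$ is subadditive with respect to $T$ (i.e. $\phi_{k+n}^m \le \phi_k^m + \phi_n^m\circ T^k$ for all $k,n$), and for each $n$ the sequence $(\phi_n^m)_m$ is decreasing in $m$. Then both iterated limits $\lim_{m\to\infty}\lim_{n\to\infty}\frac{1}{n}\phi_n^m$ and $\lim_{n\to\infty}\lim_{m\to\infty}\frac{1}{n}\phi_n^m$ exist $\mu$-a.e. and in $L^1(\mu)$, and they are equal $\mu$-a.e. -/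
open MeasureTheory Filter Set Topology

open scoped ENNReal

/-!
The core is Kingman's theorem for a nonnegative subadditive sequence `f` (`kingman_nonneg`),
including the value of the limit: `∫ lim f n / n = lim (∫ f n) / n = inf (∫ f n) / n`.

It is proved by a covering argument in the style of Katznelson and Weiss. Suppose `w` does not
decrease along orbits and almost every point `x` has a time `j` with `f j x ≤ j * w x`. Cutting
an orbit segment greedily into such good pieces bounds `f n` by a Birkhoff sum of `w` up to small
errors, so that `inf (∫ f n) / n ≤ ∫ w` (`le_integral_of_cover`). This is used twice.
* With `w = liminf f n / n + ε` it gives `inf (∫ f n) / n ≤ ∫ liminf f n / n`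
  (`le_lintegral_liminf_subadd`).
* With the additive sequence of minus the Birkhoff sums of `g ≥ 0`, and `w` equal to `ε` minus a
  truncation of the limsup of the Birkhoff averages, it shows that this limsup has integral at most
  `∫ g` (`lintegral_limsup_birkhoff_le`). Applied to `T^[k]` and `f k / k`, after splitting
  `[0, n)` into blocks of length `k`, this yields `∫ limsup f n / n ≤ (∫ f k) / k`
  (`lintegral_limsup_subadd_le`).

Hence the liminf and the limsup have the same finite integral and agree almost everywhere, and
convergence in `L¹` follows as in Scheffé's lemma.

For the two iterated limits put `h n = inf_m φ m n`, which is again subadditive. Let `g m`, `Ψ` be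
the Kingman limits of `φ m` and `h`, and let `ψ = lim g m`. Since `h n ≤ φ m n`, `Ψ ≤ ψ` almost
everywhere. Conversely `∫ ψ ≤ ∫ g m ≤ (∫ φ m n) / n`; letting first `m` and then `n` tend to
infinity gives `∫ ψ ≤ ∫ Ψ`, whence `ψ = Ψ` almost everywhere.
-/

/-! ### The covering argument -/

lemma subadd_le_sum {X : Type*} {T : X → X} {f : ℕ → X → ℝ}
    (hsub : ∀ k n, 1 ≤ k → 1 ≤ n → ∀ x, f (k + n) x ≤ f k x + f n (T^[k] x))
    (n : ℕ) (hn : 1 ≤ n) : ∀ x, f n x ≤ ∑ i ∈ Finset.range n, f 1 (T^[i] x) := by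
  induction n, hn using Nat.le_induction with
  | base => intro x; simp
  | succ n hn ih =>
    intro x
    rw [Finset.sum_range_succ]
    exact (hsub n 1 hn le_rfl x).trans (by gcongr; exact ih x)

/-- If every point of the forward invariant set `G` starts a piece of length `j ≤ k` on which `f j`
is bounded by the Birkhoff sum of `ψ`, then `f n` is bounded by the Birkhoff sum of `ψ` plus an error
`b` collected only at the last `k` times, where the greedy decomposition may run out of room. -/
lemma subadd_le_of_cover {X : Type*} {T : X → X} {G : Set X} (hG : ∀ x ∈ G, T x ∈ G)
    {f : ℕ → X → ℝ}
    (hsub : ∀ k n, 1 ≤ k → 1 ≤ n → ∀ x, f (k + n) x ≤ f k x + f n (T^[k] x))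
    {ψ b : X → ℝ} (hb : ∀ x, 0 ≤ b x) (h1 : ∀ x, f 1 x ≤ ψ x + b x) {k : ℕ}
    (hk : ∀ x ∈ G, ∃ j, 1 ≤ j ∧ j ≤ k ∧ f j x ≤ ∑ i ∈ Finset.range j, ψ (T^[i] x))
    (n : ℕ) : 1 ≤ n → ∀ x ∈ G, f n x ≤ ∑ i ∈ Finset.range n, ψ (T^[i] x)
      + ∑ i ∈ Finset.Ico (n - k) n, b (T^[i] x) := by
  induction n using Nat.strong_induction_on with
  | _ n ih =>
    intro hn x hx
    rcases le_or_gt n k with hnk | hnk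
    · rw [Nat.sub_eq_zero_of_le hnk, ← Finset.range_eq_Ico, ← Finset.sum_add_distrib]
      exact (subadd_le_sum hsub n hn x).trans (Finset.sum_le_sum fun i _ => h1 _)
    · obtain ⟨j, hj1, hjk, hj⟩ := hk x hx
      obtain ⟨p, rfl⟩ : ∃ p, n = j + p := ⟨n - j, by omega⟩
      have hGj : T^[j] x ∈ G := by
        clear hj hj1 hjk hnk ih hn
        induction j with
        | zero => exact hx
        | succ j ihj => rw [Function.iterate_succ_apply']; exact hG _ ihj
      have h := ih p (by omega) (by omega) _ hGj
      simp only [← Function.iterate_add_apply] at h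
      rw [Finset.sum_Ico_add' (fun i => b (T^[i] x))] at h
      have h2 : ∑ i ∈ Finset.Ico (p - k + j) (p + j), b (T^[i] x)
          ≤ ∑ i ∈ Finset.Ico (j + p - k) (j + p), b (T^[i] x) :=
        Finset.sum_le_sum_of_subset_of_nonneg
          (fun i hi => by simp only [Finset.mem_Ico] at hi ⊢; omega) (fun i _ _ => hb _)
      have h3 := hsub j p hj1 (by omega) x
      rw [Finset.sum_range_add]
      simp only [add_comm j] at h3 h2 ⊢
      linarith

lemma integral_sum_comp {X : Type*} [MeasurableSpace X] {μ : Measure X} {T : X → X}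
    (hT : MeasurePreserving T μ μ) {u : X → ℝ} (hu : Integrable u μ) (s : Finset ℕ) :
    Integrable (fun x => ∑ i ∈ s, u (T^[i] x)) μ ∧
      ∫ x, ∑ i ∈ s, u (T^[i] x) ∂μ = s.card * ∫ x, u x ∂μ := by
  have h : ∀ i, Integrable (fun x => u (T^[i] x)) μ := fun i =>
    (hT.iterate i).integrable_comp_of_integrable hu
  have h2 : ∀ i, ∫ x, u (T^[i] x) ∂μ = ∫ x, u x ∂μ := fun i => by
    have := (hT.iterate i).map_eq
    conv_rhs => rw [← this]
    rw [integral_map (hT.iterate i).aemeasurable]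
    rw [this]; exact hu.aestronglyMeasurable
  refine ⟨integrable_finsetSum _ fun i _ => h i, ?_⟩
  rw [integral_finsetSum _ fun i _ => h i]
  simp [h2]

/-- If `w` does not decrease along orbits and almost every `x` satisfies `f j x ≤ j * w x` for some
`j ≥ 1`, then any lower bound `c` of the means `(∫ f n) / n` is at most `∫ w`. The functions `f n`
may take both signs. -/
lemma le_integral_of_cover {X : Type*} [MeasurableSpace X] {μ : Measure X}
    {T : X → X} (hT : MeasurePreserving T μ μ)
    {f : ℕ → X → ℝ} (hm : ∀ n, Measurable (f n)) (hf : ∀ n, 1 ≤ n → Integrable (f n) μ)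
    (hsub : ∀ k n, 1 ≤ k → 1 ≤ n → ∀ x, f (k + n) x ≤ f k x + f n (T^[k] x))
    {w : X → ℝ} (hwm : Measurable w) (hw : Integrable w μ) (hwT : ∀ᵐ x ∂μ, w x ≤ w (T x))
    (hcov : ∀ᵐ x ∂μ, ∃ j, 1 ≤ j ∧ f j x ≤ j * w x)
    {c : ℝ} (hc : ∀ n : ℕ, 1 ≤ n → n * c ≤ ∫ x, f n x ∂μ) : c ≤ ∫ x, w x ∂μ := by
  classical
  -- `E k` is the set of points whose good time is at most `k`. Off `E k` one uses `f 1` itself as the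
  -- bound for a piece of length one.
  let E : ℕ → Set X := fun k => {x | ∃ j, 1 ≤ j ∧ j ≤ k ∧ f j x ≤ j * w x}
  have hE : ∀ k, MeasurableSet (E k) := by
    intro k
    have : E k = ⋃ j ∈ Finset.Icc 1 k, {x | f j x ≤ j * w x} := by
      ext x; simp [E, and_assoc]
    rw [this]
    exact Finset.measurableSet_biUnion _ fun j _ =>
      measurableSet_le (hm j) (hwm.const_mul _)
  let ψ : ℕ → X → ℝ := fun k => (E k).piecewise w (f 1)
  let b : X → ℝ := fun x => |w x| + |f 1 x|
  have hbi : Integrable b μ := hw.abs.add (hf 1 le_rfl).abs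
  have hψb : ∀ k x, |ψ k x| ≤ b x := by
    intro k x
    by_cases hx : x ∈ E k <;> simp [ψ, b, hx]
  have hψm : ∀ k, Measurable (ψ k) := fun k => hwm.piecewise (hE k) (hm 1)
  have hψi : ∀ k, Integrable (ψ k) μ := fun k =>
    hbi.mono' (hψm k).aestronglyMeasurable (Eventually.of_forall (hψb k))
  have hlim : Tendsto (fun k => ∫ x, ψ k x ∂μ) atTop (𝓝 (∫ x, w x ∂μ)) := by
    refine tendsto_integral_of_dominated_convergence b
      (fun k => (hψm k).aestronglyMeasurable) hbi
      (fun k => Eventually.of_forall (hψb k)) ?_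
    filter_upwards [hcov] with x ⟨j, hj1, hj⟩
    refine tendsto_const_nhds.congr' ?_
    filter_upwards [eventually_ge_atTop j] with k hk
    have : x ∈ E k := ⟨j, hj1, hk, hj⟩
    simp [ψ, this]
  refine ge_of_tendsto hlim ?_
  filter_upwards [eventually_ge_atTop 1] with k hk
  have hwψ : ∀ x, w x ≤ ψ k x := by
    intro x
    by_cases hx : x ∈ E k
    · simp [ψ, hx]
    · have : ¬ (f 1 x ≤ w x) := fun h => hx ⟨1, le_rfl, hk, by simpa using h⟩
      simpa [ψ, hx] using (not_le.1 this).le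
  -- Only points along whose whole orbit `w` is nondecreasing can be used in the covering.
  let G : Set X := {x | ∀ i, w (T^[i] x) ≤ w (T (T^[i] x))}
  have hGae : ∀ᵐ x ∂μ, x ∈ G := by
    rw [show (∀ᵐ x ∂μ, x ∈ G) ↔ ∀ᵐ x ∂μ, ∀ i, w (T^[i] x) ≤ w (T (T^[i] x)) from Iff.rfl,
      ae_all_iff]
    exact fun i => (hT.iterate i).quasiMeasurePreserving.ae hwT
  have hG : ∀ x ∈ G, T x ∈ G := fun x hx i => by
    simpa only [← Function.iterate_succ_apply] using hx (i + 1)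
  have key := subadd_le_of_cover hG hsub (ψ := ψ k) (b := b) (fun x => by positivity)
    (fun x => by
      have h1 := neg_abs_le (w x)
      have h2 := le_abs_self (f 1 x)
      have h3 := abs_nonneg (f 1 x)
      have h4 := abs_nonneg (w x)
      by_cases hx : x ∈ E k <;> simp only [ψ, b, hx, not_false_eq_true,
        Set.piecewise_eq_of_mem, Set.piecewise_eq_of_notMem] <;> linarith) (k := k)
    (fun x hx => by
      by_cases hxE : x ∈ E k
      · obtain ⟨j, hj1, hjk, hj⟩ := hxE
        refine ⟨j, hj1, hjk, hj.trans ?_⟩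
        have : ∀ i, w x ≤ w (T^[i] x) := by
          intro i
          induction i with
          | zero => simp
          | succ i ih => rw [Function.iterate_succ_apply']; exact ih.trans (hx i)
        calc (j : ℝ) * w x = ∑ i ∈ Finset.range j, w x := by simp
          _ ≤ _ := Finset.sum_le_sum fun i _ => (this i).trans (hwψ _)
      · exact ⟨1, le_rfl, hk, by simp [ψ, hxE]⟩)
  have hB : 0 ≤ ∫ x, b x ∂μ := integral_nonneg fun x => by positivity
  have hn : ∀ n : ℕ, 1 ≤ n → n * c ≤ n * ∫ x, ψ k x ∂μ + k * ∫ x, b x ∂μ := by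
    intro n hn
    refine (hc n hn).trans ?_
    have h1 := integral_sum_comp hT (hψi k) (Finset.range n)
    have h2 := integral_sum_comp hT hbi (Finset.Ico (n - k) n)
    calc ∫ x, f n x ∂μ ≤ ∫ x, ((∑ i ∈ Finset.range n, ψ k (T^[i] x))
          + ∑ i ∈ Finset.Ico (n - k) n, b (T^[i] x)) ∂μ :=
          integral_mono_ae (hf n hn) (h1.1.add h2.1) (hGae.mono fun x hx => key n hn x hx)
      _ ≤ _ := by
        rw [integral_add h1.1 h2.1, h1.2, h2.2, Finset.card_range, Nat.card_Ico]
        have : ((n - (n - k) : ℕ) : ℝ) ≤ k := by exact_mod_cast (by omega)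
        gcongr
  -- The boundary error in `hn` is bounded in `n`, so it disappears after dividing by `n`.
  by_contra! hlt
  obtain ⟨n, hn'⟩ := exists_nat_gt ((k * ∫ x, b x ∂μ) / (c - ∫ x, ψ k x ∂μ))
  have hpos : 0 < c - ∫ x, ψ k x ∂μ := sub_pos.2 hlt
  have h0 : (0 : ℝ) ≤ (k * ∫ x, b x ∂μ) / (c - ∫ x, ψ k x ∂μ) := by positivity
  have hn1 : 1 ≤ n := by
    have : (0 : ℝ) < n := h0.trans_lt hn'
    exact_mod_cast this
  rw [div_lt_iff₀ hpos] at hn'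
  have := hn n hn1
  linarith

/-! ### Upper and lower averages along orbits -/

lemma liminf_le_liminf_comp {X : Type*} {T : X → X} {f : ℕ → X → ℝ}
    (hpos : ∀ n x, 0 ≤ f n x)
    (hsub : ∀ k n, 1 ≤ k → 1 ≤ n → ∀ x, f (k + n) x ≤ f k x + f n (T^[k] x)) (x : X) :
    liminf (fun n : ℕ => ENNReal.ofReal (f n x / n)) atTop
      ≤ liminf (fun n : ℕ => ENNReal.ofReal (f n (T x) / n)) atTop := by
  have h0 : Tendsto (fun n : ℕ => ENNReal.ofReal (f 1 x / (n + 1))) atTop (𝓝 0) := by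
    rw [← ENNReal.ofReal_zero]
    refine ENNReal.tendsto_ofReal ?_
    simpa [div_eq_mul_inv] using (tendsto_one_div_add_atTop_nhds_zero_nat (𝕜 := ℝ)).const_mul (f 1 x)
  rw [← liminf_nat_add _ 1]
  rw [
    ← ENNReal.liminf_add_of_right_tendsto_zero h0 fun n : ℕ => ENNReal.ofReal (f n (T x) / n)]
  refine liminf_le_liminf ?_
  filter_upwards [eventually_ge_atTop 1] with n hn
  have hn' : (0 : ℝ) < n := by exact_mod_cast hn
  have key : f (n + 1) x / ((n + 1 : ℕ) : ℝ) ≤ f n (T x) / n + f 1 x / (n + 1) := by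
    have h := hsub 1 n le_rfl hn x
    rw [add_comm 1 n] at h
    have h3 : f n (T x) / (n + 1) ≤ f n (T x) / n :=
      div_le_div_of_nonneg_left (hpos _ _) hn' (by linarith)
    have h4 : f (n + 1) x / ((n : ℝ) + 1) ≤ (f 1 x + f n (T x)) / (n + 1) := by
      gcongr; exact h
    push_cast
    rw [add_div] at h4
    linarith
  exact (ENNReal.ofReal_le_ofReal key).trans ENNReal.ofReal_add_le

lemma limsup_birkhoff_comp_le {X : Type*} {S : X → X} {g : X → ℝ} (hg : ∀ x, 0 ≤ g x) (x : X) :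
    limsup (fun n : ℕ => ENNReal.ofReal ((∑ i ∈ Finset.range n, g (S^[i] (S x))) / n)) atTop
      ≤ limsup (fun n : ℕ => ENNReal.ofReal ((∑ i ∈ Finset.range n, g (S^[i] x)) / n)) atTop := by
  rw [← limsup_nat_add (fun n : ℕ => ENNReal.ofReal ((∑ i ∈ Finset.range n, g (S^[i] x)) / n)) 1]
  have h1 : Tendsto (fun n : ℕ => ENNReal.ofReal ((n + 1) / n)) atTop (𝓝 1) := by
    rw [← ENNReal.ofReal_one]
    refine ENNReal.tendsto_ofReal ?_
    have : Tendsto (fun n : ℕ => 1 + 1 / (n : ℝ)) atTop (𝓝 (1 + 0)) :=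
      tendsto_const_nhds.add tendsto_one_div_atTop_nhds_zero_nat
    rw [add_zero] at this
    refine this.congr' ?_
    filter_upwards [eventually_ge_atTop 1] with n hn
    have hn' : (0 : ℝ) < n := by exact_mod_cast hn
    field_simp
  have h2 := h1.limsup_eq
  refine le_trans ?_ ((ENNReal.limsup_mul_le'
    (u := fun n : ℕ => ENNReal.ofReal ((n + 1) / n)) (f := atTop)
    (v := fun n : ℕ => ENNReal.ofReal ((∑ i ∈ Finset.range (n + 1), g (S^[i] x)) / (n + 1 : ℕ)))
    (by simp [h2]) (by simp [h2])).trans (by rw [h2, one_mul]))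
  refine limsup_le_limsup ?_
  filter_upwards [eventually_ge_atTop 1] with n hn
  have hn' : (0 : ℝ) < n := by exact_mod_cast hn
  simp only [Pi.mul_apply]
  rw [← ENNReal.ofReal_mul (by positivity)]
  refine ENNReal.ofReal_le_ofReal ?_
  rw [Finset.sum_range_succ']
  have := hg x
  simp only [Function.iterate_succ_apply, Function.iterate_zero, id]
  push_cast
  rw [div_mul_div_comm, mul_comm (n : ℝ), mul_div_mul_left _ _ (by positivity)]
  gcongr
  linarith

/-- One half of Birkhoff's theorem for nonnegative `g`: the upper limit of the Birkhoff averages has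
integral at most `∫ g`. -/
lemma lintegral_limsup_birkhoff_le {X : Type*} [MeasurableSpace X] {μ : Measure X}
    [IsProbabilityMeasure μ] {S : X → X} (hS : MeasurePreserving S μ μ) {g : X → ℝ}
    (hgm : Measurable g) (hg : ∀ x, 0 ≤ g x) (hgi : Integrable g μ) :
    ∫⁻ x, limsup (fun n : ℕ => ENNReal.ofReal ((∑ i ∈ Finset.range n, g (S^[i] x)) / n)) atTop ∂μ
      ≤ ENNReal.ofReal (∫ x, g x ∂μ) := by
  set U : X → ℝ≥0∞ := fun x =>
    limsup (fun n : ℕ => ENNReal.ofReal ((∑ i ∈ Finset.range n, g (S^[i] x)) / n)) atTop with hU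
  have hSm : ∀ n : ℕ, Measurable (fun x => ∑ i ∈ Finset.range n, g (S^[i] x)) := fun n =>
    Finset.measurable_sum _ fun i _ => hgm.comp (hS.measurable.iterate i)
  have hUm : Measurable U := Measurable.limsup fun n => ((hSm n).div_const _).ennreal_ofReal
  -- `U` may be infinite a priori, so the covering argument is applied to its truncations.
  have hbd : ∀ M : ℕ, ∫⁻ x, min (U x) M ∂μ ≤ ENNReal.ofReal (∫ x, g x ∂μ) := by
    intro M
    set v : X → ℝ := fun x => (min (U x) M).toReal with hv
    have hfin : ∀ x, min (U x) (M : ℝ≥0∞) ≠ ∞ := fun x =>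
      ((min_le_right _ _).trans_lt (ENNReal.natCast_lt_top M)).ne
    have hvm : Measurable v := (hUm.min measurable_const).ennreal_toReal
    have hv0 : ∀ x, 0 ≤ v x := fun x => ENNReal.toReal_nonneg
    have hvM : ∀ x, v x ≤ M := fun x => by
      have := ENNReal.toReal_mono (ENNReal.natCast_ne_top M) (min_le_right (U x) (M : ℝ≥0∞))
      simpa using this
    have hvi : Integrable v μ := (integrable_const (M : ℝ)).mono' hvm.aestronglyMeasurable
      (Eventually.of_forall fun x => by rw [Real.norm_of_nonneg (hv0 x)]; exact hvM x)
    have hle : ∫ x, v x ∂μ ≤ ∫ x, g x ∂μ := by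
      refine le_of_forall_pos_le_add fun ε hε => ?_
      have h := le_integral_of_cover hS (f := fun n x => -∑ i ∈ Finset.range n, g (S^[i] x))
        (fun n => (hSm n).neg) (fun n _ => (integral_sum_comp hS hgi _).1.neg)
        (fun k n _ _ x => by
          rw [Finset.sum_range_add]
          simp only [← Function.iterate_add_apply, add_comm k]
          linarith)
        (w := fun x => ε - v x) (measurable_const.sub hvm) ((integrable_const ε).sub hvi)
        (Eventually.of_forall fun x => by
          have : v (S x) ≤ v x := ENNReal.toReal_mono (hfin x)
            (min_le_min_right _ (limsup_birkhoff_comp_le hg x))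
          linarith)
        (Eventually.of_forall fun x => by
          rcases (hv0 x).eq_or_lt with h0 | h0
          · refine ⟨1, le_rfl, ?_⟩
            have := hg x
            simp [← h0]; linarith
          · have hlt : ENNReal.ofReal (v x - ε) < U x := by
              refine lt_of_lt_of_le ?_ (min_le_left (U x) (M : ℝ≥0∞))
              rw [← ENNReal.ofReal_toReal (hfin x), ENNReal.ofReal_lt_ofReal_iff h0]
              exact sub_lt_self _ hε
            obtain ⟨j, hj, hj1⟩ := ((frequently_lt_of_lt_limsup (by isBoundedDefault) hlt).and_eventually
              (eventually_ge_atTop 1)).exists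
            refine ⟨j, hj1, ?_⟩
            have hj' : (0 : ℝ) < j := by exact_mod_cast hj1
            have := (ENNReal.ofReal_lt_ofReal_iff'.1 hj).1
            rw [lt_div_iff₀ hj'] at this
            linarith)
        (c := -∫ x, g x ∂μ) (fun n _ => by
          rw [integral_neg, (integral_sum_comp hS hgi _).2]; simp)
      rw [integral_sub (integrable_const ε) hvi] at h
      simp at h
      linarith
    calc ∫⁻ x, min (U x) M ∂μ = ∫⁻ x, ENNReal.ofReal (v x) ∂μ := by
          simp only [hv, ENNReal.ofReal_toReal (hfin _)]
      _ = ENNReal.ofReal (∫ x, v x ∂μ) :=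
          (ofReal_integral_eq_lintegral_ofReal hvi (Eventually.of_forall hv0)).symm
      _ ≤ _ := ENNReal.ofReal_le_ofReal hle
  have hsup : ∀ x, U x = ⨆ M : ℕ, min (U x) M := fun x => by
    rw [← inf_iSup_eq, ENNReal.iSup_natCast, inf_top_eq]
  rw [lintegral_congr hsup, lintegral_iSup (fun M => hUm.min measurable_const)
    (fun a b hab x => min_le_min_left _ (by exact_mod_cast hab))]
  exact iSup_le hbd

/-- By Borel–Cantelli: invariance of `μ` and integrability of `(p + 1) * g` make the measures of
`{(p + 1) * g ∘ S^[n] > n}` summable for every `p`. -/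
lemma ae_tendsto_comp_iterate_div {X : Type*} [MeasurableSpace X] {μ : Measure X}
    [IsProbabilityMeasure μ] {S : X → X} (hS : MeasurePreserving S μ μ) {g : X → ℝ}
    (hgm : Measurable g) (hg : ∀ x, 0 ≤ g x) (hgi : Integrable g μ) :
    ∀ᵐ x ∂μ, Tendsto (fun n : ℕ => g (S^[n] x) / n) atTop (𝓝 0) := by
  have h1 : ∀ p : ℕ, ∀ᵐ x ∂μ, ∀ᶠ n : ℕ in atTop, (p + 1) * g (S^[n] x) ≤ n := by
    intro p
    let _ : MeasureSpace X := ⟨μ⟩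
    have h := ProbabilityTheory.tsum_prob_mem_Ioi_lt_top (X := fun x => (p + 1) * g x)
      (hgi.const_mul _) (fun x => mul_nonneg (by positivity) (hg x))
    have h2 : ∑' n : ℕ, μ (S^[n] ⁻¹' {x | (p + 1) * g x ∈ Ioi (n : ℝ)}) ≠ ∞ := by
      refine ne_of_eq_of_ne (tsum_congr fun n => ?_) h.ne
      exact (hS.iterate n).measure_preimage
        ((hgm.const_mul _) measurableSet_Ioi).nullMeasurableSet
    filter_upwards [ae_eventually_notMem h2] with x hx
    filter_upwards [hx] with n hn
    simpa using hn
  rw [← ae_all_iff] at h1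
  filter_upwards [h1] with x hx
  rw [Metric.tendsto_atTop']
  intro ε hε
  obtain ⟨p, hp⟩ := exists_nat_one_div_lt hε
  obtain ⟨N, hN⟩ := eventually_atTop.1 (hx p)
  refine ⟨N, fun n hn => ?_⟩
  have hn' : (0 : ℝ) < n := by exact_mod_cast (Nat.zero_le N).trans_lt hn
  rw [Real.dist_eq, sub_zero, abs_of_nonneg (div_nonneg (hg _) hn'.le)]
  refine lt_of_le_of_lt ?_ hp
  rw [div_le_div_iff₀ hn' (by positivity)]
  linarith [hN n hn.le]

/-! ### Kingman's theorem for nonnegative sequences -/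

lemma subadd_integrable {X : Type*} [MeasurableSpace X] {μ : Measure X}
    {T : X → X} (hT : MeasurePreserving T μ μ) {f : ℕ → X → ℝ} (hm : ∀ n, Measurable (f n))
    (hpos : ∀ n x, 0 ≤ f n x) (hint : Integrable (f 1) μ)
    (hsub : ∀ k n, 1 ≤ k → 1 ≤ n → ∀ x, f (k + n) x ≤ f k x + f n (T^[k] x))
    (n : ℕ) (hn : 1 ≤ n) : Integrable (f n) μ :=
  (integral_sum_comp hT hint (Finset.range n)).1.mono' (hm n).aestronglyMeasurable
    (Eventually.of_forall fun x => by
      rw [Real.norm_of_nonneg (hpos n x)]; exact subadd_le_sum hsub n hn x)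

/-- Splitting `[0, n)` into `n / k` blocks of length `k` and a remainder shorter than `k` bounds
`f n / n` by a Birkhoff average of `f k / k` under `T^[k]` plus a term for the remainder. -/
lemma subadd_div_le {X : Type*} {T : X → X} {f : ℕ → X → ℝ}
    (hpos : ∀ n x, 0 ≤ f n x)
    (hsub : ∀ k n, 1 ≤ k → 1 ≤ n → ∀ x, f (k + n) x ≤ f k x + f n (T^[k] x))
    {k : ℕ} (hk : 1 ≤ k) {n : ℕ} (hn : k ≤ n) (x : X) :
    f n x / n ≤ (∑ i ∈ Finset.range (n / k), (f k ((T^[k])^[i] x) / k)) / (n / k : ℕ)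
      + (∑ i ∈ Finset.range k, f 1 (T^[i] ((T^[k])^[n / k] x))) / (n / k : ℕ) := by
  set q := n / k with hq
  have hq1 : 1 ≤ q := (Nat.one_le_div_iff hk).2 hn
  have hblock : f (k * q) x ≤ ∑ i ∈ Finset.range q, f k ((T^[k])^[i] x) := by
    refine subadd_le_sum (T := T^[k]) (f := fun p => f (k * p)) (fun a b ha hb y => ?_) q hq1 x
      |>.trans (by simp)
    rw [← Function.iterate_mul, mul_add]
    exact hsub _ _ (Nat.mul_pos hk ha) (Nat.mul_pos hk hb) y
  have htail : f n x ≤ f (k * q) x + ∑ i ∈ Finset.range k, f 1 (T^[i] ((T^[k])^[q] x)) := by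
    have hdm : k * q + n % k = n := Nat.div_add_mod n k
    rcases Nat.eq_zero_or_pos (n % k) with h0 | h0
    · rw [h0, add_zero] at hdm
      rw [hdm]
      exact le_add_of_nonneg_right (Finset.sum_nonneg fun i _ => hpos _ _)
    · have h1 := hsub (k * q) (n % k) (Nat.mul_pos hk hq1) h0 x
      rw [hdm] at h1
      refine h1.trans ?_
      gcongr
      rw [← Function.iterate_mul]
      exact (subadd_le_sum hsub _ h0 _).trans (Finset.sum_le_sum_of_subset_of_nonneg
        (Finset.range_mono (Nat.mod_lt n hk).le) fun i _ _ => hpos _ _)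
  have hq' : (1 : ℝ) ≤ q := by exact_mod_cast hq1
  have hkn : (k : ℝ) * q ≤ n := by exact_mod_cast Nat.mul_div_le n k
  set A := ∑ i ∈ Finset.range q, f k ((T^[k])^[i] x)
  set B := ∑ i ∈ Finset.range k, f 1 (T^[i] ((T^[k])^[q] x))
  have hA : 0 ≤ A := Finset.sum_nonneg fun i _ => hpos _ _
  have hB : 0 ≤ B := Finset.sum_nonneg fun i _ => hpos _ _
  rw [← Finset.sum_div, div_div]
  calc f n x / n ≤ (A + B) / n := by gcongr; linarith
    _ = A / n + B / n := add_div ..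
    _ ≤ A / (k * q) + B / q := by
      gcongr
      exact Nat.div_le_self n k

lemma lintegral_limsup_subadd_le {X : Type*} [MeasurableSpace X] {μ : Measure X}
    [IsProbabilityMeasure μ]
    {T : X → X} (hT : MeasurePreserving T μ μ) {f : ℕ → X → ℝ} (hm : ∀ n, Measurable (f n))
    (hpos : ∀ n x, 0 ≤ f n x) (hint : Integrable (f 1) μ)
    (hsub : ∀ k n, 1 ≤ k → 1 ≤ n → ∀ x, f (k + n) x ≤ f k x + f n (T^[k] x))
    (k : ℕ) (hk : 1 ≤ k) :
    ∫⁻ x, limsup (fun n : ℕ => ENNReal.ofReal (f n x / n)) atTop ∂μ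
      ≤ ENNReal.ofReal ((∫ x, f k x ∂μ) / k) := by
  have hS := hT.iterate k
  have hfk := subadd_integrable hT hm hpos hint hsub k hk
  have htail := ae_tendsto_comp_iterate_div hS
    (g := fun x => ∑ i ∈ Finset.range k, f 1 (T^[i] x))
    (Finset.measurable_sum _ fun i _ => (hm 1).comp (hT.measurable.iterate i))
    (fun x => Finset.sum_nonneg fun i _ => hpos _ _) (integral_sum_comp hT hint _).1
  have hB := lintegral_limsup_birkhoff_le hS (g := fun x => f k x / k)
    ((hm k).div_const _) (fun x => div_nonneg (hpos _ _) (by positivity)) (hfk.div_const _)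
  rw [integral_div] at hB
  refine le_trans (lintegral_mono_ae ?_) hB
  filter_upwards [htail] with x hx
  have hdiv : Tendsto (fun n : ℕ => n / k) atTop atTop := Nat.tendsto_div_const_atTop (by omega)
  have hx' := ENNReal.tendsto_ofReal (hx.comp hdiv)
  rw [ENNReal.ofReal_zero] at hx'
  set a : ℕ → ℝ≥0∞ := fun q =>
    ENNReal.ofReal ((∑ i ∈ Finset.range q, (f k ((T^[k])^[i] x) / k)) / q) with ha
  have h2 : limsup (a ∘ fun n : ℕ => n / k) atTop ≤ limsup a atTop :=
     hdiv.limsup_comp_le_limsup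
  refine le_trans ?_ h2
  rw [← ENNReal.limsup_add_of_right_tendsto_zero hx' (a ∘ fun n : ℕ => n / k)]
  refine limsup_le_limsup ?_
  filter_upwards [eventually_ge_atTop k] with n hn
  exact (ENNReal.ofReal_le_ofReal (subadd_div_le hpos hsub hk hn x)).trans ENNReal.ofReal_add_le

lemma le_lintegral_liminf_subadd {X : Type*} [MeasurableSpace X] {μ : Measure X}
    [IsProbabilityMeasure μ]
    {T : X → X} (hT : MeasurePreserving T μ μ) {f : ℕ → X → ℝ} (hm : ∀ n, Measurable (f n))
    (hpos : ∀ n x, 0 ≤ f n x) (hint : Integrable (f 1) μ)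
    (hsub : ∀ k n, 1 ≤ k → 1 ≤ n → ∀ x, f (k + n) x ≤ f k x + f n (T^[k] x))
    {c : ℝ} (hc : ∀ n : ℕ, 1 ≤ n → n * c ≤ ∫ x, f n x ∂μ) :
    ENNReal.ofReal c ≤ ∫⁻ x, liminf (fun n : ℕ => ENNReal.ofReal (f n x / n)) atTop ∂μ := by
  set L : X → ℝ≥0∞ := fun x => liminf (fun n : ℕ => ENNReal.ofReal (f n x / n)) atTop with hL
  have hLm : Measurable L := Measurable.liminf fun n => ((hm n).div_const _).ennreal_ofReal
  by_cases hfin : ∫⁻ x, L x ∂μ = ∞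
  · simp [hfin]
  have hLfin : ∀ᵐ x ∂μ, L x < ∞ := ae_lt_top hLm hfin
  have hLi : Integrable (fun x => (L x).toReal) μ := integrable_toReal_of_lintegral_ne_top
    hLm.aemeasurable hfin
  have hle : c ≤ ∫ x, (L x).toReal ∂μ := by
    refine le_of_forall_pos_le_add fun ε hε => ?_
    have h := le_integral_of_cover hT hm (subadd_integrable hT hm hpos hint hsub) hsub
      (w := fun x => (L x).toReal + ε) (hLm.ennreal_toReal.add_const _)
      (hLi.add (integrable_const ε)) (by
        filter_upwards [hT.quasiMeasurePreserving.ae hLfin] with x hx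
        gcongr
        · exact hx.ne
        · exact liminf_le_liminf_comp hpos hsub x) (by
        filter_upwards [hLfin] with x hx
        have hlt : L x < ENNReal.ofReal ((L x).toReal + ε) := by
          conv_lhs => rw [← ENNReal.ofReal_toReal hx.ne]
          rw [ENNReal.ofReal_lt_ofReal_iff (by positivity)]
          linarith
        obtain ⟨j, hj, hj1⟩ := ((frequently_lt_of_liminf_lt (by isBoundedDefault) hlt).and_eventually
          (eventually_ge_atTop 1)).exists
        refine ⟨j, hj1, ?_⟩
        have hj' : (0 : ℝ) < j := by exact_mod_cast hj1
        have := (ENNReal.ofReal_lt_ofReal_iff'.1 hj).1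
        rw [div_lt_iff₀ hj'] at this
        linarith) hc
    rw [integral_add hLi (integrable_const ε)] at h
    simpa using h
  refine (ENNReal.ofReal_le_ofReal hle).trans ?_
  rw [integral_toReal hLm.aemeasurable hLfin, ENNReal.ofReal_toReal hfin]

/-- Scheffé's lemma: since `|F n - g| = (F n - g) + 2 (g - F n)⁺` and `(g - F n)⁺ ≤ g`, the
convergence of the integrals suffices for convergence in `L¹`. -/
lemma tendsto_integral_abs_sub {X : Type*} [MeasurableSpace X] {μ : Measure X}
    {F : ℕ → X → ℝ} {g : X → ℝ} (hF : ∀ n x, 0 ≤ F n x) (hFi : ∀ᶠ n in atTop, Integrable (F n) μ)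
    (hg : Integrable g μ) (hg0 : ∀ x, 0 ≤ g x)
    (hlim : ∀ᵐ x ∂μ, Tendsto (fun n => F n x) atTop (𝓝 (g x)))
    (hI : Tendsto (fun n => ∫ x, F n x ∂μ) atTop (𝓝 (∫ x, g x ∂μ))) :
    Tendsto (fun n => ∫ x, |F n x - g x| ∂μ) atTop (𝓝 0) := by
  have h1 : Tendsto (fun n => ∫ x, max (g x - F n x) 0 ∂μ) atTop (𝓝 (∫ _, (0 : ℝ) ∂μ)) := by
    refine tendsto_integral_filter_of_dominated_convergence g
      (hFi.mono fun n hn => ((hg.sub hn).pos_part).aestronglyMeasurable)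
      (Eventually.of_forall fun n => Eventually.of_forall fun x => ?_) hg ?_
    · rw [Real.norm_of_nonneg (le_max_right _ _)]
      exact max_le (by linarith [hF n x]) (hg0 x)
    · filter_upwards [hlim] with x hx
      simpa using (tendsto_const_nhds (x := g x)).sub hx |>.max (tendsto_const_nhds (x := (0 : ℝ)))
  have h2 := (hI.sub (tendsto_const_nhds (x := ∫ x, g x ∂μ))).add (h1.const_mul 2)
  simp only [integral_zero, sub_self, mul_zero, add_zero] at h2
  refine h2.congr' ?_
  filter_upwards [hFi] with n hn
  have hp : Integrable (fun x => 2 * max (g x - F n x) 0) μ := ((hg.sub hn).pos_part).const_mul 2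
  have hs : Integrable (fun x => F n x - g x) μ := hn.sub hg
  rw [← integral_const_mul, ← integral_sub hn hg, ← integral_add hs hp]
  refine integral_congr_ae (Eventually.of_forall fun x => ?_)
  beta_reduce
  rcases le_total (F n x) (g x) with h | h
  · rw [max_eq_left (by linarith), abs_of_nonpos (by linarith)]; ring
  · rw [max_eq_right (by linarith), abs_of_nonneg (by linarith)]; ring

/-- Kingman's subadditive ergodic theorem for nonnegative sequences: `f n / n` converges almost
everywhere and in `L¹`, and the integral of the limit is both the limit and a lower bound of the means
`(∫ f n) / n`. -/
theorem kingman_nonneg {X : Type*} [MeasurableSpace X] {μ : Measure X}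
    [IsProbabilityMeasure μ]
    {T : X → X} (hT : MeasurePreserving T μ μ) {f : ℕ → X → ℝ} (hm : ∀ n, Measurable (f n))
    (hpos : ∀ n x, 0 ≤ f n x) (hint : Integrable (f 1) μ)
    (hsub : ∀ k n, 1 ≤ k → 1 ≤ n → ∀ x, f (k + n) x ≤ f k x + f n (T^[k] x)) :
    ∃ g : X → ℝ, (∀ x, 0 ≤ g x) ∧ Integrable g μ ∧
      (∀ᵐ x ∂μ, Tendsto (fun n : ℕ => f n x / n) atTop (𝓝 (g x))) ∧
      Tendsto (fun n : ℕ => ∫ x, |f n x / n - g x| ∂μ) atTop (𝓝 0) ∧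
      Tendsto (fun n : ℕ => (∫ x, f n x ∂μ) / n) atTop (𝓝 (∫ x, g x ∂μ)) ∧
      ∀ n : ℕ, 1 ≤ n → ∫ x, g x ∂μ ≤ (∫ x, f n x ∂μ) / n := by
  have hfi := subadd_integrable hT hm hpos hint hsub
  have hI0 : ∀ n, 0 ≤ ∫ x, f n x ∂μ := fun n => integral_nonneg (hpos n)
  have hS : Subadditive fun n => ∫ x, f n x ∂μ := by
    intro k n
    -- Subadditivity of `f` is only assumed at positive times; at `0` it suffices that `∫ f 0 ≥ 0`.
    rcases Nat.eq_zero_or_pos k with rfl | hk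
    · rw [zero_add]; linarith [hI0 0]
    rcases Nat.eq_zero_or_pos n with rfl | hn
    · rw [add_zero]; linarith [hI0 0]
    have hc : Integrable (fun x => f n (T^[k] x)) μ :=
      (hT.iterate k).integrable_comp_of_integrable (hfi n hn)
    have h := integral_mono (hfi (k + n) (by omega)) ((hfi k hk).add hc) (hsub k n hk hn)
    have h2 := (integral_sum_comp hT (hfi n hn) {k}).2
    simp only [Finset.sum_singleton, Finset.card_singleton, Nat.cast_one, one_mul] at h2
    rwa [show (∫ x, (f k + fun x => f n (T^[k] x)) x ∂μ) = _ from integral_add (hfi k hk) hc, h2] at h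
  have hbdd : BddBelow (range fun n : ℕ => (∫ x, f n x ∂μ) / n) :=
    ⟨0, by rintro _ ⟨n, rfl⟩; exact div_nonneg (hI0 n) (by positivity)⟩
  have hγ := hS.tendsto_lim hbdd
  set γ := hS.lim with hγdef
  have hγle : ∀ n : ℕ, 1 ≤ n → γ ≤ (∫ x, f n x ∂μ) / n := fun n hn =>
    hS.lim_le_div hbdd (by omega)
  have hγ0 : 0 ≤ γ := ge_of_tendsto' hγ fun n => div_nonneg (hI0 n) (by positivity)
  set L : X → ℝ≥0∞ := fun x => liminf (fun n : ℕ => ENNReal.ofReal (f n x / n)) atTop with hL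
  set U : X → ℝ≥0∞ := fun x => limsup (fun n : ℕ => ENNReal.ofReal (f n x / n)) atTop with hU
  have hLm : Measurable L := Measurable.liminf fun n => ((hm n).div_const _).ennreal_ofReal
  have hUm : Measurable U := Measurable.limsup fun n => ((hm n).div_const _).ennreal_ofReal
  have hLU : ∀ x, L x ≤ U x := fun x => liminf_le_limsup
  have hγL : ENNReal.ofReal γ ≤ ∫⁻ x, L x ∂μ :=
    le_lintegral_liminf_subadd hT hm hpos hint hsub fun n hn => by
      have h := hγle n hn
      rwa [le_div_iff₀' (by exact_mod_cast hn)] at h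
  have hUγ : ∫⁻ x, U x ∂μ ≤ ENNReal.ofReal γ := by
    refine ge_of_tendsto (ENNReal.tendsto_ofReal hγ) ?_
    filter_upwards [eventually_ge_atTop 1] with n hn
    exact lintegral_limsup_subadd_le hT hm hpos hint hsub n hn
  have hLγ : ∫⁻ x, L x ∂μ = ENNReal.ofReal γ :=
    le_antisymm ((lintegral_mono hLU).trans hUγ) hγL
  have hLfin : ∫⁻ x, L x ∂μ ≠ ∞ := by rw [hLγ]; exact ENNReal.ofReal_ne_top
  have hLt : ∀ᵐ x ∂μ, L x < ∞ := ae_lt_top hLm hLfin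
  have hEq : L =ᵐ[μ] U := ae_eq_of_ae_le_of_lintegral_le (Eventually.of_forall hLU) hLfin
    hUm.aemeasurable (hUγ.trans hγL)
  have hgi : Integrable (fun x => (L x).toReal) μ :=
    integrable_toReal_of_lintegral_ne_top hLm.aemeasurable hLfin
  have hgI : ∫ x, (L x).toReal ∂μ = γ := by
    rw [integral_toReal hLm.aemeasurable hLt, hLγ, ENNReal.toReal_ofReal hγ0]
  have hlim : ∀ᵐ x ∂μ, Tendsto (fun n : ℕ => f n x / n) atTop (𝓝 (L x).toReal) := by
    filter_upwards [hEq, hLt] with x hx hxt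
    have h : Tendsto (fun n : ℕ => ENNReal.ofReal (f n x / n)) atTop (𝓝 (L x)) :=
      tendsto_of_liminf_eq_limsup rfl hx.symm
    refine ((ENNReal.tendsto_toReal hxt.ne).comp h).congr fun n => ?_
    exact ENNReal.toReal_ofReal (div_nonneg (hpos _ _) (by positivity))
  refine ⟨fun x => (L x).toReal, fun x => ENNReal.toReal_nonneg, hgi, hlim, ?_, ?_, ?_⟩
  · refine tendsto_integral_abs_sub (fun n x => div_nonneg (hpos _ _) (by positivity)) ?_ hgi
      (fun x => ENNReal.toReal_nonneg) hlim ?_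
    · filter_upwards [eventually_ge_atTop 1] with n hn using (hfi n hn).div_const _
    · rw [hgI]
      simpa only [integral_div] using hγ
  · rw [hgI]; exact hγ
  · rw [hgI]; exact hγle

/-! ### The two iterated limits -/

/-- the monotone subadditive iterated-limit lemma.  Both iterated limits
`lim_m lim_n φₙᵐ/n` and `lim_n lim_m φₙᵐ/n` exist `μ`-a.e. and in `L¹(μ)`, and they
agree `μ`-a.e. -/
theorem stmt3 {X : Type*} [MetricSpace X] [CompactSpace X] [MeasurableSpace X] [BorelSpace X]
    (T : X ≃ₜ X) (μ : Measure X) [IsProbabilityMeasure μ]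
    (hT : MeasurePreserving (⇑T) μ μ)
    (φ : ℕ → ℕ → X → ℝ)
    (hmeas : ∀ m n, Measurable (φ m n))
    (hpos : ∀ m n x, 0 ≤ φ m n x)
    (hint : Integrable (φ 1 1) μ)
    (hsub : ∀ m, 1 ≤ m → ∀ k n, 1 ≤ k → 1 ≤ n → ∀ x,
      φ m (k + n) x ≤ φ m k x + φ m n ((⇑T)^[k] x))
    (hdec : ∀ n m m', m ≤ m' → ∀ x, φ m' n x ≤ φ m n x) :
    ∃ (g : ℕ → X → ℝ) (h : ℕ → X → ℝ) (ψ Ψ : X → ℝ),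
      -- for each m ≥ 1 the inner limit lim_n φₙᵐ/n =: g m exists a.e. and in L¹
      (∀ m, 1 ≤ m →
        (∀ᵐ x ∂μ, Tendsto (fun n : ℕ => φ m n x / (n : ℝ)) atTop (𝓝 (g m x))) ∧
        Tendsto (fun n : ℕ => ∫ x, |φ m n x / (n : ℝ) - g m x| ∂μ) atTop (𝓝 0)) ∧
      -- g m decreases to ψ a.e. and in L¹ (the first iterated limit)
      ((∀ᵐ x ∂μ, Tendsto (fun m : ℕ => g m x) atTop (𝓝 (ψ x))) ∧
        Tendsto (fun m : ℕ => ∫ x, |g m x - ψ x| ∂μ) atTop (𝓝 0)) ∧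
      -- for each n ≥ 1 the inner limit lim_m φₙᵐ =: h n exists a.e. and in L¹
      (∀ n, 1 ≤ n →
        (∀ᵐ x ∂μ, Tendsto (fun m : ℕ => φ m n x) atTop (𝓝 (h n x))) ∧
        Tendsto (fun m : ℕ => ∫ x, |φ m n x - h n x| ∂μ) atTop (𝓝 0)) ∧
      -- (1/n) h n converges to Ψ a.e. and in L¹ (the second iterated limit)
      ((∀ᵐ x ∂μ, Tendsto (fun n : ℕ => h n x / (n : ℝ)) atTop (𝓝 (Ψ x))) ∧
        Tendsto (fun n : ℕ => ∫ x, |h n x / (n : ℝ) - Ψ x| ∂μ) atTop (𝓝 0)) ∧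
      -- the two iterated limits agree μ-a.e.
      ψ =ᵐ[μ] Ψ := by
  have hφi : ∀ m, 1 ≤ m → Integrable (φ m 1) μ := fun m hm =>
    hint.mono' (hmeas m 1).aestronglyMeasurable (Eventually.of_forall fun x => by
      rw [Real.norm_of_nonneg (hpos m 1 x)]; exact hdec 1 1 m hm x)
  have hφin : ∀ m, 1 ≤ m → ∀ n, 1 ≤ n → Integrable (φ m n) μ := fun m hm =>
    subadd_integrable hT (hmeas m) (hpos m) (hφi m hm) (hsub m hm)
  -- `φ 0` need be neither subadditive nor integrable; `g 0` is set to `0` to keep it nonnegative.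
  have hK : ∀ m, ∃ g : X → ℝ, (∀ x, 0 ≤ g x) ∧ (1 ≤ m → Integrable g μ ∧
      (∀ᵐ x ∂μ, Tendsto (fun n : ℕ => φ m n x / n) atTop (𝓝 (g x))) ∧
      Tendsto (fun n : ℕ => ∫ x, |φ m n x / n - g x| ∂μ) atTop (𝓝 0) ∧
      ∀ n : ℕ, 1 ≤ n → ∫ x, g x ∂μ ≤ (∫ x, φ m n x ∂μ) / n) := by
    intro m
    by_cases hm : 1 ≤ m
    · obtain ⟨g, h1, h2, h3, h4, -, h5⟩ :=
        kingman_nonneg hT (hmeas m) (hpos m) (hφi m hm) (hsub m hm)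
      exact ⟨g, h1, fun _ => ⟨h2, h3, h4, h5⟩⟩
    · exact ⟨0, fun _ => le_rfl, fun h => absurd h hm⟩
  choose g hg0 hg using hK
  have hbdd : ∀ n x, BddBelow (range fun m => φ m n x) := fun n x =>
    ⟨0, by rintro _ ⟨m, rfl⟩; exact hpos m n x⟩
  let h : ℕ → X → ℝ := fun n x => ⨅ m, φ m n x
  have hlim : ∀ n x, Tendsto (fun m => φ m n x) atTop (𝓝 (h n x)) := fun n x =>
    tendsto_atTop_ciInf (fun a b hab => hdec n a b hab x) (hbdd n x)
  have hle : ∀ m n x, h n x ≤ φ m n x := fun m n x => ciInf_le (hbdd n x) m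
  have hh0 : ∀ n x, 0 ≤ h n x := fun n x => Real.iInf_nonneg fun m => hpos m n x
  have hhm : ∀ n, Measurable (h n) := fun n =>
    measurable_of_tendsto_metrizable (fun m => hmeas m n) (tendsto_pi_nhds.2 (hlim n))
  have hhi : Integrable (h 1) μ :=
    hint.mono' (hhm 1).aestronglyMeasurable (Eventually.of_forall fun x => by
      rw [Real.norm_of_nonneg (hh0 1 x)]; exact hle 1 1 x)
  have hhsub : ∀ k n, 1 ≤ k → 1 ≤ n → ∀ x, h (k + n) x ≤ h k x + h n ((⇑T)^[k] x) := by
    intro k n hk hn x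
    refine le_of_tendsto_of_tendsto (hlim (k + n) x) ((hlim k x).add (hlim n _)) ?_
    filter_upwards [eventually_ge_atTop 1] with m hm using hsub m hm k n hk hn x
  have hhin := subadd_integrable hT hhm hh0 hhi hhsub
  obtain ⟨Ψ, hΨ0, hΨi, hΨlim, hΨL, hΨI, -⟩ := kingman_nonneg hT hhm hh0 hhi hhsub
  have hφI : ∀ n, 1 ≤ n → Tendsto (fun m => ∫ x, φ m n x ∂μ) atTop (𝓝 (∫ x, h n x ∂μ)) := by
    intro n hn
    refine tendsto_integral_filter_of_dominated_convergence (φ 1 n)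
      (Eventually.of_forall fun m => (hmeas m n).aestronglyMeasurable) ?_
      (hφin 1 le_rfl n hn) (Eventually.of_forall (hlim n))
    filter_upwards [eventually_ge_atTop 1] with m hm
    refine Eventually.of_forall fun x => ?_
    rw [Real.norm_of_nonneg (hpos m n x)]
    exact hdec n 1 m hm x
  have hall : ∀ᵐ x ∂μ, ∀ m, 1 ≤ m → Tendsto (fun n : ℕ => φ m n x / n) atTop (𝓝 (g m x)) := by
    rw [ae_all_iff]
    intro m
    by_cases hm : 1 ≤ m
    · filter_upwards [(hg m hm).2.1] with x hx _ using hx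
    · exact Eventually.of_forall fun x h => absurd h hm
  -- The infimum runs over `m ≥ 1`, because `g 0` is unrelated to the other `g m`.
  let ψ : X → ℝ := fun x => ⨅ m, g (m + 1) x
  have hψ0 : ∀ x, 0 ≤ ψ x := fun x => Real.iInf_nonneg fun m => hg0 _ x
  have hψle : ∀ m, 1 ≤ m → ∀ x, ψ x ≤ g m x := by
    intro m hm x
    obtain ⟨p, rfl⟩ : ∃ p, m = p + 1 := ⟨m - 1, by omega⟩
    exact ciInf_le (f := fun m => g (m + 1) x)
      ⟨0, by rintro _ ⟨m, rfl⟩; exact hg0 (m + 1) x⟩ p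
  have hganti : ∀ᵐ x ∂μ, ∀ m m', 1 ≤ m → m ≤ m' → g m' x ≤ g m x := by
    filter_upwards [hall] with x hx m m' hm hmm'
    refine le_of_tendsto_of_tendsto' (hx m' (hm.trans hmm')) (hx m hm) fun n => ?_
    have := hdec n m m' hmm' x
    gcongr
  have hψlim : ∀ᵐ x ∂μ, Tendsto (fun m => g m x) atTop (𝓝 (ψ x)) := by
    filter_upwards [hganti] with x hx
    rw [← tendsto_add_atTop_iff_nat 1]
    exact tendsto_atTop_ciInf (fun a b hab => hx _ _ (by omega) (by omega))
      ⟨0, by rintro _ ⟨m, rfl⟩; exact hg0 (m + 1) x⟩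
  have hψm : AEStronglyMeasurable ψ μ :=
    aestronglyMeasurable_of_tendsto_ae atTop (f := fun m => g (m + 1))
      (fun m => (hg (m + 1) (by omega)).1.aestronglyMeasurable)
      (hψlim.mono fun x hx => (tendsto_add_atTop_iff_nat 1).2 hx)
  have hψi : Integrable ψ μ := (hg 1 le_rfl).1.mono' hψm (Eventually.of_forall fun x => by
    rw [Real.norm_of_nonneg (hψ0 x)]; exact hψle 1 le_rfl x)
  have hgI : Tendsto (fun m => ∫ x, g m x ∂μ) atTop (𝓝 (∫ x, ψ x ∂μ)) := by
    refine tendsto_integral_filter_of_dominated_convergence (g 1) ?_ ?_ (hg 1 le_rfl).1 hψlim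
    · filter_upwards [eventually_ge_atTop 1] with m hm using (hg m hm).1.aestronglyMeasurable
    · filter_upwards [eventually_ge_atTop 1] with m hm
      filter_upwards [hganti] with x hx
      rw [Real.norm_of_nonneg (hg0 m x)]
      exact hx 1 m le_rfl hm
  have hΨψ : Ψ ≤ᵐ[μ] ψ := by
    filter_upwards [hall, hΨlim, hψlim] with x hx hx' hx''
    refine ge_of_tendsto hx'' ?_
    filter_upwards [eventually_ge_atTop 1] with m hm
    refine le_of_tendsto_of_tendsto' hx' (hx m hm) fun n => ?_
    have := hle m n x
    gcongr
  have hψΨ : ∫ x, ψ x ∂μ ≤ ∫ x, Ψ x ∂μ := by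
    refine ge_of_tendsto hΨI ?_
    filter_upwards [eventually_ge_atTop 1] with n hn
    refine ge_of_tendsto ((hφI n hn).div_const (n : ℝ)) ?_
    filter_upwards [eventually_ge_atTop 1] with m hm
    exact (integral_mono hψi (hg m hm).1 (hψle m hm)).trans ((hg m hm).2.2.2 n hn)
  refine ⟨g, h, ψ, Ψ, fun m hm => ⟨(hg m hm).2.1, (hg m hm).2.2.1⟩, ⟨hψlim, ?_⟩,
    fun n hn => ⟨Eventually.of_forall (hlim n), ?_⟩, ⟨hΨlim, hΨL⟩, ?_⟩
  · refine tendsto_integral_abs_sub hg0 ?_ hψi hψ0 hψlim hgI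
    filter_upwards [eventually_ge_atTop 1] with m hm using (hg m hm).1
  · refine tendsto_integral_abs_sub (fun m x => hpos m n x) ?_ (hhin n hn) (hh0 n)
      (Eventually.of_forall (hlim n)) (hφI n hn)
    filter_upwards [eventually_ge_atTop 1] with m hm using hφin m hm n hn
  · exact ((integral_eq_iff_of_ae_le hΨi hψi hΨψ).1
      (le_antisymm (integral_mono_ae hΨi hψi hΨψ) hψΨ)).symm
end

section
/- Let $\mathbf{a}=(a_k)_{k\ge 0}$ be a summable sequence of positive reals strictly decreasing to $0$ with $a_k/a_l \le C b_{|k-l|}$ where $\frac1k|\log b_k|\to 0$ (sub-exponential decrease). Identify $X = \{0,1\}^{\mathbb{Z}}$ with a subset of the Hilbert space $\mathbb{H}_{\mathbf{a}} = \{x\in\mathbb{R}^{\mathbb{Z}} : \sum_n a_{|n|}|x_n|^2<\infty\}$, let $T$ be the left-shift restricted to $X$, and let $\mu = (\frac12\delta_0 + \frac12\delta_1)^{\mathbb{Z}}$ be the Bernoulli $(1/2,1/2)$ measure. Then $X$ is compact in the norm metric, the norm metric on $X$ induces the product topology, $\mu$ is $T$-ergodic, $h_\mu(T) = \log 2$,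 and the maximal Lyapunov exponent $\chi_\mu(T) := \lim_{n\to\infty}\frac1n\int_X \log^+\mathcal{L}_n\,d\mu$ equals $0$. Hence positive entropy does not force a positive maximal Lyapunov exponent. -/
/-!
The three non-formal assertions rest on the following ideas.

*Ergodicity.* The cylinder values determine `μ`, so `μ` is shift invariant and is a product measure.
An invariant set `s` is approximated by a cylinder `t`; a sufficiently far translate of `t` is
independent of `t` and also approximates `s`, which forces `μ s = μ s ^ 2`.

*Entropy.* The zeroth coordinate gives `log 2` exactly. For the upper bound, a finite partition `P`
is approximated by a function `Q` of the coordinates in `[-N, N]`. Let `E` record the value of `P`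
where `P ≠ Q`, and a fixed symbol elsewhere; by continuity of `negMulLog` its entropy is at most a
prescribed `ε`. The `P`-name of length `n + 1` is a function of the coordinates in `[-N, N + n]` and
of the `E`-name, so its entropy is at most `(2N + n + 1) log 2 + (n + 1) ε`. This uses
only monotonicity and subadditivity of Shannon entropy, both elementary
(`partH_le_of_factorsThrough`, `sum_negMulLog_joint_le`), and no conditional entropy.

*Lyapunov exponent.* After the change of index `k ↦ k - n`, the weights of `D(Tⁿx, Tⁿy)²` and of
`D(x, y)²` differ by factors `a_{|k-n|} / a_{|k|} ≤ C b_j` with `j ≤ n`. Hence `Tⁿ` is globally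
Lipschitz with a constant of sub-exponential growth in `n`, uniformly in `x`.
-/

open MeasureTheory Filter Set Topology
open scoped ENNReal

/-- `{0,1} ⊂ ℝ` valued coordinates. -/
noncomputable def boolVal (b : Bool) : ℝ := if b then 1 else 0

/-- The metric on `X = {0,1}^ℤ ⊂ ℍ_𝐚` induced by the norm of the weighted sequence
space `ℍ_𝐚`: `D(x,y) = (∑ₙ a_{|n|} |xₙ - yₙ|²)^{1/2}`. -/
noncomputable def seqDist (a : ℕ → ℝ) (x y : ℤ → Bool) : ℝ :=
  Real.sqrt (∑' n : ℤ, a n.natAbs * (boolVal (x n) - boolVal (y n)) ^ 2)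

/-- The left shift on `{0,1}^ℤ`. -/
def shiftMap (x : ℤ → Bool) : ℤ → Bool := fun n => x (n + 1)

/-- `log⁺` on `[0,∞]`. -/
noncomputable def logPlus (c : ℝ≥0∞) : ℝ≥0∞ :=
  if c = ⊤ then ⊤ else ENNReal.ofReal (Real.log c.toReal)

/-- The pointwise Lipschitz constant `𝓛ₙ(x)` of the `n`-th iterate of the shift with
respect to the metric `seqDist a`, `𝓛ₙ(x) = lim_{r↘0} sup_{0<D(x,y)<r} D(Tⁿx,Tⁿy)/D(x,y)`. -/
noncomputable def seqLip (a : ℕ → ℝ) (n : ℕ) (x : ℤ → Bool) : ℝ≥0∞ :=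
  ⨅ (r : ℝ) (_ : 0 < r),
    ⨆ y ∈ {y | seqDist a x y < r ∧ y ≠ x},
      ENNReal.ofReal (seqDist a (shiftMap^[n] x) (shiftMap^[n] y) / seqDist a x y)

/-- Shannon entropy of the countable partition encoded by `P : X → A`. -/
noncomputable def partH {X : Type*} [MeasurableSpace X] (μ : Measure X) {A : Type*}
    [Countable A] (P : X → A) : ℝ :=
  ∑' j : A, Real.negMulLog ((μ (P ⁻¹' {j})).toReal)

/-- `h_μ(T,P) = infₙ (1/n) H_μ(⋁_{i<n} T⁻ⁱ P)`. -/
noncomputable def partEnt {X : Type*} [MeasurableSpace X] (μ : Measure X) (T : X → X)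
    (P : X → ℕ) : ℝ :=
  ⨅ n : ℕ, partH μ (fun x => fun i : Fin (n + 1) => P (T^[(i : ℕ)] x)) / (n + 1 : ℝ)

/-- Kolmogorov–Sinai entropy `h_μ(T) = sup_P h_μ(T,P)`. -/
noncomputable def ksEntropy {X : Type*} [MeasurableSpace X] (μ : Measure X) (T : X → X) :
    ℝ≥0∞ :=
  ⨆ P : {P : X → ℕ // Measurable P ∧ (Set.range P).Finite},
    ENNReal.ofReal (partEnt μ T P.1)


/-! ### The Bernoulli measure and ergodicity -/

lemma measurable_shiftMap : Measurable shiftMap :=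
  measurable_pi_lambda _ fun n => measurable_pi_apply (n + 1)

lemma shiftMap_iterate (n : ℕ) (x : ℤ → Bool) (k : ℤ) : shiftMap^[n] x k = x (k + n) := by
  induction n generalizing x with
  | zero => simp
  | succ n ih =>
    rw [Function.iterate_succ_apply, ih]
    simp only [shiftMap]
    congr 1
    push_cast
    ring

/-- The Bernoulli `(1/2,1/2)` property: the cylinder prescribing the coordinates in a finite set
`F` has measure `2^{-|F|}`. -/
def IsBernoulli (μ : Measure (ℤ → Bool)) : Prop :=
  ∀ (F : Finset ℤ) (v : ℤ → Bool), μ {x | ∀ i ∈ F, x i = v i} = (1 / 2 : ℝ≥0∞) ^ F.card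

/-- Both measures have the same finite-dimensional marginals, since a measure on the finite set
`I → Bool` is determined by its atoms. -/
lemma IsBernoulli.unique {μ ν : Measure (ℤ → Bool)} [IsProbabilityMeasure μ]
    [IsProbabilityMeasure ν] (hμ : IsBernoulli μ) (hν : IsBernoulli ν) : μ = ν := by
  have key : ∀ I : Finset ℤ, μ.map I.restrict = ν.map I.restrict := by
    intro I
    refine Measure.ext_of_singleton fun v => ?_
    obtain ⟨w, rfl⟩ : ∃ w : ℤ → Bool, I.restrict w = v :=
      ⟨fun i => if h : i ∈ I then v ⟨i, h⟩ else true, by ext i; simp⟩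
    have hset : (I.restrict ⁻¹' {I.restrict w} : Set (ℤ → Bool)) = {x | ∀ i ∈ I, x i = w i} := by
      ext x
      simp [funext_iff]
    rw [Measure.map_apply (Finset.measurable_restrict I) (measurableSet_singleton _),
      Measure.map_apply (Finset.measurable_restrict I) (measurableSet_singleton _), hset,
      hμ, hν]
  have : ∀ I : Finset ℤ, IsFiniteMeasure (ν.map I.restrict) := fun I => inferInstance
  exact IsProjectiveLimit.unique (P := fun I : Finset ℤ => ν.map I.restrict) key fun _ => rfl

lemma IsBernoulli.measurePreserving {μ : Measure (ℤ → Bool)} [IsProbabilityMeasure μ]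
    (hμ : IsBernoulli μ) : MeasurePreserving shiftMap μ μ := by
  refine ⟨measurable_shiftMap, ?_⟩
  have := Measure.isProbabilityMeasure_map (μ := μ) measurable_shiftMap.aemeasurable
  refine IsBernoulli.unique (fun F v => ?_) hμ
  have hm : MeasurableSet {x : ℤ → Bool | ∀ i ∈ F, x i = v i} := by
    have : {x : ℤ → Bool | ∀ i ∈ F, x i = v i} = Set.pi F fun i => {v i} := by
      ext x; simp [Set.mem_pi]
    rw [this]
    exact MeasurableSet.pi F.countable_toSet fun i _ => measurableSet_singleton _
  rw [Measure.map_apply measurable_shiftMap hm,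
    ← Finset.card_map (addRightEmbedding (1 : ℤ)) (s := F), ← hμ _ fun j => v (j - 1)]
  congr 1
  ext x
  simp [shiftMap]

open ProbabilityTheory in
/-- By uniqueness `μ` is the infinite product of its zeroth marginal, so its coordinates are
independent. -/
lemma IsBernoulli.iIndepFun {μ : Measure (ℤ → Bool)} [IsProbabilityMeasure μ]
    (hμ : IsBernoulli μ) : iIndepFun (fun (i : ℤ) (x : ℤ → Bool) => x i) μ := by
  have := Measure.isProbabilityMeasure_map (μ := μ) (measurable_pi_apply (0 : ℤ)).aemeasurable
  have h : μ = Measure.infinitePi fun _ : ℤ => μ.map fun x => x 0 := by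
    refine hμ.unique fun F v => ?_
    have hset : {x : ℤ → Bool | ∀ i ∈ F, x i = v i} = Set.pi F fun i => {v i} := by
      ext x; simp [Set.mem_pi]
    have h1 : ∀ c : Bool, μ.map (fun x => x 0) {c} = 1 / 2 := by
      intro c
      rw [Measure.map_apply (measurable_pi_apply _) (measurableSet_singleton _)]
      have := hμ {0} fun _ => c
      simpa [Set.preimage] using this
    rw [hset, Measure.infinitePi_pi _ fun i _ => measurableSet_singleton _]
    simp only [h1, Finset.prod_const]
  rw [h]
  exact iIndepFun_infinitePi (X := fun (_ : ℤ) (b : Bool) => b) fun _ => measurable_id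

/-- Cylinders over the symmetric windows `[-N, N]` are dense in the measure algebra. -/
lemma exists_cylinder_approx (μ : Measure (ℤ → Bool)) [IsProbabilityMeasure μ]
    {s : Set (ℤ → Bool)} (hs : MeasurableSet s) {ε : ℝ} (hε : 0 < ε) :
    ∃ (N : ℕ) (S : Set (Finset.Icc (-N : ℤ) N → Bool)),
      μ.real (symmDiff (cylinder (α := fun _ : ℤ => Bool) (Finset.Icc (-N : ℤ) N) S) s) < ε := by
  obtain ⟨t, ht, hlt⟩ := exists_measure_symmDiff_lt_of_generateFrom_isSetRing (μ := μ)
    (isSetRing_measurableCylinders (α := fun _ : ℤ => Bool))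
    ⟨{Set.univ}, Set.countable_singleton _,
      Set.singleton_subset_iff.2 (univ_mem_measurableCylinders _), by simp⟩
    generateFrom_measurableCylinders.symm hs (ENNReal.ofReal_pos.2 hε)
  obtain ⟨I, S, -, rfl⟩ := (mem_measurableCylinders _).1 ht
  have hI : I ⊆ Finset.Icc (-(I.sup Int.natAbs : ℕ) : ℤ) (I.sup Int.natAbs : ℕ) := by
    intro i hi
    have := Finset.le_sup (f := Int.natAbs) hi
    rw [Finset.mem_Icc]
    omega
  refine ⟨I.sup Int.natAbs, Finset.restrict₂ (π := fun _ : ℤ => Bool) hI ⁻¹' S, ?_⟩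
  have : cylinder (Finset.Icc (-(I.sup Int.natAbs : ℕ) : ℤ) (I.sup Int.natAbs : ℕ))
      (Finset.restrict₂ (π := fun _ : ℤ => Bool) hI ⁻¹' S) = cylinder (α := fun _ => Bool) I S := rfl
  rw [this, measureReal_def]
  exact (ENNReal.lt_ofReal_iff_toReal_lt (measure_ne_top _ _)).1 hlt

open ProbabilityTheory in
/-- If `s` is invariant and `t` is a cylinder close to `s`, then `t` and a far translate `t'` are
independent and both close to `s`. Hence `μ s ≈ μ (t ∩ t') = μ t ^ 2 ≈ μ s ^ 2`. -/
lemma IsBernoulli.ergodic {μ : Measure (ℤ → Bool)} [IsProbabilityMeasure μ]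
    (hμ : IsBernoulli μ) : Ergodic shiftMap μ := by
  refine ⟨hμ.measurePreserving, ⟨fun s hs hinv => ?_⟩⟩
  have key : ∀ ε : ℝ, 0 < ε → |μ.real s - μ.real s * μ.real s| ≤ 4 * ε := by
    intro ε hε
    obtain ⟨N, I, hI, S, hS⟩ : ∃ (N : ℕ) (I : Finset ℤ) (_ : I = Finset.Icc (-N : ℤ) N)
        (S : Set (I → Bool)), μ.real (symmDiff (cylinder (α := fun _ : ℤ => Bool) I S) s) < ε :=
      let ⟨N, S, h⟩ := exists_cylinder_approx μ hs hε
      ⟨N, _, rfl, S, h⟩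
    set t := cylinder (α := fun _ : ℤ => Bool) I S with ht
    have htm : MeasurableSet t := MeasurableSet.cylinder I (Set.toFinite S).measurableSet
    set m : ℕ := 2 * N + 1 with hm
    have hmp := hμ.measurePreserving.iterate m
    have hinvm : shiftMap^[m] ⁻¹' s = s := by
      have := Function.iterate_fixed hinv m
      rwa [← Set.preimage_iterate_eq] at this
    set t' := shiftMap^[m] ⁻¹' t with ht'
    have h1 : |μ.real t - μ.real s| ≤ ε :=
      (abs_measureReal_sub_le_measureReal_symmDiff htm.nullMeasurableSet
        hs.nullMeasurableSet).trans hS.le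
    have h2 : μ.real t' = μ.real t := hmp.measureReal_preimage htm.nullMeasurableSet
    have h3 : μ.real (symmDiff t' s) < ε := by
      rw [← hmp.measureReal_preimage (htm.symmDiff hs).nullMeasurableSet,
        Set.preimage_symmDiff, hinvm] at hS
      exact hS
    -- the windows of `t` and `t'` are disjoint, so the two cylinders are independent
    have h4 : μ.real (t ∩ t') = μ.real t * μ.real t := by
      let J : Finset ℤ := Finset.Icc (N + 1 : ℤ) (3 * N + 1)
      have hdisj : Disjoint I J := by
        rw [Finset.disjoint_left]
        intro i hi hj
        simp only [hI, J, Finset.mem_Icc] at hi hj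
        omega
      have hind := (hμ.iIndepFun).indepFun_finset I J hdisj fun i => measurable_pi_apply i
      let g : (J → Bool) → (I → Bool) := fun y i =>
        y ⟨i + m, by
          have := (Finset.ext_iff.1 hI i).1 i.2
          simp only [J, Finset.mem_Icc] at this ⊢
          omega⟩
      have ht'eq : t' = (fun (x : ℤ → Bool) (i : J) => x i) ⁻¹' (g ⁻¹' S) := by
        have : (I.restrict ∘ shiftMap^[m] : (ℤ → Bool) → (I → Bool))
            = g ∘ fun (x : ℤ → Bool) (i : J) => x i := by
          funext x i
          simp [g, shiftMap_iterate]
        rw [ht', ht, cylinder, ← Set.preimage_comp, this, Set.preimage_comp]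
      have := hind.measure_inter_preimage_eq_mul S (g ⁻¹' S) (Set.toFinite _).measurableSet
        (Set.toFinite _).measurableSet
      rw [← ht'eq] at this
      have h5 : μ (t ∩ t') = μ t * μ t' := this
      rw [measureReal_def, h5, ENNReal.toReal_mul, ← measureReal_def, ← measureReal_def, h2]
    have h5 : |μ.real (t ∩ t') - μ.real s| ≤ 2 * ε := by
      refine (abs_measureReal_sub_le_measureReal_symmDiff
        (htm.inter (measurable_shiftMap.iterate m htm)).nullMeasurableSet
        hs.nullMeasurableSet).trans ?_
      have hsub : symmDiff (t ∩ t') s ⊆ symmDiff t s ∪ symmDiff t' s := by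
        intro x
        simp only [Set.mem_symmDiff, Set.mem_union, Set.mem_inter_iff]
        tauto
      refine (measureReal_mono hsub).trans ((measureReal_union_le _ _).trans ?_)
      linarith
    rw [h4] at h5
    have ha : μ.real s ≤ 1 := measureReal_le_one
    have hb : μ.real t ≤ 1 := measureReal_le_one
    have ha0 : 0 ≤ μ.real s := measureReal_nonneg
    have hb0 : 0 ≤ μ.real t := measureReal_nonneg
    rw [abs_le] at *
    constructor <;> nlinarith
  have hzero : μ.real s - μ.real s * μ.real s = 0 := by
    by_contra hne
    have := key (|μ.real s - μ.real s * μ.real s| / 8) (by positivity)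
    have := abs_pos.2 hne
    linarith
  have h01 : μ.real s = 0 ∨ μ.real s = 1 := by
    have : μ.real s * (1 - μ.real s) = 0 := by linarith
    rcases mul_eq_zero.1 this with h | h
    · exact Or.inl h
    · right; linarith
  rw [Filter.eventuallyConst_set']
  rcases h01 with h | h
  · left
    exact ae_eq_empty.2 ((measureReal_eq_zero_iff).1 h)
  · right
    rw [ae_eq_univ, prob_compl_eq_zero_iff hs, ← ENNReal.toReal_eq_one_iff]
    exact h

/-! ### Shannon entropy of finite partitions -/

/-- Gibbs' inequality: the entropy of `p` is at most its cross entropy with respect to any `q` of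
no larger mass that vanishes only where `p` does. It follows from `log t ≤ t - 1` at `t = q / p`. -/
lemma sum_negMulLog_le {ι : Type*} [Fintype ι] (p q : ι → ℝ) (hp : ∀ i, 0 ≤ p i)
    (hq : ∀ i, 0 ≤ q i) (hpq : ∀ i, q i = 0 → p i = 0) (hsum : ∑ i, q i ≤ ∑ i, p i) :
    ∑ i, Real.negMulLog (p i) ≤ -∑ i, p i * Real.log (q i) := by
  have h : ∀ i, Real.negMulLog (p i) ≤ -(p i * Real.log (q i)) + (q i - p i) := by
    intro i
    rcases (hp i).eq_or_lt with h0 | h0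
    · simp [← h0, hq i]
    · have hqi : 0 < q i := (hq i).lt_of_ne' fun h => h0.ne' (hpq i h)
      have := Real.log_le_sub_one_of_pos (div_pos hqi h0)
      rw [Real.log_div hqi.ne' h0.ne'] at this
      have h2 := mul_le_mul_of_nonneg_left this h0.le
      have h3 : p i * (q i / p i - 1) = q i - p i := by field_simp
      rw [h3] at h2
      rw [Real.negMulLog]
      linarith
  calc ∑ i, Real.negMulLog (p i) ≤ ∑ i, (-(p i * Real.log (q i)) + (q i - p i)) :=
        Finset.sum_le_sum fun i _ => h i
    _ ≤ _ := by
      rw [Finset.sum_add_distrib, Finset.sum_neg_distrib, Finset.sum_sub_distrib]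
      linarith

lemma negMulLog_sum_le {ι : Type*} (s : Finset ι) (p : ι → ℝ) (hp : ∀ i, 0 ≤ p i) :
    Real.negMulLog (∑ i ∈ s, p i) ≤ ∑ i ∈ s, Real.negMulLog (p i) := by
  rw [Real.negMulLog, neg_mul, Finset.sum_mul, ← Finset.sum_neg_distrib]
  refine Finset.sum_le_sum fun i hi => ?_
  rw [Real.negMulLog, neg_mul]
  rcases (hp i).eq_or_lt with h0 | h0
  · simp [← h0]
  · have : Real.log (p i) ≤ Real.log (∑ i ∈ s, p i) :=
      Real.log_le_log h0 (Finset.single_le_sum (fun j _ => hp j) hi)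
    have := mul_le_mul_of_nonneg_left this h0.le
    linarith

section
variable {Ω : Type*} [MeasurableSpace Ω] (μ : Measure Ω) [IsProbabilityMeasure μ]

lemma partH_nonneg {A : Type*} [Countable A] (X : Ω → A) : 0 ≤ partH μ X :=
  tsum_nonneg fun _ => Real.negMulLog_nonneg ENNReal.toReal_nonneg measureReal_le_one

lemma measureReal_preimage_finset {B : Type*} [MeasurableSpace B] [MeasurableSingletonClass B]
    {Y : Ω → B} (hY : Measurable Y) (s : Finset B) :
    μ.real (Y ⁻¹' s) = ∑ b ∈ s, μ.real (Y ⁻¹' {b}) := 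
  (sum_measureReal_preimage_singleton s fun b _ => hY (measurableSet_singleton b)).symm

lemma sum_measureReal_fiber {B : Type*} [MeasurableSpace B] [MeasurableSingletonClass B]
    [Fintype B] {Y : Ω → B} (hY : Measurable Y) : ∑ b, μ.real (Y ⁻¹' {b}) = 1 := by
  rw [← measureReal_preimage_finset μ hY]
  simp

/-- The entropy of a partition is at most that of any finite partition refining it. Here `X` may
take values in an infinite type, such as words over `ℕ`; only finitely many terms of the sum
defining `partH` are nonzero. -/
lemma partH_le_of_factorsThrough {A B : Type*} [Countable A] [Fintype B] [MeasurableSpace B]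
    [MeasurableSingletonClass B] {X : Ω → A} {Y : Ω → B} (hY : Measurable Y)
    (h : X.FactorsThrough Y) :
    partH μ X ≤ ∑ b, Real.negMulLog (μ.real (Y ⁻¹' {b})) := by
  classical
  obtain ⟨ω⟩ : Nonempty Ω := nonempty_of_isProbabilityMeasure μ
  have : Nonempty A := ⟨X ω⟩
  obtain ⟨f, rfl⟩ := (Function.factorsThrough_iff X).1 h
  have hfib : ∀ a, μ.real (f ∘ Y ⁻¹' {a}) =
      ∑ b ∈ Finset.univ.filter (fun b => f b = a), μ.real (Y ⁻¹' {b}) := by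
    intro a
    rw [← measureReal_preimage_finset μ hY]
    congr 1
    ext; simp
  rw [partH, tsum_eq_sum (s := Finset.univ.image f)]
  · rw [← Finset.sum_fiberwise_of_maps_to (s := Finset.univ) (t := Finset.univ.image f) (g := f)
      (fun b hb => Finset.mem_image_of_mem f hb)]
    refine Finset.sum_le_sum fun a _ => ?_
    change Real.negMulLog (μ.real (f ∘ Y ⁻¹' {a})) ≤ _
    rw [hfib]
    exact negMulLog_sum_le _ _ fun _ => measureReal_nonneg
  · intro a ha
    change Real.negMulLog (μ.real (f ∘ Y ⁻¹' {a})) = 0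
    rw [hfib, Finset.filter_eq_empty_iff.2]
    · simp
    · rintro b - rfl
      exact ha (Finset.mem_image_of_mem f (Finset.mem_univ b))

/-- Subadditivity of entropy for the joint distribution of `w` and all the `E i`, with the entropy
of `w` already bounded by `log |W|`. This is Gibbs' inequality against the product of the uniform
distribution on `W` and the marginals of the `E i`. -/
lemma sum_negMulLog_joint_le {W ι B : Type*} [Fintype W] [Nonempty W] [MeasurableSpace W]
    [MeasurableSingletonClass W] [Fintype ι] [DecidableEq ι] [Fintype B] [MeasurableSpace B]
    [MeasurableSingletonClass B] {w : Ω → W} (hw : Measurable w) {E : ι → Ω → B}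
    (hE : ∀ i, Measurable (E i)) :
    ∑ b : W × (ι → B), Real.negMulLog (μ.real ((fun x => (w x, fun i => E i x)) ⁻¹' {b})) ≤
      Real.log (Fintype.card W : ℝ) + ∑ i, ∑ b, Real.negMulLog (μ.real (E i ⁻¹' {b})) := by
  classical
  set Y : Ω → W × (ι → B) := fun x => (w x, fun i => E i x) with hYdef
  have hY : Measurable Y := hw.prodMk (measurable_pi_lambda _ hE)
  set c : ℝ := (Fintype.card W : ℝ) with hc
  have hcpos : 0 < c := by
    rw [hc]; exact_mod_cast Fintype.card_pos
  set pE : ι → B → ℝ := fun i b => μ.real (E i ⁻¹' {b}) with hpE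
  set p : W × (ι → B) → ℝ := fun b => μ.real (Y ⁻¹' {b}) with hp
  have hp_le : ∀ b i, p b ≤ pE i (b.2 i) := by
    intro b i
    refine measureReal_mono ?_
    rintro x rfl
    rfl
  have hsump : ∑ b, p b = 1 := sum_measureReal_fiber μ hY
  have hq : ∑ b : W × (ι → B), c⁻¹ * ∏ i, pE i (b.2 i) = 1 := by
    rw [Fintype.sum_prod_type]
    simp only [← Finset.mul_sum]
    rw [← Fintype.prod_sum fun i b => pE i b]
    have : ∀ i, ∑ b, pE i b = 1 := fun i => sum_measureReal_fiber μ (hE i)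
    simp [this, ← hc, hcpos.ne']
  have hz : ∀ b : W × (ι → B), c⁻¹ * ∏ i, pE i (b.2 i) = 0 → p b = 0 := by
    intro b hb
    rcases mul_eq_zero.1 hb with h | h
    · exact absurd h (inv_ne_zero hcpos.ne')
    · obtain ⟨i, -, hi⟩ := Finset.prod_eq_zero_iff.1 h
      exact le_antisymm ((hp_le b i).trans hi.le) measureReal_nonneg
  refine (sum_negMulLog_le p (fun b => c⁻¹ * ∏ i, pE i (b.2 i)) (fun _ => measureReal_nonneg)
    (fun b => mul_nonneg (inv_nonneg.2 hcpos.le)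
      (Finset.prod_nonneg fun i _ => measureReal_nonneg)) hz (by rw [hq, hsump])).trans ?_
  have hterm : ∀ b, p b * Real.log (c⁻¹ * ∏ i, pE i (b.2 i)) =
      -(p b * Real.log c) + ∑ i, p b * Real.log (pE i (b.2 i)) := by
    intro b
    by_cases h0 : c⁻¹ * ∏ i, pE i (b.2 i) = 0
    · simp [hz b h0]
    · have h1 := (mul_ne_zero_iff.1 h0).2
      rw [Real.log_mul (inv_ne_zero hcpos.ne') h1, Real.log_inv,
        Real.log_prod fun i hi => Finset.prod_ne_zero_iff.1 h1 i hi, mul_add, Finset.mul_sum]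
      ring
  have hmarg : ∀ i, ∑ b, p b * Real.log (pE i (b.2 i)) = -∑ b, Real.negMulLog (pE i b) := by
    intro i
    rw [← Finset.sum_fiberwise (s := Finset.univ) (g := fun b : W × (ι → B) => b.2 i),
      ← Finset.sum_neg_distrib]
    refine Finset.sum_congr rfl fun e _ => ?_
    rw [Finset.sum_congr rfl (g := fun b => p b * Real.log (pE i e))
      (fun b hb => by rw [(Finset.mem_filter.1 hb).2]), ← Finset.sum_mul]
    have : ∑ b ∈ Finset.univ.filter (fun b : W × (ι → B) => b.2 i = e), p b = pE i e := by
      rw [hp, ← measureReal_preimage_finset μ hY]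
      simp only [hpE]
      congr 1
      ext x
      simp [hYdef]
    rw [this, Real.negMulLog]
    ring
  simp only [hterm]
  rw [Finset.sum_add_distrib, Finset.sum_neg_distrib, ← Finset.sum_mul, hsump, Finset.sum_comm]
  simp only [hmarg, Finset.sum_neg_distrib]
  linarith
end

/-! ### The weighted metric and the Lyapunov exponent -/

lemma sq_boolVal_sub_le (p q : Bool) : (boolVal p - boolVal q) ^ 2 ≤ 1 := by
  cases p <;> cases q <;> simp [boolVal]

lemma summable_natAbs {a : ℕ → ℝ} (hsum : Summable a) : Summable fun k : ℤ => a k.natAbs := by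
  refine Summable.of_nat_of_neg ?_ ?_ <;> simpa using hsum

lemma seqDist_term_nonneg {a : ℕ → ℝ} (ha : ∀ k, 0 < a k) (j : ℕ) (p q : Bool) :
    0 ≤ a j * (boolVal p - boolVal q) ^ 2 :=
  mul_nonneg (ha _).le (sq_nonneg _)

lemma seqDist_term_le {a : ℕ → ℝ} (ha : ∀ k, 0 < a k) (j : ℕ) (p q : Bool) :
    a j * (boolVal p - boolVal q) ^ 2 ≤ a j :=
  mul_le_of_le_one_right (ha _).le (sq_boolVal_sub_le _ _)

lemma summable_seqDist {a : ℕ → ℝ} (ha : ∀ k, 0 < a k) (hsum : Summable a) (x y : ℤ → Bool) :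
    Summable fun k : ℤ => a k.natAbs * (boolVal (x k) - boolVal (y k)) ^ 2 :=
  Summable.of_nonneg_of_le (fun _ => seqDist_term_nonneg ha _ _ _)
    (fun _ => seqDist_term_le ha _ _ _) (summable_natAbs hsum)

lemma continuous_seqDist {a : ℕ → ℝ} (ha : ∀ k, 0 < a k) (hsum : Summable a) (x : ℤ → Bool) :
    Continuous (seqDist a x) := by
  refine Real.continuous_sqrt.comp (continuous_tsum (fun k => ?_) (summable_natAbs hsum) ?_)
  · have : Continuous boolVal := continuous_of_discreteTopology
    fun_prop
  · intro k y
    rw [Real.norm_of_nonneg (seqDist_term_nonneg ha _ _ _)]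
    exact seqDist_term_le ha _ _ _

/-- Points that differ in coordinate `k` are at distance at least `√a_{|k|}`. -/
lemma sqrt_le_seqDist {a : ℕ → ℝ} (ha : ∀ k, 0 < a k) (hsum : Summable a) {x y : ℤ → Bool}
    {k : ℤ} (h : x k ≠ y k) : √(a k.natAbs) ≤ seqDist a x y := by
  refine Real.sqrt_le_sqrt ?_
  have h1 : (boolVal (x k) - boolVal (y k)) ^ 2 = 1 := by
    revert h
    cases x k <;> cases y k <;> simp [boolVal]
  have := (summable_seqDist ha hsum x y).le_tsum k fun _ _ => seqDist_term_nonneg ha _ _ _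
  rwa [h1, mul_one] at this

lemma isOpen_iff_seqDist {a : ℕ → ℝ} (ha : ∀ k, 0 < a k) (hanti : StrictAnti a)
    (hsum : Summable a) (s : Set (ℤ → Bool)) :
    IsOpen s ↔ ∀ x ∈ s, ∃ ε : ℝ, 0 < ε ∧ {y | seqDist a x y < ε} ⊆ s := by
  constructor
  · intro hs x hx
    obtain ⟨I, u, hu, hsub⟩ := isOpen_pi_iff.1 hs x hx
    refine ⟨√(a (I.sup Int.natAbs)), Real.sqrt_pos.2 (ha _), fun y hy => hsub fun i hi => ?_⟩
    by_contra hne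
    have hxy : x i ≠ y i := fun h => hne (h ▸ (hu i hi).2)
    have h1 := sqrt_le_seqDist ha hsum hxy
    have h2 : √(a (I.sup Int.natAbs)) ≤ √(a i.natAbs) :=
      Real.sqrt_le_sqrt (hanti.antitone (Finset.le_sup (f := Int.natAbs) hi))
    have h3 : seqDist a x y < √(a (I.sup Int.natAbs)) := hy
    linarith
  · intro h
    refine isOpen_iff_mem_nhds.2 fun x hx => ?_
    obtain ⟨ε, hε, hsub⟩ := h x hx
    refine mem_of_superset ?_ hsub
    refine (isOpen_lt (continuous_seqDist ha hsum x) continuous_const).mem_nhds ?_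
    simpa [seqDist] using hε

/-- Reindexing the sum defining the distance by `k ↦ k - n` reduces the Lipschitz bound for `Tⁿ`
to a comparison of weights. -/
lemma seqDist_iterate_le {a : ℕ → ℝ} (ha : ∀ k, 0 < a k) (hsum : Summable a) {n : ℕ} {M : ℝ}
    (hM : ∀ k : ℤ, a (k - n).natAbs ≤ M * a k.natAbs) (x y : ℤ → Bool) :
    seqDist a (shiftMap^[n] x) (shiftMap^[n] y) ≤ √M * seqDist a x y := by
  have hM0 : 0 ≤ M := by
    have h1 := hM 0
    have h2 := ha (0 - (n : ℤ)).natAbs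
    exact (pos_of_mul_pos_left (h2.trans_le h1) (ha _).le).le
  rw [seqDist, seqDist, ← Real.sqrt_mul hM0]
  refine Real.sqrt_le_sqrt ?_
  have hs := summable_seqDist ha hsum x y
  have hs' := summable_seqDist ha hsum (shiftMap^[n] x) (shiftMap^[n] y)
  rw [← tsum_mul_left, ← (Equiv.subRight (n : ℤ)).tsum_eq]
  refine Summable.tsum_le_tsum (fun k => ?_) ((Equiv.subRight (n : ℤ)).summable_iff.2 hs')
    (hs.mul_left M)
  simp only [Equiv.subRight_apply, shiftMap_iterate, sub_add_cancel]
  rw [← mul_assoc]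
  exact mul_le_mul_of_nonneg_right (hM k) (sq_nonneg _)

lemma seqLip_le {a : ℕ → ℝ} (ha : ∀ k, 0 < a k) (hsum : Summable a) {n : ℕ} {M : ℝ}
    (hM : ∀ k : ℤ, a (k - n).natAbs ≤ M * a k.natAbs) (x : ℤ → Bool) :
    seqLip a n x ≤ ENNReal.ofReal √M := by
  refine (iInf₂_le 1 one_pos).trans (iSup₂_le fun y _ => ENNReal.ofReal_le_ofReal ?_)
  exact div_le_of_le_mul₀ (Real.sqrt_nonneg _) (Real.sqrt_nonneg _)
    (seqDist_iterate_le ha hsum hM x y)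

lemma logPlus_le {c : ℝ≥0∞} {L : ℝ} (hL : 1 ≤ L) (hc : c ≤ ENNReal.ofReal L) :
    logPlus c ≤ ENNReal.ofReal (Real.log L) := by
  rw [logPlus, if_neg (ne_top_of_le_ne_top ENNReal.ofReal_ne_top hc)]
  refine ENNReal.ofReal_le_ofReal ?_
  have h := ENNReal.toReal_le_of_le_ofReal (by linarith) hc
  rcases (ENNReal.toReal_nonneg (a := c)).eq_or_lt with h0 | h0
  · rw [← h0, Real.log_zero]
    exact Real.log_nonneg hL
  · exact Real.log_le_log h0 h

/-- Partial sums of a sub-exponential sequence are sub-exponential. -/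
lemma tendsto_log_sum_div {b : ℕ → ℝ} (hb : ∀ k, 0 < b k) {C : ℝ} (hC : 0 < C)
    (hbsub : Tendsto (fun k : ℕ => |Real.log (b k)| / (k : ℝ)) atTop (𝓝 0)) :
    Tendsto (fun n : ℕ => Real.log (1 + C * ∑ j ∈ Finset.range (n + 1), b j) / (n : ℝ))
      atTop (𝓝 0) := by
  have hS : ∀ n, 0 ≤ C * ∑ j ∈ Finset.range n, b j := fun n =>
    mul_nonneg hC.le (Finset.sum_nonneg fun j _ => (hb j).le)
  refine Metric.tendsto_atTop.2 fun ε' hε' => ?_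
  obtain ⟨ε, hε, rfl⟩ : ∃ ε, 0 < ε ∧ ε' = 3 * ε := ⟨ε' / 3, by positivity, by ring⟩
  obtain ⟨J, hJ⟩ := Metric.tendsto_atTop.1 hbsub ε hε
  -- `K` absorbs the finitely many `j` at which `b j ≤ exp (ε j)` may fail
  set K := 1 + ∑ j ∈ Finset.range (J + 1), b j with hK
  have hK1 : 1 ≤ K := by
    have : 0 ≤ ∑ j ∈ Finset.range (J + 1), b j := Finset.sum_nonneg fun j _ => (hb j).le
    linarith
  have hbK : ∀ j : ℕ, b j ≤ K * Real.exp (ε * j) := by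
    intro j
    have hexp : 1 ≤ Real.exp (ε * j) := Real.one_le_exp (by positivity)
    rcases le_or_gt j J with hj | hj
    · have : b j ≤ ∑ j ∈ Finset.range (J + 1), b j :=
        Finset.single_le_sum (fun i _ => (hb i).le) (Finset.mem_range.2 (by omega))
      nlinarith
    · have hjpos : (0 : ℝ) < j := by
        exact_mod_cast (by omega : 0 < j)
      have := hJ j hj.le
      rw [Real.dist_eq, sub_zero, abs_of_nonneg (by positivity), div_lt_iff₀ hjpos] at this
      have : b j ≤ Real.exp (ε * j) := by
        rw [← Real.log_le_iff_le_exp (hb j)]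
        exact (le_abs_self _).trans this.le
      nlinarith
  -- the factor `1 + 1 / ε` absorbs `n + 1` into a second `exp (ε n)`
  set K' := (1 + C * K) * (1 + 1 / ε) with hK'
  have hK'pos : 0 < K' := by positivity
  have hbound : ∀ n : ℕ, 1 + C * ∑ j ∈ Finset.range (n + 1), b j ≤ K' * Real.exp (2 * ε * n) := by
    intro n
    have hexp : 1 ≤ Real.exp (ε * n) := Real.one_le_exp (by positivity)
    have h1 : ∑ j ∈ Finset.range (n + 1), b j ≤ (n + 1) * (K * Real.exp (ε * n)) := by
      have := Finset.sum_le_card_nsmul (Finset.range (n + 1)) b (K * Real.exp (ε * n)) ?_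
      · simpa using this
      · intro j hj
        refine (hbK j).trans ?_
        have : (j : ℝ) ≤ n := by exact_mod_cast Nat.lt_succ_iff.1 (Finset.mem_range.1 hj)
        gcongr
    have h2 : (n + 1 : ℝ) ≤ (1 + 1 / ε) * Real.exp (ε * n) := by
      have h3 := Real.add_one_le_exp (ε * n)
      calc (n + 1 : ℝ) ≤ (1 + 1 / ε) * (ε * n + 1) := by
            have : (1 + 1 / ε) * (ε * n + 1) = (n + 1) + (ε * n + 1 / ε) := by
              field_simp; ring
            rw [this]
            have : 0 ≤ ε * n + 1 / ε := by positivity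
            linarith
        _ ≤ _ := by gcongr
    have h4 : Real.exp (2 * ε * n) = Real.exp (ε * n) * Real.exp (ε * n) := by
      rw [← Real.exp_add]; ring_nf
    have hn : (1 : ℝ) ≤ n + 1 := by
      have := Nat.cast_nonneg (α := ℝ) n
      linarith
    calc 1 + C * ∑ j ∈ Finset.range (n + 1), b j
        ≤ (n + 1) * Real.exp (ε * n) + C * ((n + 1) * (K * Real.exp (ε * n))) := by
          gcongr
          nlinarith
      _ = (1 + C * K) * ((n + 1) * Real.exp (ε * n)) := by ring
      _ ≤ (1 + C * K) * (((1 + 1 / ε) * Real.exp (ε * n)) * Real.exp (ε * n)) := by gcongr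
      _ = _ := by rw [h4]; ring
  obtain ⟨N, hN⟩ := Metric.tendsto_atTop.1
    (tendsto_const_div_atTop_nhds_zero_nat (Real.log K')) ε hε
  refine ⟨max N 1, fun n hn => ?_⟩
  have hnpos : (0 : ℝ) < n := by
    exact_mod_cast (le_of_max_le_right hn)
  have h1 := hN n (le_of_max_le_left hn)
  rw [Real.dist_eq, sub_zero] at h1 ⊢
  rw [abs_of_nonneg (div_nonneg (Real.log_nonneg (by linarith [hS (n + 1)])) hnpos.le),
    div_lt_iff₀ hnpos]
  have h2 := Real.log_le_log (by linarith [hS (n + 1)]) (hbound n)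
  rw [Real.log_mul hK'pos.ne' (Real.exp_pos _).ne', Real.log_exp] at h2
  have h3 := (div_lt_iff₀ hnpos).1 ((le_abs_self _).trans_lt h1)
  nlinarith

/-- The pointwise Lipschitz constants of `Tⁿ` are at most `1 + C ∑_{j ≤ n} b_j` everywhere, because
`||k - n| - |k|| ≤ n`. The bound is a constant, so measurability of `𝓛ₙ` plays no role. -/
lemma tendsto_lyapunov {a : ℕ → ℝ} (ha : ∀ k, 0 < a k) (hsum : Summable a)
    {C : ℝ} (hC : 0 < C) {b : ℕ → ℝ} (hb : ∀ k, 0 < b k)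
    (hbsub : Tendsto (fun k : ℕ => |Real.log (b k)| / (k : ℝ)) atTop (𝓝 0))
    (hab : ∀ k l : ℕ, a k / a l ≤ C * b (Nat.dist k l))
    (μ : Measure (ℤ → Bool)) [IsProbabilityMeasure μ] :
    Tendsto (fun n : ℕ => (∫⁻ x, logPlus (seqLip a n x) ∂μ).toReal / (n : ℝ))
      atTop (𝓝 0) := by
  refine squeeze_zero (fun n => by positivity) (fun n => ?_) (tendsto_log_sum_div hb hC hbsub)
  refine div_le_div_of_nonneg_right ?_ (Nat.cast_nonneg n)
  set M := C * ∑ j ∈ Finset.range (n + 1), b j with hMdef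
  have hM0 : 0 ≤ M := mul_nonneg hC.le (Finset.sum_nonneg fun j _ => (hb j).le)
  have hM : ∀ k : ℤ, a (k - n).natAbs ≤ M * a k.natAbs := by
    intro k
    refine (div_le_iff₀ (ha _)).1 ((hab _ _).trans ?_)
    refine mul_le_mul_of_nonneg_left ?_ hC.le
    refine Finset.single_le_sum (f := b) (fun j _ => (hb j).le) (Finset.mem_range.2 ?_)
    rw [Nat.dist]
    omega
  have hsqrt : √M ≤ 1 + M := by
    rw [Real.sqrt_le_left (by linarith)]
    nlinarith
  refine ENNReal.toReal_le_of_le_ofReal (Real.log_nonneg (by linarith)) ?_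
  calc ∫⁻ x, logPlus (seqLip a n x) ∂μ
      ≤ ∫⁻ _, ENNReal.ofReal (Real.log (1 + M)) ∂μ := lintegral_mono fun x =>
        logPlus_le (by linarith)
          ((seqLip_le ha hsum hM x).trans (ENNReal.ofReal_le_ofReal hsqrt))
    _ = _ := by simp

/-! ### Kolmogorov-Sinai entropy -/

lemma bddBelow_partEnt {X : Type*} [MeasurableSpace X] (μ : Measure X) [IsProbabilityMeasure μ]
    (T : X → X) (P : X → ℕ) :
    BddBelow (Set.range fun n : ℕ =>
      partH μ (fun x => fun i : Fin (n + 1) => P (T^[(i : ℕ)] x)) / (n + 1 : ℝ)) := by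
  refine ⟨0, ?_⟩
  rintro _ ⟨n, rfl⟩
  exact div_nonneg (partH_nonneg μ _) (by positivity)

/-- For the partition by the zeroth coordinate, the `n`-fold join consists of `2 ^ n` sets of equal
measure. -/
lemma IsBernoulli.log_two_le_partEnt {μ : Measure (ℤ → Bool)} (hμ : IsBernoulli μ) :
    Real.log 2 ≤ partEnt μ shiftMap fun x => (x 0).toNat := by
  refine le_ciInf fun n => ?_
  rw [le_div_iff₀ (by positivity)]
  refine le_of_eq ?_
  let ι : (Fin (n + 1) → Bool) → (Fin (n + 1) → ℕ) := fun v i => (v i).toNat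
  have hι : Function.Injective ι := fun v w h => by
    ext1 i
    have := congrFun h i
    simp only [ι] at this
    revert this
    cases v i <;> cases w i <;> simp
  set Y : (ℤ → Bool) → (Fin (n + 1) → ℕ) :=
    fun x => fun i : Fin (n + 1) => ((shiftMap^[(i : ℕ)] x) 0).toNat with hY
  have hYι : ∀ x, Y x = ι fun i => x (i : ℕ) := by
    intro x
    funext i
    simp [hY, ι, shiftMap_iterate]
  have hterm : ∀ v, μ (Y ⁻¹' {ι v}) = (1 / 2 : ℝ≥0∞) ^ (n + 1) := by
    intro v
    have h := hμ (Finset.univ.map (Fin.valEmbedding.trans Nat.castEmbedding :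
      Fin (n + 1) ↪ ℤ)) fun k => if h : k.toNat < n + 1 then v ⟨k.toNat, h⟩ else true
    rw [Finset.card_map, Finset.card_univ, Fintype.card_fin] at h
    rw [← h]
    congr 1
    ext x
    simp only [Set.mem_preimage, hYι, Set.mem_singleton_iff, hι.eq_iff, funext_iff]
    simp only [Set.mem_ofPred_eq, Finset.mem_map, Finset.mem_univ, true_and,
      forall_exists_index, forall_apply_eq_imp_iff]
    refine forall_congr' fun i => ?_
    have hi := i.2
    simp [show (i : ℕ) ≤ n by omega]
  -- words with a letter outside `{0, 1}` have an empty fibre and contribute nothing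
  rw [partH, ← hι.tsum_eq]
  · simp only [hterm]
    rw [tsum_fintype]
    simp [Real.negMulLog]
    field_simp
  · intro w hw
    by_contra hne
    apply hw
    have : Y ⁻¹' {w} = ∅ := by
      ext x
      simp only [Set.mem_preimage, Set.mem_singleton_iff, Set.mem_empty_iff_false, iff_false]
      rintro rfl
      exact hne ⟨_, (hYι x).symm⟩
    simp [this]

lemma exists_negMulLog_small {ε : ℝ} (hε : 0 < ε) : ∃ δ : ℝ, 0 < δ ∧
    (∀ t, 0 ≤ t → t ≤ δ → Real.negMulLog t ≤ ε) ∧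
    (∀ t, 1 - δ ≤ t → t ≤ 1 → Real.negMulLog t ≤ ε) := by
  have h0 := Metric.continuousAt_iff.1 (Real.continuous_negMulLog.continuousAt (x := 0)) ε hε
  have h1 := Metric.continuousAt_iff.1 (Real.continuous_negMulLog.continuousAt (x := 1)) ε hε
  obtain ⟨d0, hd0, h0⟩ := h0
  obtain ⟨d1, hd1, h1⟩ := h1
  refine ⟨min d0 d1 / 2, by positivity, fun t ht0 ht => ?_, fun t ht ht1 => ?_⟩
  · have : min d0 d1 ≤ d0 := min_le_left _ _
    have h := h0 (x := t) (by rw [Real.dist_eq, sub_zero, abs_of_nonneg ht0]; linarith)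
    rw [Real.negMulLog_zero, Real.dist_eq, sub_zero] at h
    exact (le_abs_self _).trans h.le
  · have : min d0 d1 ≤ d1 := min_le_right _ _
    have h := h1 (x := t) (by
      rw [Real.dist_eq, abs_of_nonpos (by linarith)]
      have : 0 < min d0 d1 := lt_min hd0 hd1
      linarith)
    rw [Real.negMulLog_one, Real.dist_eq, sub_zero] at h
    exact (le_abs_self _).trans h.le

/-- A finite-valued measurable function agrees, off a small set, with a function of finitely
many coordinates. -/
lemma exists_cylinder_fun_approx (μ : Measure (ℤ → Bool)) [IsProbabilityMeasure μ]
    {P : (ℤ → Bool) → ℕ} (hP : Measurable P) {K : ℕ} (hK : ∀ x, P x < K) {δ : ℝ} (hδ : 0 < δ) :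
    ∃ (N : ℕ) (Q : (ℤ → Bool) → ℕ), Measurable Q ∧
      (∀ x y : ℤ → Bool, (∀ i ∈ Finset.Icc (-N : ℤ) N, x i = y i) → Q x = Q y) ∧
      μ.real {x | P x ≠ Q x} ≤ δ := by
  classical
  have hKpos : 0 < K := (Nat.zero_le _).trans_lt (hK fun _ => true)
  have hKpos' : (0 : ℝ) < K := by exact_mod_cast hKpos
  choose N S hS using fun k : ℕ => exists_cylinder_approx μ (hP (measurableSet_singleton k))
    (div_pos hδ hKpos')
  set A : ℕ → Set (ℤ → Bool) := fun k =>
    cylinder (α := fun _ : ℤ => Bool) (Finset.Icc (-N k : ℤ) (N k)) (S k) with hA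
  have hAm : ∀ k, MeasurableSet (A k) := fun k =>
    MeasurableSet.cylinder _ (Set.toFinite (S k)).measurableSet
  let M := (Finset.range K).sup N
  -- off the union of the `A k ∆ P⁻¹{k}`, a point `x` lies in `A k` for `k = P x` only
  let Q : (ℤ → Bool) → ℕ := fun x => ((Finset.range K).filter fun k => x ∈ A k).sup id
  have hQ : ∀ x y : ℤ → Bool, (∀ i ∈ Finset.Icc (-M : ℤ) M, x i = y i) → Q x = Q y := by
    intro x y hxy
    have : ∀ k ∈ Finset.range K, x ∈ A k ↔ y ∈ A k := by
      intro k hk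
      have hNk : N k ≤ M := Finset.le_sup hk
      have hr : (Finset.Icc (-N k : ℤ) (N k)).restrict (π := fun _ => Bool) x =
          (Finset.Icc (-N k : ℤ) (N k)).restrict y := by
        funext i
        have hi := Finset.mem_Icc.1 i.2
        exact hxy i (Finset.mem_Icc.2 ⟨by omega, by omega⟩)
      simp only [hA, mem_cylinder, hr]
    simp only [Q]
    rw [Finset.filter_congr this]
  refine ⟨M, Q, ?_, hQ, ?_⟩
  · obtain ⟨f, hf⟩ := (Function.factorsThrough_iff
      (f := (Finset.Icc (-M : ℤ) M).restrict (π := fun _ => Bool)) Q).1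
      fun x y hxy => hQ x y fun i hi => congrFun hxy ⟨i, hi⟩
    rw [hf]
    exact (measurable_of_countable f).comp (Finset.measurable_restrict _)
  · have hsub : {x | P x ≠ Q x} ⊆ ⋃ k ∈ Finset.range K, symmDiff (A k) (P ⁻¹' {k}) := by
      intro x hx
      by_contra hcon
      apply hx
      have h : ∀ k ∈ Finset.range K, x ∈ A k ↔ P x = k := by
        intro k hk
        simp only [Set.mem_iUnion, not_exists] at hcon
        have := hcon k hk
        rw [Set.mem_symmDiff] at this
        simp only [Set.mem_preimage, Set.mem_singleton_iff] at this
        tauto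
      have hfil : (Finset.range K).filter (fun k => x ∈ A k) = {P x} := by
        ext k
        simp only [Finset.mem_filter, Finset.mem_singleton]
        constructor
        · rintro ⟨hk, hx⟩
          exact ((h k hk).1 hx).symm
        · rintro rfl
          have := Finset.mem_range.2 (hK x)
          exact ⟨this, (h _ this).2 rfl⟩
      simp [Q, hfil]
    calc μ.real {x | P x ≠ Q x} ≤ μ.real (⋃ k ∈ Finset.range K, symmDiff (A k) (P ⁻¹' {k})) :=
          measureReal_mono hsub (measure_ne_top _ _)
      _ ≤ ∑ k ∈ Finset.range K, μ.real (symmDiff (A k) (P ⁻¹' {k})) :=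
          measureReal_biUnion_finset_le _ _
      _ ≤ ∑ _k ∈ Finset.range K, δ / K := Finset.sum_le_sum fun k _ => (hS k).le
      _ = δ := by
        rw [Finset.sum_const, Finset.card_range, nsmul_eq_mul]
        field_simp

/-- Every finite partition `P` has entropy at most `log 2`. The word `(P (Tⁱ x))_{i ≤ n}` is
determined by the coordinates in `[-N, N + n]`, which carry entropy at most `(2N + n + 1) log 2`,
together with the error symbols along the orbit, each of which has entropy at most `ε`. -/
lemma partEnt_le_log_two {μ : Measure (ℤ → Bool)} [IsProbabilityMeasure μ]
    (hμ : MeasurePreserving shiftMap μ μ)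
    {P : (ℤ → Bool) → ℕ} (hP : Measurable P) (hfin : (Set.range P).Finite) :
    partEnt μ shiftMap P ≤ Real.log 2 := by
  obtain ⟨K, hK⟩ : ∃ K, ∀ x, P x < K := by
    obtain ⟨K, hK⟩ := hfin.bddAbove
    exact ⟨K + 1, fun x => Nat.lt_succ_of_le (hK ⟨x, rfl⟩)⟩
  refine le_of_forall_pos_le_add fun ε hε => ?_
  obtain ⟨δ, hδ, hδ0, hδ1⟩ := exists_negMulLog_small (ε := ε / (K + 1)) (by positivity)
  obtain ⟨N, Q, hQm, hQ, hPQ⟩ := exists_cylinder_fun_approx μ hP hK hδ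
  -- the error symbol: `0` where `P` and `Q` agree, and otherwise the value of `P`, shifted by one
  let E : (ℤ → Bool) → Fin (K + 1) := fun x => if P x = Q x then 0 else (⟨P x, hK x⟩ : Fin K).succ
  have hset : MeasurableSet {x | P x = Q x} := measurableSet_eq_fun hP hQm
  have hE : Measurable E := by
    refine Measurable.ite hset measurable_const ?_
    have : (fun x => (⟨P x, hK x⟩ : Fin K).succ) =
        (fun k : ℕ => if h : k < K then (⟨k, h⟩ : Fin K).succ else 0) ∘ P := by
      funext x
      simp [hK x]
    rw [this]
    exact (measurable_of_countable _).comp hP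
  have hHE : ∑ e, Real.negMulLog (μ.real (E ⁻¹' {e})) ≤ ε := by
    have : ∀ e, Real.negMulLog (μ.real (E ⁻¹' {e})) ≤ ε / (K + 1) := by
      intro e
      rcases eq_or_ne e 0 with rfl | he
      · refine hδ1 _ ?_ measureReal_le_one
        have h1 : {x | P x = Q x} ⊆ E ⁻¹' {0} := fun x hx => if_pos hx
        have h2 : μ.real {x | P x = Q x}ᶜ = 1 - μ.real {x | P x = Q x} :=
          probReal_compl_eq_one_sub hset
        have h3 : μ.real {x | P x = Q x}ᶜ ≤ δ := hPQ
        have h4 := measureReal_mono (μ := μ) h1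
        linarith
      · refine hδ0 _ measureReal_nonneg (le_trans (measureReal_mono ?_) hPQ)
        intro x hx hPx
        exact he (by rw [← (show E x = e from hx)]; exact if_pos hPx)
    calc _ ≤ ∑ _e : Fin (K + 1), ε / (K + 1) := Finset.sum_le_sum fun e _ => this e
      _ = ε := by
        rw [Finset.sum_const, Finset.card_univ, Fintype.card_fin, nsmul_eq_mul]
        push_cast
        field_simp
  have hbound : ∀ n : ℕ, partEnt μ shiftMap P ≤
      (2 * N * Real.log 2) / ((n : ℝ) + 1) + (Real.log 2 + ε) := by
    intro n
    refine (ciInf_le (bddBelow_partEnt μ shiftMap P) n).trans ?_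
    rw [div_le_iff₀ (by positivity), add_mul, div_mul_cancel₀ _ (by positivity)]
    let I := Finset.Icc (-N : ℤ) (N + n)
    have hEi : ∀ i : Fin (n + 1), Measurable (E ∘ shiftMap^[(i : ℕ)]) := fun i =>
      hE.comp (measurable_shiftMap.iterate i)
    have hfac : Function.FactorsThrough
        (fun (x : ℤ → Bool) (i : Fin (n + 1)) => P (shiftMap^[(i : ℕ)] x))
        (fun x => (I.restrict (π := fun _ => Bool) x,
          fun i : Fin (n + 1) => (E ∘ shiftMap^[(i : ℕ)]) x)) := by
      intro x y hxy
      obtain ⟨h1, h2⟩ := Prod.mk.inj hxy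
      funext i
      have hQi : Q (shiftMap^[(i : ℕ)] x) = Q (shiftMap^[(i : ℕ)] y) := by
        refine hQ _ _ fun k hk => ?_
        rw [shiftMap_iterate, shiftMap_iterate]
        have hi := i.2
        rw [Finset.mem_Icc] at hk
        exact congrFun h1 ⟨k + (i : ℕ), Finset.mem_Icc.2 ⟨by omega, by omega⟩⟩
      have hEi := congrFun h2 i
      simp only [Function.comp_apply, E] at hEi
      split_ifs at hEi with h3 h4 h4
      · change P _ = P _
        rw [h3, h4, hQi]
      · exact absurd hEi.symm (Fin.succ_ne_zero _)
      · exact absurd hEi (Fin.succ_ne_zero _)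
      · exact congrArg Fin.val (Fin.succ_injective _ hEi)
    have hcard : Real.log (Fintype.card (I → Bool) : ℝ) = (2 * N + n + 1) * Real.log 2 := by
      have hI : I.card = 2 * N + n + 1 := by
        simp only [I, Int.card_Icc]
        omega
      rw [Fintype.card_fun, Fintype.card_bool, Fintype.card_coe, hI]
      push_cast
      rw [Real.log_pow]
      push_cast
      ring
    have hinv : ∀ (i : Fin (n + 1)) (e : Fin (K + 1)),
        μ.real ((E ∘ shiftMap^[(i : ℕ)]) ⁻¹' {e}) = μ.real (E ⁻¹' {e}) := fun i e =>
      (hμ.iterate i).measureReal_preimage (hE (measurableSet_singleton e)).nullMeasurableSet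
    have h := (partH_le_of_factorsThrough μ ((Finset.measurable_restrict I).prodMk
      (measurable_pi_lambda _ hEi)) hfac).trans
      (sum_negMulLog_joint_le μ (Finset.measurable_restrict I) hEi)
    rw [hcard] at h
    simp only [hinv, Finset.sum_const, Finset.card_univ, Fintype.card_fin, nsmul_eq_mul] at h
    push_cast at h
    refine h.trans ?_
    have := mul_le_mul_of_nonneg_left hHE (by positivity : (0 : ℝ) ≤ n + 1)
    linarith
  have hlim : Tendsto (fun n : ℕ => (2 * N * Real.log 2) / ((n : ℝ) + 1) + (Real.log 2 + ε))
      atTop (𝓝 (0 + (Real.log 2 + ε))) := by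
    refine Tendsto.add_const _ (tendsto_const_nhds.div_atTop ?_)
    exact tendsto_natCast_atTop_atTop.atTop_add tendsto_const_nhds
  rw [zero_add] at hlim
  exact ge_of_tendsto' hlim hbound

lemma IsBernoulli.ksEntropy_eq {μ : Measure (ℤ → Bool)} [IsProbabilityMeasure μ]
    (hμ : IsBernoulli μ) : ksEntropy μ shiftMap = ENNReal.ofReal (Real.log 2) := by
  refine le_antisymm (iSup_le fun P => ENNReal.ofReal_le_ofReal
    (partEnt_le_log_two hμ.measurePreserving P.2.1 P.2.2)) ?_
  have hm : Measurable fun x : ℤ → Bool => (x 0).toNat :=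
    (measurable_of_countable Bool.toNat).comp (measurable_pi_apply 0)
  have hf : (Set.range fun x : ℤ → Bool => (x 0).toNat).Finite :=
    (Set.finite_range Bool.toNat).subset (by rintro _ ⟨x, rfl⟩; exact ⟨x 0, rfl⟩)
  exact le_iSup_of_le ⟨_, hm, hf⟩ (ENNReal.ofReal_le_ofReal hμ.log_two_le_partEnt)

/-- for a summable sub-exponentially decreasing weight sequence `𝐚`, the
set `X = {0,1}^ℤ` is compact in the `ℍ_𝐚`-norm metric (which induces the product
topology), the left shift `T` preserves the Bernoulli `(1/2,1/2)` measure `μ` and is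
ergodic, `h_μ(T) = log 2 > 0`, while the maximal Lyapunov exponent
`χ_μ(T) = limₙ (1/n)∫ log⁺𝓛ₙ dμ` is `0`. -/
theorem stmt8 (a : ℕ → ℝ) (ha : ∀ k, 0 < a k) (hanti : StrictAnti a)
    (ha0 : Tendsto a atTop (𝓝 0)) (hsum : Summable a)
    (C : ℝ) (hC : 0 < C) (b : ℕ → ℝ) (hb : ∀ k, 0 < b k)
    (hbsub : Tendsto (fun k : ℕ => |Real.log (b k)| / (k : ℝ)) atTop (𝓝 0))
    (hab : ∀ k l : ℕ, a k / a l ≤ C * b (Nat.dist k l))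
    (μ : Measure (ℤ → Bool)) [IsProbabilityMeasure μ]
    -- μ is the Bernoulli (1/2,1/2) measure: cylinders have the product measure
    (hcyl : ∀ (F : Finset ℤ) (v : ℤ → Bool),
      μ {x | ∀ i ∈ F, x i = v i} = (1 / 2 : ℝ≥0∞) ^ F.card) :
    -- the norm metric induces the (compact) product topology on X = {0,1}^ℤ
    (∀ s : Set (ℤ → Bool), IsOpen s ↔
      ∀ x ∈ s, ∃ ε : ℝ, 0 < ε ∧ {y | seqDist a x y < ε} ⊆ s) ∧
    IsCompact (Set.univ : Set (ℤ → Bool)) ∧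
    -- the shift is ergodic for μ
    Ergodic shiftMap μ ∧
    -- h_μ(T) = log 2
    ksEntropy μ shiftMap = ENNReal.ofReal (Real.log 2) ∧
    -- χ_μ(T) = 0
    Tendsto (fun n : ℕ => (∫⁻ x, logPlus (seqLip a n x) ∂μ).toReal / (n : ℝ))
      atTop (𝓝 0) := by
  have hμ : IsBernoulli μ := hcyl
  exact ⟨isOpen_iff_seqDist ha hanti hsum, isCompact_univ, hμ.ergodic, hμ.ksEntropy_eq,
    tendsto_lyapunov ha hsum hC hb hbsub hab μ⟩
end
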